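/- arXiv:2409.08342 — 4 statements merged into one kernel-verified Lean document; each statement's English description precedes it below -/
import Mathlib

section
/- There exist integers k, n ≥ 2 such that C_q(k,n) is not a closed subset of ℝ^{k²n²} (Slofstra's theorem; negative solution to the weak Tsirelson problem). -/
/-!
The obstruction is a trace argument. Suppose five projections on a nonzero finite-dimensional
space satisfy `P₀ + P₁ + P₂ + P₃ + 2 P₄ = t`. Taking traces shows that `t` is rational, because
the trace of a projection is its rank.

This relation can be read off from a correlation. If `p ∈ C_q(5,2)` is synchronous
(`p(0,1|x,x) = p(1,0|x,x) = 0`) and the state `ξ` is written as a matrix `X`, then the operators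
`B^x_1` satisfy `B^x_1 X = X (A^x_1)ᵀ` and act as idempotents on the range of `X`. With
`T = ∑ₓ cₓ B^x_1` and `c = (1,1,1,1,2)`, the numbers `⟨Tξ, ξ⟩` and `⟨T²ξ, ξ⟩` are the continuous
functions `tau p` and `quad p` of `p`. The equality `quad p = tau p ^ 2` therefore forces
`T X = tau p • X`, so `tau p` is rational (`rational_tau`).

Conversely, for all `m ≤ d` with `0 < d` there are such projections on `ℂ^d` with
`t = 2 + 2m/d` (`exists_projections`), and the maximally entangled state turns them into a
correlation with `tau p = t` (`exists_corr`). The construction is dihedral. If `i ↦ i'` is an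
involution of the basis, `R` its permutation matrix, and `a` a `[0,1]`-valued weight with
`a(i') = 1 - a(i)`, then `diag(a) ± diag(√(a(1-a))) R` are projections with sum `2 diag(a)`.
Take `a(i) = (2i+1)/(2d)` with `i' = d-1-i`, together with the conjugates of these two projections
by the reflection `i ↦ m-1-i` modulo `d`. The four projections sum to the diagonal matrix with
entries `2m/d` for `i < m` and `2m/d + 2` for `i ≥ m`, so the diagonal projection onto the
coordinates `i < m`, taken twice, corrects the sum to a scalar.

If `C_q(5,2)` were closed, it would be compact, and so would the set of values of `tau` on its
synchronous points with `quad p = tau p ^ 2`. That set contains all rationals in `(2,4)` but no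
irrational number, so it is not closed.
-/

open Matrix
open scoped Kronecker ComplexOrder

noncomputable section

/-- A POVM of length `n` on the finite-dimensional Hilbert space `ℂ^d` (with operators
given by matrices): a tuple of positive semidefinite matrices summing to the identity. -/
def IsMatPOVM {d n : ℕ} (A : Fin n → Matrix (Fin d) (Fin d) ℂ) : Prop :=
  (∀ i, (A i).PosSemidef) ∧ ∑ i, A i = 1

/-- The set `C_q(k,n)` of quantum correlations, as a subset of `ℝ^{k²n²}`:
correlations `p(a,b|x,y) = ⟨(A^x_a ⊗ B^y_b)ξ, ξ⟩` arising from POVMs `A^x` and `B^y` of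
length `n` on finite-dimensional Hilbert spaces `H_A`, `H_B` (of arbitrary dimensions)
and a unit vector `ξ ∈ H_A ⊗ H_B`; the tensor product of operators is the Kronecker
product of matrices. -/
def QCorr (k n : ℕ) : Set (Fin k → Fin k → Fin n → Fin n → ℝ) :=
  { p | ∃ (dA dB : ℕ)
      (A : Fin k → Fin n → Matrix (Fin dA) (Fin dA) ℂ)
      (B : Fin k → Fin n → Matrix (Fin dB) (Fin dB) ℂ)
      (ξ : Fin dA × Fin dB → ℂ),
      (∀ x, IsMatPOVM (A x)) ∧ (∀ y, IsMatPOVM (B y)) ∧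
      star ξ ⬝ᵥ ξ = 1 ∧
      ∀ x y a b, (p x y a b : ℂ) = star ξ ⬝ᵥ ((A x a ⊗ₖ B y b) *ᵥ ξ) }

/-! ### Quantum correlations are bounded -/

lemma corr_nonneg {k n : ℕ} {p : Fin k → Fin k → Fin n → Fin n → ℝ} (hp : p ∈ QCorr k n)
    (x y : Fin k) (a b : Fin n) : 0 ≤ p x y a b := by
  obtain ⟨dA, dB, A, B, ξ, hA, hB, -, h⟩ := hp
  have := (((hA x).1 a).kronecker ((hB y).1 b)).dotProduct_mulVec_nonneg ξ
  rw [← h] at this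
  exact_mod_cast this

lemma corr_sum {k n : ℕ} {p : Fin k → Fin k → Fin n → Fin n → ℝ} (hp : p ∈ QCorr k n)
    (x y : Fin k) : ∑ a, ∑ b, p x y a b = 1 := by
  obtain ⟨dA, dB, A, B, ξ, hA, hB, hξ, h⟩ := hp
  have key : ∑ a, ∑ b, A x a ⊗ₖ B y b = 1 := by
    calc ∑ a, ∑ b, A x a ⊗ₖ B y b = (∑ a, A x a) ⊗ₖ (∑ b, B y b) := by
          ext i j
          simp [Matrix.sum_apply, Finset.sum_mul_sum]
      _ = 1 := by rw [(hA x).2, (hB y).2, Matrix.one_kronecker_one]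
  have : ((∑ a, ∑ b, p x y a b : ℝ) : ℂ) = 1 := by
    push_cast
    simp_rw [h, ← dotProduct_sum, ← Matrix.sum_mulVec]
    rw [key, Matrix.one_mulVec, hξ]
  exact_mod_cast this

lemma corr_le_one {k n : ℕ} {p : Fin k → Fin k → Fin n → Fin n → ℝ} (hp : p ∈ QCorr k n)
    (x y : Fin k) (a b : Fin n) : p x y a b ≤ 1 := by
  rw [← corr_sum hp x y]
  calc p x y a b ≤ ∑ b, p x y a b :=
        Finset.single_le_sum (fun b _ => corr_nonneg hp x y a b) (Finset.mem_univ b)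
    _ ≤ _ := Finset.single_le_sum (f := fun a => ∑ b, p x y a b)
        (fun a _ => Finset.sum_nonneg fun b _ => corr_nonneg hp x y a b) (Finset.mem_univ a)

lemma isBounded_qCorr (k n : ℕ) : Bornology.IsBounded (QCorr k n) :=
  (Metric.isBounded_Icc (0 : Fin k → Fin k → Fin n → Fin n → ℝ) 1).subset
    fun _ hp => ⟨fun x y a b => corr_nonneg hp x y a b, fun x y a b => corr_le_one hp x y a b⟩

/-! ### The test functionals -/

/-- The coefficients of the linear relation `P₀ + P₁ + P₂ + P₃ + 2 P₄ = t`. -/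
def coef : Fin 5 → ℕ := ![1, 1, 1, 1, 2]

/-- The diagonal functional `∑ₓ cₓ p(1,1|x,x)`. -/
def tau (p : Fin 5 → Fin 5 → Fin 2 → Fin 2 → ℝ) : ℝ := ∑ x, (coef x : ℝ) * p x x 1 1

/-- The quadratic functional `∑ₓ,ᵧ cₓ cᵧ p(1,1|x,y)`. -/
def quad (p : Fin 5 → Fin 5 → Fin 2 → Fin 2 → ℝ) : ℝ :=
  ∑ x, ∑ y, (coef x : ℝ) * (coef y : ℝ) * p x y 1 1

/-- The closed set of synchronous `p` for which `quad p = (tau p) ^ 2`. -/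
def goodSet : Set (Fin 5 → Fin 5 → Fin 2 → Fin 2 → ℝ) :=
  {p | (∀ x, p x x 0 1 = 0) ∧ (∀ x, p x x 1 0 = 0) ∧ quad p = tau p ^ 2}

lemma continuous_tau : Continuous tau := by unfold tau; fun_prop

lemma isClosed_goodSet : IsClosed goodSet := by
  have h1 : IsClosed {p : Fin 5 → Fin 5 → Fin 2 → Fin 2 → ℝ | ∀ x, p x x 0 1 = 0} := by
    simp only [Set.ofPred_forall]
    exact isClosed_iInter fun x => isClosed_eq (by fun_prop) continuous_const
  have h2 : IsClosed {p : Fin 5 → Fin 5 → Fin 2 → Fin 2 → ℝ | ∀ x, p x x 1 0 = 0} := by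
    simp only [Set.ofPred_forall]
    exact isClosed_iInter fun x => isClosed_eq (by fun_prop) continuous_const
  have h3 : IsClosed {p | quad p = tau p ^ 2} :=
    isClosed_eq (by unfold quad; fun_prop) (continuous_tau.pow 2)
  exact h1.inter (h2.inter h3)

/-! ### Rationality -/

/-- The trace obstruction: the trace of an idempotent is its rank, so `t * dim V` is an integer. -/
lemma rational_of_idempotents {V : Type*} [AddCommGroup V] [Module ℂ V] [FiniteDimensional ℂ V]
    [Nontrivial V] (f : Fin 5 → Module.End ℂ V) (hf : ∀ x, IsIdempotentElem (f x)) (t : ℝ)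
    (h : ∑ x, (coef x : ℂ) • f x = (t : ℂ) • 1) : ∃ q : ℚ, t = q := by
  have h2 := congrArg (LinearMap.trace ℂ V) h
  simp only [map_sum, map_smul, LinearMap.trace_one, smul_eq_mul,
    fun x => (LinearMap.IsIdempotentElem.isProj_range (f x) (hf x)).trace] at h2
  have hV : (Module.finrank ℂ V : ℝ) ≠ 0 := by
    exact_mod_cast (Module.finrank_pos (R := ℂ) (M := V)).ne'
  refine ⟨(∑ x, (coef x : ℚ) * Module.finrank ℂ (LinearMap.range (f x))) / Module.finrank ℂ V, ?_⟩
  push_cast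
  rw [eq_div_iff hV]
  exact_mod_cast h2.symm

/-- The trace obstruction applied to the restrictions of the `B x` to the range of `X`: this range
is invariant because `B x * X = X * A x`, and the restrictions are idempotent. -/
lemma rational_of_matrices {m n : ℕ} (X : Matrix (Fin m) (Fin n) ℂ) (hX : X ≠ 0)
    (A : Fin 5 → Matrix (Fin n) (Fin n) ℂ) (B : Fin 5 → Matrix (Fin m) (Fin m) ℂ)
    (hAB : ∀ x, B x * X = X * A x) (hB : ∀ x, B x * (B x * X) = B x * X) (t : ℝ)
    (h : (∑ x, (coef x : ℂ) • B x) * X = (t : ℂ) • X) : ∃ q : ℚ, t = q := by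
  set S := LinearMap.range X.mulVecLin with hS
  have hmem : ∀ x, ∀ v ∈ S, (B x).mulVecLin v ∈ S := by
    rintro x _ ⟨w, rfl⟩
    exact ⟨A x *ᵥ w, by simp [hAB]⟩
  have : Nontrivial S := by
    rw [Submodule.nontrivial_iff_ne_bot, hS, Ne, LinearMap.range_eq_bot]
    intro h0
    apply hX
    rw [← Matrix.toLin'_apply'] at h0
    simpa using h0
  refine rational_of_idempotents (fun x => (B x).mulVecLin.restrict (hmem x)) ?_ t ?_
  · intro x
    ext ⟨_, w, rfl⟩ : 2
    simp [LinearMap.restrict_apply, hB]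
  · ext ⟨_, w, rfl⟩ : 2
    have := congrArg (· *ᵥ w) h
    simp only [← Matrix.mulVec_mulVec, Matrix.sum_mulVec, Matrix.smul_mulVec] at this
    simpa [LinearMap.restrict_apply, LinearMap.sum_apply] using this

lemma povm_zero {d : ℕ} {A : Fin 2 → Matrix (Fin d) (Fin d) ℂ} (hA : IsMatPOVM A) :
    A 0 = 1 - A 1 := by
  rw [← hA.2, Fin.sum_univ_two, add_sub_cancel_right]

lemma rational_tau {p : Fin 5 → Fin 5 → Fin 2 → Fin 2 → ℝ} (hp : p ∈ QCorr 5 2)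
    (hg : p ∈ goodSet) : ∃ q : ℚ, tau p = q := by
  obtain ⟨dA, dB, A, B, ξ, hA, hB, hξ, h⟩ := hp
  obtain ⟨h01, h10, hq⟩ := hg
  -- Write `ξ` as a matrix, so that `(A ⊗ B) ξ` becomes `B X Aᵀ`.
  obtain ⟨X, rfl⟩ := Matrix.vec_bijective.surjective ξ
  have hX1 : (Xᴴ * X).trace = 1 := by rw [← Matrix.star_vec_dotProduct_vec, hξ]
  have hX : X ≠ 0 := by rintro rfl; simp at hX1
  have hval : ∀ x y a b, (p x y a b : ℂ) = (Xᴴ * (B y b * X * (A x a)ᵀ)).trace := by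
    intro x y a b
    rw [h, Matrix.kronecker_mulVec_vec, Matrix.star_vec_dotProduct_vec]
  have hkill : ∀ x a b, p x x a b = 0 → B x b * X * (A x a)ᵀ = 0 := by
    intro x a b h0
    have := (((hA x).1 a).kronecker ((hB x).1 b)).dotProduct_mulVec_zero_iff (vec X)
    rw [← h, h0, Matrix.kronecker_mulVec_vec, Matrix.vec_eq_zero_iff] at this
    exact this.1 (by simp)
  have e1 : ∀ x, B x 1 * X = B x 1 * X * (A x 1)ᵀ := by
    intro x
    have := hkill x 0 1 (h01 x)
    rw [povm_zero (hA x), Matrix.transpose_sub, Matrix.mul_sub, Matrix.transpose_one,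
      Matrix.mul_one, sub_eq_zero] at this
    exact this
  have e2 : ∀ x, X * (A x 1)ᵀ = B x 1 * X * (A x 1)ᵀ := by
    intro x
    have := hkill x 1 0 (h10 x)
    rw [povm_zero (hB x), Matrix.sub_mul, Matrix.sub_mul, Matrix.one_mul, sub_eq_zero] at this
    exact this
  have e3 : ∀ x, B x 1 * X = X * (A x 1)ᵀ := fun x => (e1 x).trans (e2 x).symm
  refine rational_of_matrices X hX (fun x => (A x 1)ᵀ) (fun x => B x 1) e3 ?_ _ ?_
  · intro x
    rw [e3, ← Matrix.mul_assoc]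
    exact (e2 x).symm
  -- `‖T X - t X‖² = quad p - 2 t * tau p + t² = 0` in the Hilbert–Schmidt norm.
  set T := ∑ x, (coef x : ℂ) • B x 1 with hT
  set T' := ∑ x, (coef x : ℂ) • (A x 1)ᵀ with hT'
  have hTX : T * X = X * T' := by
    simp [hT, hT', Matrix.sum_mul, Matrix.mul_sum, e3]
  have hTH : Tᴴ = T := by
    simp [hT, Matrix.conjTranspose_sum, fun x => ((hB x).1 1).isHermitian.eq]
  have htau : (Xᴴ * (T * X)).trace = (tau p : ℂ) := by
    simp [hT, tau, Matrix.sum_mul, Matrix.mul_sum, hval, ← e1, Matrix.trace_sum]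
  have hquad : (Xᴴ * (T * (T * X))).trace = (quad p : ℂ) := by
    rw [hTX, ← Matrix.mul_assoc T]
    simp only [hT, hT', quad, Matrix.sum_mul, Matrix.mul_sum, Matrix.trace_sum]
    push_cast
    refine Finset.sum_congr rfl fun x _ => ?_
    refine Finset.sum_congr rfl fun y _ => ?_
    simp [hval, mul_assoc, Matrix.mul_assoc]
  have hz : ((T * X - (tau p : ℂ) • X)ᴴ * (T * X - (tau p : ℂ) • X)).trace = 0 := by
    have : (T * X - (tau p : ℂ) • X)ᴴ * (T * X - (tau p : ℂ) • X)
        = Xᴴ * (T * (T * X)) - (2 * (tau p : ℂ)) • (Xᴴ * (T * X))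
          + ((tau p : ℂ) ^ 2) • (Xᴴ * X) := by
      rw [Matrix.conjTranspose_sub, Matrix.conjTranspose_mul, hTH, Matrix.conjTranspose_smul]
      simp [Matrix.sub_mul, Matrix.mul_sub, Matrix.mul_assoc]
      module
    rw [this, Matrix.trace_add, Matrix.trace_sub, Matrix.trace_smul, Matrix.trace_smul, hquad,
      htau, hX1, hq]
    push_cast
    simp
    ring
  rw [Matrix.trace_conjTranspose_mul_self_eq_zero_iff, sub_eq_zero] at hz
  exact hz

/-! ### Correlations from projections -/

lemma posSemidef_of_proj {d : ℕ} {P : Matrix (Fin d) (Fin d) ℂ} (h1 : Pᴴ = P) (h2 : P * P = P) :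
    P.PosSemidef := by
  have := Matrix.posSemidef_conjTranspose_mul_self P
  rwa [h1, h2] at this

/-- The maximally entangled state `vec (d^(-1/2) • 1)` turns symmetric projections into a
correlation with `p(1,1|x,y) = tr(P y * P x) / d`. -/
lemma exists_corr {d : ℕ} (hd : 0 < d) (P : Fin 5 → Matrix (Fin d) (Fin d) ℂ)
    (hH : ∀ x, (P x)ᴴ = P x) (hT : ∀ x, (P x)ᵀ = P x) (hP : ∀ x, P x * P x = P x) (t : ℝ)
    (h : ∑ x, (coef x : ℂ) • P x = (t : ℂ) • 1) :
    ∃ p ∈ QCorr 5 2, p ∈ goodSet ∧ tau p = t := by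
  set A : Fin 5 → Fin 2 → Matrix (Fin d) (Fin d) ℂ := fun x => ![1 - P x, P x] with hA
  have hpovm : ∀ x, IsMatPOVM (A x) := by
    refine fun x => ⟨fun i => ?_, by simp [hA]⟩
    fin_cases i
    · refine posSemidef_of_proj (by simp [hA, hH]) ?_
      simp [hA, Matrix.mul_sub, Matrix.sub_mul, hP]
    · exact posSemidef_of_proj (hH x) (hP x)
  set c : ℂ := (((Real.sqrt d)⁻¹ : ℝ) : ℂ) with hc
  have hcc : star c * c = (d : ℂ)⁻¹ := by
    have : (Real.sqrt d)⁻¹ * (Real.sqrt d)⁻¹ = (d : ℝ)⁻¹ := by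
      rw [← mul_inv, Real.mul_self_sqrt (Nat.cast_nonneg d)]
    simp only [hc, Complex.star_def, Complex.conj_ofReal]
    rw [← Complex.ofReal_mul, this]
    push_cast
    rfl
  have hd0 : (d : ℂ) ≠ 0 := by exact_mod_cast hd.ne'
  set ξ : Fin d × Fin d → ℂ := vec (c • (1 : Matrix (Fin d) (Fin d) ℂ)) with hξ
  have hval : ∀ M N : Matrix (Fin d) (Fin d) ℂ, Mᵀ = M →
      star ξ ⬝ᵥ ((M ⊗ₖ N) *ᵥ ξ) = (d : ℂ)⁻¹ * (N * M).trace := by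
    intro M N hM
    rw [hξ, Matrix.kronecker_mulVec_vec, Matrix.star_vec_dotProduct_vec, hM]
    simp [← hcc]
    ring
  have hreal : ∀ x y a b, (((star ξ ⬝ᵥ ((A x a ⊗ₖ A y b) *ᵥ ξ)).re : ℝ) : ℂ)
      = star ξ ⬝ᵥ ((A x a ⊗ₖ A y b) *ᵥ ξ) := by
    intro x y a b
    have := (((hpovm x).1 a).kronecker ((hpovm y).1 b)).dotProduct_mulVec_nonneg ξ
    exact Complex.ext rfl (Complex.le_def.1 this).2
  set p : Fin 5 → Fin 5 → Fin 2 → Fin 2 → ℝ :=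
    fun x y a b => (star ξ ⬝ᵥ ((A x a ⊗ₖ A y b) *ᵥ ξ)).re with hp
  have h11 : ∀ x y, (p x y 1 1 : ℂ) = (d : ℂ)⁻¹ * (P y * P x).trace := fun x y =>
    (hreal x y 1 1).trans (hval _ _ (hT x))
  have htau : tau p = t := by
    have : (tau p : ℂ) = t := by
      calc (tau p : ℂ) = (d : ℂ)⁻¹ * (∑ x, (coef x : ℂ) • P x).trace := by
            simp only [tau]
            push_cast
            simp only [h11, hP, Matrix.trace_sum, Matrix.trace_smul, Finset.mul_sum, smul_eq_mul]
            exact Finset.sum_congr rfl fun x _ => by ring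
        _ = t := by
            rw [h]
            simp
            field_simp
    exact_mod_cast this
  have hquad : quad p = t ^ 2 := by
    have : (quad p : ℂ) = (t : ℂ) ^ 2 := by
      calc (quad p : ℂ)
          = (d : ℂ)⁻¹ * ((∑ y, (coef y : ℂ) • P y) * (∑ x, (coef x : ℂ) • P x)).trace := by
            simp only [quad]
            push_cast
            simp only [h11, Matrix.sum_mul, Matrix.trace_sum, Matrix.trace_smul,
              Finset.mul_sum, smul_eq_mul, Matrix.smul_mul, Matrix.mul_smul]
            rw [Finset.sum_comm]
            refine Finset.sum_congr rfl fun x _ => Finset.sum_congr rfl fun y _ => ?_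
            rw [Matrix.trace_mul_comm (P x) (P y)]
            ring
        _ = (t : ℂ) ^ 2 := by
            rw [h]
            simp
            field_simp
    exact_mod_cast this
  refine ⟨p, ⟨d, d, A, A, ξ, hpovm, hpovm, ?_, fun x y a b => hreal x y a b⟩,
    ⟨fun x => ?_, fun x => ?_, by rw [hquad, htau]⟩, htau⟩
  · have := hval 1 1 (by simp)
    simpa [hd0] using this
  · have h0 : star ξ ⬝ᵥ ((A x 0 ⊗ₖ A x 1) *ᵥ ξ) = 0 := by
      rw [hval _ _ (by simp [hA, hT])]
      simp [hA, Matrix.mul_sub, hP]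
    simp [hp, h0]
  · have h0 : star ξ ⬝ᵥ ((A x 1 ⊗ₖ A x 0) *ᵥ ξ) = 0 := by
      rw [hval _ _ (by simp [hA, hT])]
      simp [hA, Matrix.sub_mul, hP]
    simp [hp, h0]

/-! ### Five projections with a scalar combination -/

/-- The permutation matrix of `Fin.rev`. -/
def revMat (d : ℕ) : Matrix (Fin d) (Fin d) ℂ := Matrix.of fun i j => if j = i.rev then 1 else 0

lemma revMat_mul_self (d : ℕ) : revMat d * revMat d = 1 := by
  ext i j
  rw [Matrix.mul_apply, Finset.sum_eq_single i.rev]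
  · simp [revMat, Matrix.one_apply, eq_comm (a := i)]
  · intro k _ hk
    simp [revMat, hk]
  · simp

lemma revMat_transpose (d : ℕ) : (revMat d)ᵀ = revMat d := by
  ext i j
  have h : i = j.rev ↔ j = i.rev := by
    rw [Fin.ext_iff, Fin.ext_iff, Fin.val_rev, Fin.val_rev]
    omega
  simp [revMat, h]

lemma revMat_mul_diagonal {d : ℕ} (a : Fin d → ℂ) :
    revMat d * diagonal a = diagonal (fun i => a i.rev) * revMat d := by
  ext i j
  simp only [Matrix.mul_diagonal, Matrix.diagonal_mul, revMat, Matrix.of_apply]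
  split_ifs with h <;> simp [h]

/-- The matrix `diag(a) + diag(b) R`, where `R` is the permutation matrix of `Fin.rev`. -/
def revProj {d : ℕ} (a b : Fin d → ℝ) : Matrix (Fin d) (Fin d) ℂ :=
  diagonal (fun i => (a i : ℂ)) + diagonal (fun i => (b i : ℂ)) * revMat d

lemma revProj_transpose {d : ℕ} {a b : Fin d → ℝ} (hb : ∀ i, b i.rev = b i) :
    (revProj a b)ᵀ = revProj a b := by
  simp [revProj, revMat_transpose, revMat_mul_diagonal, hb]

lemma revProj_conjTranspose {d : ℕ} {a b : Fin d → ℝ} (hb : ∀ i, b i.rev = b i) :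
    (revProj a b)ᴴ = revProj a b := by
  have h : (revProj a b)ᴴ = (revProj a b)ᵀ := by
    ext i j
    simp only [revProj, revMat, Matrix.conjTranspose_apply, Matrix.transpose_apply,
      Matrix.add_apply, Matrix.diagonal_mul, Matrix.diagonal_apply, Matrix.of_apply]
    split_ifs <;> simp
  rw [h, revProj_transpose hb]

/-- Under these conditions `revProj a b` is idempotent: if `R` is the permutation matrix of
`Fin.rev` then `R diag(a) = (1 - diag(a)) R`, and `diag(b) R` squares to `diag(a (1 - a))`. -/
lemma revProj_mul_self {d : ℕ} {a b : Fin d → ℝ} (ha : ∀ i, a i.rev = 1 - a i)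
    (hb : ∀ i, b i.rev = b i) (hab : ∀ i, b i * b i = a i * (1 - a i)) :
    revProj a b * revProj a b = revProj a b := by
  unfold revProj
  set D := diagonal (fun i => (a i : ℂ)) with hD
  set E := diagonal (fun i => (b i : ℂ)) with hE
  have h1 : revMat d * D = (1 - D) * revMat d := by
    rw [hD, revMat_mul_diagonal, ← Matrix.diagonal_one, Matrix.diagonal_sub]
    simp [ha]
  have h2 : revMat d * E = E * revMat d := by
    rw [hE, revMat_mul_diagonal]
    simp [hb]
  have h3 : E * E = D - D * D := by
    rw [hE, hD, Matrix.diagonal_mul_diagonal, Matrix.diagonal_mul_diagonal, Matrix.diagonal_sub]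
    congr 1
    ext i
    have := hab i
    rw [mul_sub, mul_one] at this
    exact_mod_cast this
  have h4 : E * D = D * E := by
    rw [hE, hD, Matrix.diagonal_mul_diagonal, Matrix.diagonal_mul_diagonal]
    simp [mul_comm]
  have h5 : E * revMat d * D = E * revMat d - D * (E * revMat d) := by
    rw [Matrix.mul_assoc, h1, Matrix.sub_mul, Matrix.mul_sub, Matrix.one_mul, ← Matrix.mul_assoc,
      h4, Matrix.mul_assoc]
  have h6 : E * revMat d * (E * revMat d) = D - D * D := by
    rw [Matrix.mul_assoc, ← Matrix.mul_assoc (revMat d), h2, Matrix.mul_assoc, revMat_mul_self,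
      Matrix.mul_one, h3]
  rw [Matrix.add_mul, Matrix.mul_add, Matrix.mul_add, h5, h6]
  abel

/-- The weights `(2i+1)/(2d)`, which `Fin.rev` sends to their complements in `1`. -/
def wt (d : ℕ) (i : Fin d) : ℝ := (2 * (i : ℝ) + 1) / (2 * d)

/-- The reflection `i ↦ m - 1 - i` modulo `d`. -/
def reflMod (d m : ℕ) (hm : m ≤ d) (i : Fin d) : Fin d :=
  ⟨if (i : ℕ) < m then m - 1 - i else d + m - 1 - i, by have := i.2; split_ifs <;> omega⟩

lemma wt_rev {d : ℕ} (i : Fin d) : wt d i.rev = 1 - wt d i := by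
  have hi := i.2
  have hd : (d : ℝ) ≠ 0 := by norm_cast; omega
  simp only [wt, Fin.val_rev]
  rw [Nat.cast_sub (by omega)]
  field_simp
  push_cast
  ring

lemma wt_nonneg {d : ℕ} (i : Fin d) : 0 ≤ wt d i := by unfold wt; positivity

lemma reflMod_involutive (d m : ℕ) (hm : m ≤ d) : Function.Involutive (reflMod d m hm) := by
  intro i
  have := i.2
  ext
  simp only [reflMod]
  split_ifs <;> omega

/-- Holds because `i` and its reflection add up to `m - 1` or to `m - 1 + d`. -/
lemma wt_add_wt_reflMod {d m : ℕ} (hm : m ≤ d) (i : Fin d) :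
    wt d i + wt d (reflMod d m hm i) = m / d + if (i : ℕ) < m then 0 else 1 := by
  have hi := i.2
  have hd : (d : ℝ) ≠ 0 := by norm_cast; omega
  simp only [wt, reflMod]
  split_ifs with h
  · rw [Nat.sub_sub, Nat.cast_sub (by omega)]
    field_simp
    push_cast
    ring
  · rw [Nat.sub_sub, Nat.cast_sub (by omega)]
    field_simp
    push_cast
    ring

lemma exists_projections {d m : ℕ} (hm : m ≤ d) :
    ∃ P : Fin 5 → Matrix (Fin d) (Fin d) ℂ, (∀ x, (P x)ᴴ = P x) ∧ (∀ x, (P x)ᵀ = P x) ∧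
      (∀ x, P x * P x = P x) ∧
      ∑ x, (coef x : ℂ) • P x = ((2 + 2 * (m / d) : ℝ) : ℂ) • 1 := by
  set b : Fin d → ℝ := fun i => Real.sqrt (wt d i * (1 - wt d i)) with hb
  have hbr : ∀ i : Fin d, b i.rev = b i := fun i => by
    simp [hb, wt_rev, mul_comm]
  have hbr' : ∀ i : Fin d, (-b) i.rev = (-b) i := fun i => by simp [hbr]
  have hbb : ∀ i, b i * b i = wt d i * (1 - wt d i) := fun i => by
    refine Real.mul_self_sqrt (mul_nonneg (wt_nonneg i) ?_)
    rw [← wt_rev]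
    exact wt_nonneg _
  have hbb' : ∀ i, (-b) i * (-b) i = wt d i * (1 - wt d i) := fun i => by simp [hbb]
  set π : Equiv.Perm (Fin d) := (reflMod_involutive d m hm).toPerm with hπ
  set N : Matrix (Fin d) (Fin d) ℂ :=
    diagonal fun i => if (i : ℕ) < m then 1 else 0 with hN
  refine ⟨![revProj (wt d) b, revProj (wt d) (-b), (revProj (wt d) b).submatrix π π,
    (revProj (wt d) (-b)).submatrix π π, N], ?_, ?_, ?_, ?_⟩
  · intro x
    fin_cases x <;>
      simp [revProj_conjTranspose hbr, revProj_conjTranspose hbr', Matrix.conjTranspose_submatrix]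
    rw [hN, Matrix.diagonal_conjTranspose]
    congr 1
    ext i
    simp only [Pi.star_apply]
    split_ifs <;> simp
  · intro x
    fin_cases x <;>
      simp [revProj_transpose hbr, revProj_transpose hbr', Matrix.transpose_submatrix, hN]
  · intro x
    fin_cases x <;>
      simp [revProj_mul_self wt_rev hbr hbb, revProj_mul_self wt_rev hbr' hbb',
        Matrix.submatrix_mul_equiv, hN]
  · have hsum : revProj (wt d) b + revProj (wt d) (-b) = diagonal fun i => (2 * wt d i : ℂ) := by
      ext i j
      simp only [revProj, Matrix.add_apply, Matrix.diagonal_mul, Matrix.diagonal_apply, Pi.neg_apply]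
      split_ifs <;> push_cast <;> ring
    have hsum' : (revProj (wt d) b).submatrix π π + (revProj (wt d) (-b)).submatrix π π
        = diagonal fun i => (2 * wt d (π i) : ℂ) := by
      calc _ = (revProj (wt d) b + revProj (wt d) (-b)).submatrix π π := rfl
        _ = _ := by
          rw [hsum, Matrix.submatrix_diagonal_equiv]
          rfl
    have : ∀ P₀ P₁ P₂ P₃ P₄ : Matrix (Fin d) (Fin d) ℂ,
        ∑ x, (coef x : ℂ) • ![P₀, P₁, P₂, P₃, P₄] x = (P₀ + P₁) + (P₂ + P₃) + (2 : ℂ) • P₄ := by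
      intros
      simp [Fin.sum_univ_five, coef, add_assoc]
    rw [this, hsum, hsum', hN, ← Matrix.diagonal_smul, Matrix.diagonal_add, Matrix.diagonal_add,
      ← Matrix.diagonal_one, ← Matrix.diagonal_smul]
    congr 1
    ext i
    have h := wt_add_wt_reflMod hm i
    have h' : (wt d i : ℂ) + (wt d (π i) : ℂ) = m / d + if (i : ℕ) < m then 0 else 1 := by
      have := congrArg (fun r : ℝ => (r : ℂ)) h
      push_cast at this
      refine Eq.trans this ?_
      split_ifs <;> simp
    simp only [Pi.smul_apply, smul_eq_mul]
    rw [← mul_add, h']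
    push_cast
    split_ifs <;> ring

/-! ### Non-closure -/

/-- Slofstra's theorem (negative solution to the weak Tsirelson problem): there exist
`k, n ≥ 2` such that `C_q(k,n)` is not a closed subset of `ℝ^{k²n²}`. -/
theorem qCorr_not_closed : ∃ k n : ℕ, 2 ≤ k ∧ 2 ≤ n ∧ ¬ IsClosed (QCorr k n) := by
  refine ⟨5, 2, by norm_num, le_rfl, fun hcl => ?_⟩
  have hK : IsCompact (QCorr 5 2 ∩ goodSet) :=
    (Metric.isCompact_of_isClosed_isBounded hcl (isBounded_qCorr 5 2)).inter_right isClosed_goodSet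
  have himg : IsClosed (tau '' (QCorr 5 2 ∩ goodSet)) := (hK.image continuous_tau).isClosed
  have hrat : Set.Ioo (2 : ℝ) 4 ∩ Set.range ((↑) : ℚ → ℝ) ⊆ tau '' (QCorr 5 2 ∩ goodSet) := by
    rintro _ ⟨⟨h2, h4⟩, q, rfl⟩
    have h2' : (2 : ℚ) < q := by exact_mod_cast h2
    have h4' : q < 4 := by exact_mod_cast h4
    obtain ⟨s, hs⟩ : ∃ s : ℚ, s = (q - 2) / 2 := ⟨_, rfl⟩
    have hs0 : 0 < s := by rw [hs]; linarith
    have hs1 : s < 1 := by rw [hs]; linarith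
    have hnum : (s.num.toNat : ℤ) = s.num := Int.toNat_of_nonneg (Rat.num_nonneg.2 hs0.le)
    have hsd : (s : ℝ) = (s.num.toNat : ℝ) / (s.den : ℝ) := by
      have h1 : ((s.num.toNat : ℤ) : ℝ) = (s.num : ℝ) := by rw [hnum]
      rw [Int.cast_natCast] at h1
      rw [h1, ← Rat.cast_def]
    have hle : s.num.toNat ≤ s.den := by
      have h1 : (s.num.toNat : ℝ) / (s.den : ℝ) ≤ 1 := by
        rw [← hsd]
        exact_mod_cast hs1.le
      rw [div_le_one (by exact_mod_cast s.den_pos)] at h1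
      exact_mod_cast h1
    obtain ⟨P, hH, hT, hP, h⟩ := exists_projections hle
    obtain ⟨p, hp, hg, ht⟩ := exists_corr s.den_pos P hH hT hP _ h
    refine ⟨p, ⟨hp, hg⟩, ?_⟩
    rw [ht, ← hsd, hs]
    push_cast
    ring
  have hdense : Set.Ioo (2 : ℝ) 4 ⊆ tau '' (QCorr 5 2 ∩ goodSet) :=
    ((Rat.isDenseEmbedding_coe_real.dense).open_subset_closure_inter isOpen_Ioo).trans
      (himg.closure_subset_iff.2 hrat)
  have hmem : Real.sqrt 2 + 1 ∈ Set.Ioo (2 : ℝ) 4 := by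
    constructor <;> nlinarith [Real.sq_sqrt (show (0 : ℝ) ≤ 2 by norm_num), Real.sqrt_nonneg 2]
  obtain ⟨p, ⟨hp, hg⟩, ht⟩ := hdense hmem
  obtain ⟨q, hq⟩ := rational_tau hp hg
  refine irrational_sqrt_two ⟨q - 1, ?_⟩
  push_cast
  linarith

end
end

section
/- The quantum value is left computably enumerable uniformly in the game: there is a computable function F taking (the code of) a nonlocal game 𝔊 with rational data and a natural number m to a rational number F(𝔊,m), such that for each such game 𝔊 the sequence m ↦ F(𝔊,m) is nondecreasing and sup_m F(𝔊,m) = val*(𝔊). -/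
/-!
The approximations `F(𝔊,m)` come from a search over finite certificates. A certificate
(`Witness`) consists of Gaussian integer matrices `X x a` and `Y y b`, a Gaussian integer vector `ξ`
and a scale `s`. It stands for the positive operators `(X x a)ᴴ * X x a` and `(Y y b)ᴴ * Y y b`,
divided by the rational bounds `opBound` of their sums over the answers, and for the state `ξ / ‖ξ‖`.
Since all operators are given in the form `Xᴴ * X` and all normalisations are by quotients of
integers, the resulting value `witnessValue` is a rational number that can be computed exactly, with
no square roots and no test of positivity. `qvalApprox G m` is the maximum of `0` and the values of
the certificates with code below `m`.

Soundness (`normalizedValue_le_qval`): after the normalisation the operators sum to at most `1`, as a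
Hermitian matrix `E` satisfies `E ≤ (∑ |E i j|) • 1`. Adding the defect to one of the operators gives
a POVM, and since `π` and `D` are nonnegative this can only increase the value.

Completeness (`exists_witnessValue_gt`): a POVM can be written as `A x a = (X x a)ᴴ * X x a`, and
then the bound `opBound` with `s = 1` is exactly `1`, so that the normalised value is the value of the
given correlation. The normalised value is a continuous function of the entries of `X`, `Y`, `ξ` near
such data, and these entries are limits of Gaussian rationals with denominators `s = m + 1`.

Computability is mostly closure of `Computable` under arithmetic. The subtle point is that the
library codes `ℚ` through an enumeration of reduced fractions, so that numerators and denominators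
have to be recovered from the code (`computable_ratCode`); the operations are then obtained from
the decidability of their graphs (`computable_of_graph`).
-/

open Matrix
open scoped Kronecker ComplexOrder

noncomputable section

/-- A nonlocal game with rational data, encoded (by the standard effective encoding of
tuples of naturals, lists of rationals and lists of booleans) as a tuple `(k, n, π, D)`,
where `π : [k]² → ℚ` and `D : [k]² × [n]² → {0,1}` are given by the lists of their values. -/
abbrev RatGame : Type := ℕ × ℕ × List ℚ × List Bool

namespace RatGame

/-- The number of questions. -/
def k (G : RatGame) : ℕ := G.1

/-- The number of answers. -/
def n (G : RatGame) : ℕ := G.2.1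

/-- The list of values of the probability distribution `π`. -/
def probList (G : RatGame) : List ℚ := G.2.2.1

/-- The list of values of the decision predicate `D`. -/
def ruleList (G : RatGame) : List Bool := G.2.2.2

/-- The probability `π(x,y)`. -/
def prob (G : RatGame) (x y : Fin G.k) : ℚ :=
  G.probList.getD ((x : ℕ) * G.k + (y : ℕ)) 0

/-- The decision predicate `D(x,y,a,b)`. -/
def rule (G : RatGame) (x y : Fin G.k) (a b : Fin G.n) : Bool :=
  G.ruleList.getD (((((x : ℕ) * G.k + (y : ℕ)) * G.n + (a : ℕ)) * G.n) + (b : ℕ)) false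

/-- `G` is really a nonlocal game: `k, n ≥ 2`, `π` is a nonnegative function on `[k]²`
summing to `1`, and `D` is a `{0,1}`-valued function on `[k]² × [n]²`. -/
def WellFormed (G : RatGame) : Prop :=
  2 ≤ G.k ∧ 2 ≤ G.n ∧ G.probList.length = G.k * G.k ∧
  (∀ q ∈ G.probList, 0 ≤ q) ∧ G.probList.sum = 1 ∧
  G.ruleList.length = G.k * G.k * G.n * G.n

/-- The expected value `val(𝔊,p)` of the game `𝔊` played using the correlation `p`. -/
noncomputable def val (G : RatGame) (p : Fin G.k → Fin G.k → Fin G.n → Fin G.n → ℝ) : ℝ :=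
  ∑ x, ∑ y, (G.prob x y : ℝ) * ∑ a, ∑ b, if G.rule x y a b then p x y a b else 0

end RatGame

/-- The quantum value `val*(𝔊)`: the supremum of `val(𝔊,p)` over `p ∈ C_q(k,n)`. -/
def RatGame.qval (G : RatGame) : ℝ := sSup (G.val '' QCorr G.k G.n)

/-! ### Computable arithmetic of integers -/

section Computability
open Encodable

variable {α σ M : Type*} [Primcodable α] [Primcodable σ] [Primcodable M]

/-- A function with decidable graph is computable, by unbounded search for the value. This lets
operations be certified by an identity instead of being computed on codes. -/
theorem computable_of_graph {f : α → σ} (R : α → σ → Bool) (hR : Computable₂ R)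
    (h : ∀ a s, R a s = true ↔ s = f a) : Computable f := by
  let g : α → ℕ → Option σ := fun a n =>
    (decode (α := σ) n).bind fun s => bif R a s then some s else none
  have hg : Computable₂ g := by
    refine Computable.option_bind (Computable.decode.comp Computable.snd) ?_
    refine Computable.cond ?_ (Computable.option_some.comp Computable.snd) (Computable.const none)
    exact hR.comp (Computable.fst.comp Computable.fst) Computable.snd
  refine (Partrec.rfindOpt hg).of_eq_tot fun a => ?_
  have hdom : (Nat.rfindOpt (g a)).Dom := by
    rw [Nat.rfindOpt_dom]
    exact ⟨encode (f a), f a, by simp [g, (h a (f a)).2 rfl]⟩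
  obtain ⟨n, hn⟩ := Nat.rfindOpt_spec (Part.get_mem hdom)
  have : (Nat.rfindOpt (g a)).get hdom = f a := by
    simp only [g, Option.mem_def, Option.bind_eq_some_iff] at hn
    obtain ⟨s, -, hs⟩ := hn
    cases hR' : R a s
    · simp [hR'] at hs
    · rw [← (h a s).1 hR']
      simpa [hR'] using hs.symm
  rw [← this]
  exact Part.get_mem hdom

theorem computable_natAdd {f g : α → ℕ} (hf : Computable f) (hg : Computable g) :
    Computable fun a => f a + g a := Primrec.nat_add.to_comp.comp hf hg

theorem computable_natMul {f g : α → ℕ} (hf : Computable f) (hg : Computable g) :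
    Computable fun a => f a * g a := Primrec.nat_mul.to_comp.comp hf hg

theorem computable_decide_eq [DecidableEq σ] {f g : α → σ} (hf : Computable f)
    (hg : Computable g) : Computable fun a => decide (f a = g a) :=
  (Primrec.eq (α := σ)).decide.to_comp.comp hf hg

theorem computable_decide_natLe {f g : α → ℕ} (hf : Computable f)
    (hg : Computable g) : Computable fun a => decide (f a ≤ g a) :=
  Primrec.nat_le.decide.to_comp.comp hf hg

/-- The code of an integer in terms of its positive and negative parts: `0, 1, 2, …` have the codes
`0, 2, 4, …` and `-1, -2, …` have the codes `1, 3, …`. -/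
theorem encode_int (z : ℤ) : encode z = if 0 ≤ z then 2 * z.toNat else 2 * (-z).toNat - 1 := by
  cases z with
  | ofNat n => rfl
  | negSucc n =>
    have : ¬ (0 : ℤ) ≤ Int.negSucc n := by simp
    rw [if_neg this, Int.neg_negSucc]
    change 2 * n + 1 = 2 * (n + 1) - 1
    omega

theorem primrec_toNat : Primrec Int.toNat := by
  refine (Primrec.ite (c := fun z : ℤ => encode z % 2 = 0) ?_
    (Primrec.nat_div.comp Primrec.encode (Primrec.const 2)) (Primrec.const 0)).of_eq fun z => ?_
  · exact Primrec.eq.comp (Primrec.nat_mod.comp Primrec.encode (Primrec.const 2)) (Primrec.const 0)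
  · have := encode_int z
    split_ifs at this ⊢ <;> omega

theorem primrec_neg_toNat : Primrec fun z : ℤ => (-z).toNat := by
  refine (Primrec.ite (c := fun z : ℤ => encode z % 2 = 0) ?_
    (Primrec.const 0) (Primrec.nat_div.comp (Primrec.succ.comp Primrec.encode)
      (Primrec.const 2))).of_eq fun z => ?_
  · exact Primrec.eq.comp (Primrec.nat_mod.comp Primrec.encode (Primrec.const 2)) (Primrec.const 0)
  · have := encode_int z
    simp only [Nat.succ_eq_add_one]
    split_ifs at this ⊢ <;> omega

/-- The difference `f a - g a`, as an integer, is the unique `z` with `z⁺ + g a = z⁻ + f a`. -/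
theorem computable_natSub {f g : α → ℕ} (hf : Computable f) (hg : Computable g) :
    Computable fun a => (f a : ℤ) - (g a : ℤ) := by
  refine computable_of_graph (fun a z => decide (z.toNat + g a = (-z).toNat + f a)) ?_ ?_
  · exact computable_decide_eq
      (computable_natAdd (primrec_toNat.to_comp.comp Computable.snd) (hg.comp Computable.fst))
      (computable_natAdd (primrec_neg_toNat.to_comp.comp Computable.snd) (hf.comp Computable.fst))
  · intro a z
    rw [decide_eq_true_iff]
    omega

section Int
variable {f g : α → ℤ}

theorem computable_toNat (hf : Computable f) : Computable fun a => (f a).toNat :=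
  primrec_toNat.to_comp.comp hf

theorem computable_negToNat (hf : Computable f) : Computable fun a => (-f a).toNat :=
  primrec_neg_toNat.to_comp.comp hf

theorem computable_natAbs (hf : Computable f) : Computable fun a => (f a).natAbs :=
  (computable_natAdd (computable_toNat hf) (computable_negToNat hf)).of_eq fun a => by omega

theorem computable_intNeg (hf : Computable f) : Computable fun a => -f a :=
  (computable_natSub (computable_negToNat hf) (computable_toNat hf)).of_eq fun a => by omega

theorem computable_intAdd (hf : Computable f) (hg : Computable g) :
    Computable fun a => f a + g a :=
  (computable_natSub (computable_natAdd (computable_toNat hf) (computable_toNat hg))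
    (computable_natAdd (computable_negToNat hf) (computable_negToNat hg))).of_eq
    fun a => by push_cast; omega

theorem computable_intMul (hf : Computable f) (hg : Computable g) :
    Computable fun a => f a * g a := by
  refine (computable_natSub
    (computable_natAdd (computable_natMul (computable_toNat hf) (computable_toNat hg))
      (computable_natMul (computable_negToNat hf) (computable_negToNat hg)))
    (computable_natAdd (computable_natMul (computable_toNat hf) (computable_negToNat hg))
      (computable_natMul (computable_negToNat hf) (computable_toNat hg)))).of_eq fun a => ?_
  have h1 := Int.toNat_sub_toNat_neg (f a)
  have h2 := Int.toNat_sub_toNat_neg (g a)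
  push_cast
  conv_rhs => rw [← h1, ← h2]
  ring

theorem computable_decide_intLe (hf : Computable f) (hg : Computable g) :
    Computable fun a => decide (f a ≤ g a) :=
  (computable_decide_natLe (computable_natAdd (computable_toNat hf) (computable_negToNat hg))
    (computable_natAdd (computable_toNat hg) (computable_negToNat hf))).of_eq
    fun a => by congr 1; apply propext; omega

end Int

/-! ### Computable arithmetic of rationals -/

/-- The code of a rational `q` as the pair of its numerator and denominator. This differs from the
code used by the `Primcodable ℚ` instance, which is the position of `ratCode q` in the increasing
enumeration of the range of `ratCode`. -/
def ratCode (q : ℚ) : ℕ := Nat.pair (encode q.num) q.den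

theorem ratCode_eq (q : ℚ) : ratCode q = @encode ℚ Rat.instEncodable q := rfl

/-- Coprimality as a bounded quantification, which makes it primitive recursive. -/
theorem coprime_iff_forall_lt {a d : ℕ} (hd : 0 < d) :
    a.Coprime d ↔ ∀ x < d + 1, ¬ (a % x = 0 ∧ d % x = 0 ∧ x ≠ 1) := by
  constructor
  · rintro h x - ⟨h1, h2, h3⟩
    exact h3 (Nat.eq_one_of_dvd_coprimes h (Nat.dvd_of_mod_eq_zero h1) (Nat.dvd_of_mod_eq_zero h2))
  · intro h
    by_contra hc
    refine h (a.gcd d) (Nat.lt_succ_of_le (Nat.le_of_dvd hd (Nat.gcd_dvd_right a d))) ⟨?_, ?_, hc⟩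
    · exact Nat.mod_eq_zero_of_dvd (Nat.gcd_dvd_left a d)
    · exact Nat.mod_eq_zero_of_dvd (Nat.gcd_dvd_right a d)

theorem mem_range_ratCode (m : ℕ) : m ∈ Set.range (@encode ℚ Rat.instEncodable) ↔
    0 < m.unpair.2 ∧ (Denumerable.ofNat ℤ m.unpair.1).natAbs.Coprime m.unpair.2 := by
  constructor
  · rintro ⟨q, rfl⟩
    rw [← ratCode_eq, ratCode, Nat.unpair_pair]
    simp only [Denumerable.ofNat_encode]
    exact ⟨q.den_pos, q.reduced⟩
  · rintro ⟨h1, h2⟩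
    refine ⟨⟨Denumerable.ofNat ℤ m.unpair.1, m.unpair.2, h1.ne', h2⟩, ?_⟩
    rw [← ratCode_eq, ratCode, Denumerable.encode_ofNat, Nat.pair_unpair]

theorem primrecPred_range_ratCode :
    PrimrecPred fun m : ℕ => m ∈ Set.range (@encode ℚ Rat.instEncodable) := by
  have hR : PrimrecRel fun x p : ℕ =>
      ¬ (p.unpair.1 % x = 0 ∧ p.unpair.2 % x = 0 ∧ x ≠ 1) := by
    have h2 : Primrec fun p : ℕ × ℕ => p.2.unpair := Primrec.unpair.comp Primrec.snd
    refine PrimrecPred.not (PrimrecPred.and ?_ (PrimrecPred.and ?_ (PrimrecPred.not ?_)))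
    · exact Primrec.eq.comp (Primrec.nat_mod.comp (Primrec.fst.comp h2) Primrec.fst)
        (Primrec.const 0)
    · exact Primrec.eq.comp (Primrec.nat_mod.comp (Primrec.snd.comp h2) Primrec.fst)
        (Primrec.const 0)
    · exact Primrec.eq.comp Primrec.fst (Primrec.const 1)
  have hden : Primrec fun m : ℕ => m.unpair.2 := Primrec.snd.comp Primrec.unpair
  have hnum : Primrec fun m : ℕ => (Denumerable.ofNat ℤ m.unpair.1).natAbs := by
    have h : Primrec fun z : ℤ => z.natAbs :=
      (Primrec.nat_add.comp primrec_toNat primrec_neg_toNat).of_eq fun z => by omega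
    exact h.comp ((Primrec.ofNat ℤ).comp (Primrec.fst.comp Primrec.unpair))
  refine ((Primrec.nat_lt.comp (Primrec.const 0) hden).and
    (hR.forall_lt.comp (Primrec.succ.comp hden) (Primrec₂.natPair.comp hnum hden))).of_eq
      fun m => ?_
  rw [mem_range_ratCode]
  simp only [Nat.unpair_pair]
  exact and_congr_right fun h => (coprime_iff_forall_lt h).symm

/-- The increasing enumeration of a primitive recursive infinite set is computable. -/
theorem computable_subtype_ofNat (s : Set ℕ) [DecidablePred (· ∈ s)] [Infinite s]
    (hs : PrimrecPred (· ∈ s)) : Computable fun e => (Nat.Subtype.ofNat s e : ℕ) := by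
  have hfind : ∀ x : ℕ, ∃ m, x + m + 1 ∈ s := fun x => by
    obtain ⟨y, hy, hxy⟩ := (Set.infinite_coe_iff.1 ‹Infinite s›).exists_gt x
    exact ⟨y - x - 1, by rwa [show x + (y - x - 1) + 1 = y by omega]⟩
  let nx : ℕ → ℕ := fun x => x + Nat.find (hfind x) + 1
  have hnx : Computable nx := by
    have hp : Computable₂ fun x m : ℕ => decide (x + m + 1 ∈ s) :=
      hs.decide.to_comp.comp (Computable.succ.comp
        (computable_natAdd Computable.fst Computable.snd))
    have : Computable fun x => Nat.find (hfind x) := by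
      refine (Partrec.rfind hp.partrec₂).of_eq_tot fun x => ?_
      rw [Nat.mem_rfind]
      refine ⟨?_, fun {m} hm => ?_⟩
      · simpa using Nat.find_spec (hfind x)
      · simpa using Nat.find_min (hfind x) hm
    exact Computable.succ.comp (computable_natAdd Computable.id this)
  refine (Computable.nat_rec (f := fun e : ℕ => e) (g := fun _ => (Nat.Subtype.ofNat s 0 : ℕ))
    (h := fun _ p => nx p.2) Computable.id (Computable.const _)
    (hnx.comp (Computable.snd.comp Computable.snd))).of_eq fun e => ?_
  induction e with
  | zero => rfl
  | succ e ih =>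
    simp only [ih]
    rfl

/-- The numerator and denominator of a rational can be computed from its code: enumerate the range
of `ratCode` up to the given position. -/
theorem computable_ratCode : Computable ratCode := by
  let := @decidableRangeEncode ℚ Rat.instEncodable
  have : Infinite (Set.range (@encode ℚ Rat.instEncodable)) :=
    Infinite.of_injective _ (Equiv.ofInjective _ (@encode_injective ℚ Rat.instEncodable)).injective
  refine ((computable_subtype_ofNat _ primrecPred_range_ratCode).comp Computable.encode).of_eq
    fun q => ?_
  have key : ∀ e, ratCode (Denumerable.ofNat ℚ e)
      = (Nat.Subtype.ofNat (Set.range (@encode ℚ Rat.instEncodable)) e : ℕ) := fun e => by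
    have : Denumerable.ofNat ℚ e = (@equivRangeEncode ℚ Rat.instEncodable).symm
        (Nat.Subtype.ofNat (Set.range (@encode ℚ Rat.instEncodable)) e) := rfl
    rw [this, ratCode_eq]
    exact congrArg Subtype.val ((@equivRangeEncode ℚ Rat.instEncodable).apply_symm_apply _)
  rw [← key]
  exact congrArg ratCode (Denumerable.ofNat_encode q)

theorem computable_num {f : α → ℚ} (hf : Computable f) : Computable fun a => (f a).num :=
  ((Computable.ofNat ℤ).comp (Computable.fst.comp
    (Computable.unpair.comp (computable_ratCode.comp hf)))).of_eq fun a => by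
    rw [ratCode, Nat.unpair_pair, Denumerable.ofNat_encode]

theorem computable_den {f : α → ℚ} (hf : Computable f) : Computable fun a => (f a).den :=
  (Computable.snd.comp (Computable.unpair.comp (computable_ratCode.comp hf))).of_eq
    fun a => by simp [ratCode]

theorem computable_natCastInt {f : α → ℕ} (hf : Computable f) : Computable fun a => (f a : ℤ) :=
  (computable_natSub hf (Computable.const 0)).of_eq fun a => by simp

/-- A quotient of integers is a computable rational, since its graph is decidable by
cross-multiplication. The case `g a = 0` follows the convention `x / 0 = 0`. -/
theorem computable_intDiv {f g : α → ℤ} (hf : Computable f) (hg : Computable g) :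
    Computable fun a => (f a : ℚ) / g a := by
  refine computable_of_graph (fun a q => bif decide (g a = 0) then decide (q.num = 0) else
    decide (q.num * g a = f a * (q.den : ℤ))) ?_ ?_
  · have hg' := hg.comp (Computable.fst (α := α) (β := ℚ))
    have hf' := hf.comp (Computable.fst (α := α) (β := ℚ))
    have hn := computable_num (Computable.snd (α := α) (β := ℚ))
    exact Computable.cond (computable_decide_eq hg' (Computable.const 0))
      (computable_decide_eq hn (Computable.const 0))
      (computable_decide_eq (computable_intMul hn hg') (computable_intMul hf'
        (computable_natCastInt (computable_den Computable.snd))))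
  · intro a q
    by_cases h : g a = 0
    · simp [h]
    · have h' : (g a : ℚ) ≠ 0 := by exact_mod_cast h
      simp only [h, decide_false, cond_false, decide_eq_true_iff]
      rw [eq_div_iff h']
      have hd : (q.den : ℚ) ≠ 0 := by exact_mod_cast q.den_nz
      conv_rhs => rw [← Rat.num_div_den q, div_mul_eq_mul_div, div_eq_iff hd]
      exact_mod_cast Iff.rfl

section Rat
variable {f g : α → ℚ}

theorem computable_ratAdd (hf : Computable f) (hg : Computable g) :
    Computable fun a => f a + g a := by
  refine (computable_intDiv
    (computable_intAdd
      (computable_intMul (computable_num hf) (computable_natCastInt (computable_den hg)))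
      (computable_intMul (computable_num hg) (computable_natCastInt (computable_den hf))))
    (computable_intMul (computable_natCastInt (computable_den hf))
      (computable_natCastInt (computable_den hg)))).of_eq fun a => ?_
  conv_rhs => rw [← Rat.num_div_den (f a), ← Rat.num_div_den (g a)]
  have h1 : ((f a).den : ℚ) ≠ 0 := by exact_mod_cast (f a).den_nz
  have h2 : ((g a).den : ℚ) ≠ 0 := by exact_mod_cast (g a).den_nz
  push_cast
  field_simp

/-- A rational scaled by a quotient of naturals is a computable rational. -/
theorem computable_ratMulDiv {u v : α → ℕ} (hf : Computable f) (hu : Computable u)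
    (hv : Computable v) : Computable fun a => f a * ((u a : ℚ) / v a) := by
  refine (computable_intDiv
    (computable_intMul (computable_num hf) (computable_natCastInt hu))
    (computable_intMul (computable_natCastInt (computable_den hf))
      (computable_natCastInt hv))).of_eq fun a => ?_
  conv_rhs => rw [← Rat.num_div_den (f a)]
  push_cast
  rw [div_mul_div_comm]

theorem computable_ratMax (hf : Computable f) (hg : Computable g) :
    Computable fun a => max (f a) (g a) := by
  refine (Computable.cond (computable_decide_intLe
    (computable_intMul (computable_num hf) (computable_natCastInt (computable_den hg)))
    (computable_intMul (computable_num hg) (computable_natCastInt (computable_den hf))))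
    hg hf).of_eq fun a => ?_
  rw [max_def, Bool.cond_decide]
  congr 1
  exact propext (Rat.le_iff _ _).symm

end Rat

/-- Finite sums in a type with computable addition. -/
theorem computable_sum [AddCommMonoid M] (hM : Computable fun p : M × M => p.1 + p.2)
    {f : α → ℕ → M} {n : α → ℕ} (hf : Computable fun p : α × ℕ => f p.1 p.2)
    (hn : Computable n) : Computable fun a => ∑ i ∈ Finset.range (n a), f a i := by
  refine (Computable.nat_rec (g := fun _ => (0 : M)) (h := fun a p => p.2 + f a p.1) hn
    (Computable.const 0) ?_).of_eq fun a => ?_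
  · exact hM.comp (Computable.pair (Computable.snd.comp Computable.snd)
      (hf.comp (Computable.pair Computable.fst (Computable.fst.comp Computable.snd))))
  · induction n a with
    | zero => rfl
    | succ n ih => rw [Finset.sum_range_succ, ← ih]

/-! ### Gaussian integers -/

/-- A Gaussian integer as the pair of its real and imaginary parts. -/
def gaussEquiv : GaussianInt ≃ ℤ × ℤ :=
  ⟨fun z => (z.re, z.im), fun p => ⟨p.1, p.2⟩, fun _ => rfl, fun _ => rfl⟩

/-- Gaussian integers are coded by the pair of their coordinates. -/
instance instPrimcodableGaussianInt : Primcodable GaussianInt :=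
  Primcodable.ofEquiv (ℤ × ℤ) gaussEquiv

theorem computable_gaussEquiv : Computable gaussEquiv := Primrec.of_equiv.to_comp

theorem computable_gaussEquiv_symm : Computable gaussEquiv.symm := Primrec.of_equiv_symm.to_comp

theorem computable_re {f : α → GaussianInt} (hf : Computable f) : Computable fun a => (f a).re :=
  Computable.fst.comp (computable_gaussEquiv.comp hf)

theorem computable_im {f : α → GaussianInt} (hf : Computable f) : Computable fun a => (f a).im :=
  Computable.snd.comp (computable_gaussEquiv.comp hf)

theorem computable_gaussMk {f g : α → ℤ} (hf : Computable f) (hg : Computable g) :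
    Computable fun a => (⟨f a, g a⟩ : GaussianInt) :=
  (computable_gaussEquiv_symm.comp (hf.pair hg)).of_eq fun _ => rfl

section Gauss
variable {f g : α → GaussianInt}

theorem computable_gaussAdd (hf : Computable f) (hg : Computable g) :
    Computable fun a => f a + g a :=
  computable_gaussMk (computable_intAdd (computable_re hf) (computable_re hg))
    (computable_intAdd (computable_im hf) (computable_im hg))

theorem computable_gaussMul (hf : Computable f) (hg : Computable g) :
    Computable fun a => f a * g a :=
  (computable_gaussMk
    (computable_intAdd (computable_intMul (computable_re hf) (computable_re hg))
      (computable_intNeg (computable_intMul (computable_im hf) (computable_im hg))))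
    (computable_intAdd (computable_intMul (computable_re hf) (computable_im hg))
      (computable_intMul (computable_im hf) (computable_re hg)))).of_eq fun a => by
    ext <;> simp

theorem computable_gaussStar (hf : Computable f) : Computable fun a => star (f a) :=
  computable_gaussMk (computable_re hf) (computable_intNeg (computable_im hf))

end Gauss

end Computability

/-! ### Witnesses for lower bounds and their computability -/

section Witness
open Encodable

/-- A witness for a lower bound on the quantum value: a tuple `(s, dA, dB, LX, LY, Lξ)` of a
scale `s`, two dimensions, and three lists of Gaussian integers listing the entries of unnormalised
operators for the two players and of an unnormalised state. -/
abbrev Witness : Type :=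
  ℕ × ℕ × ℕ × List GaussianInt × List GaussianInt × List GaussianInt

namespace Witness

/-- The scale, shifted by one so that it is never zero. -/
def scale (w : Witness) : ℕ := w.1 + 1

/-- The dimension of the first player's space. -/
def dimA (w : Witness) : ℕ := w.2.1

/-- The dimension of the second player's space. -/
def dimB (w : Witness) : ℕ := w.2.2.1

/-- The entries of the first player's operators. -/
def opsA (w : Witness) : List GaussianInt := w.2.2.2.1

/-- The entries of the second player's operators. -/
def opsB (w : Witness) : List GaussianInt := w.2.2.2.2.1

/-- The entries of the state. -/
def state (w : Witness) : List GaussianInt := w.2.2.2.2.2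

end Witness

/-- The entry with index `(x,a,i,j)` in a list, the index being coded by the pairing function
and entries outside the list being zero. -/
def entry (L : List GaussianInt) (x a i j : ℕ) : GaussianInt :=
  L.getD (Nat.pair (Nat.pair x a) (Nat.pair i j)) 0

/-- The `(i,j)` entry of `∑ a, (X x a)ᴴ * X x a`. -/
def gramEntry (L : List GaussianInt) (n d x i j : ℕ) : GaussianInt :=
  ∑ a ∈ Finset.range n, ∑ l ∈ Finset.range d, star (entry L x a l i) * entry L x a l j

/-- The sum of the absolute values of the coordinates of a Gaussian integer. -/
def taxicab (z : GaussianInt) : ℕ := z.re.natAbs + z.im.natAbs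

/-- The squared modulus of a Gaussian integer. -/
def sqModulus (z : GaussianInt) : ℕ := z.re.natAbs * z.re.natAbs + z.im.natAbs * z.im.natAbs

/-- Upper bound for the largest eigenvalue of `∑ a, (X x a)ᴴ * X x a`: the square of the scale plus
the sum of the sizes of all entries of the difference between this matrix and the scalar matrix
`s ^ 2`. -/
def intBound (L : List GaussianInt) (s n d x : ℕ) : ℕ :=
  s * s + ∑ i ∈ Finset.range d, ∑ j ∈ Finset.range d,
    taxicab (gramEntry L n d x i j + bif decide (i = j) then ⟨-(s * s : ℕ), 0⟩ else 0)

/-- The `(i,j)` entry of the vector `(X x a ⊗ Y y b) ξ`. -/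
def amplitude (w : Witness) (x y a b i j : ℕ) : GaussianInt :=
  ∑ l ∈ Finset.range w.dimA, ∑ m ∈ Finset.range w.dimB,
    entry w.opsA x a i l * entry w.opsB y b j m * entry w.state 0 0 l m

/-- The squared norm of the state of a witness. -/
def stateSq (w : Witness) : ℕ :=
  ∑ i ∈ Finset.range w.dimA, ∑ j ∈ Finset.range w.dimB, sqModulus (entry w.state 0 0 i j)

/-- The total squared norm of the vectors `(X x a ⊗ Y y b) ξ` over the winning answers `(a,b)` to
the questions `(x,y)`. -/
def winWeight (G : RatGame) (w : Witness) (x y : ℕ) : ℕ :=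
  ∑ a ∈ Finset.range G.n, ∑ b ∈ Finset.range G.n,
    bif G.ruleList.getD ((((x * G.k + y) * G.n + a) * G.n) + b) false then
      ∑ i ∈ Finset.range w.dimA, ∑ j ∈ Finset.range w.dimB, sqModulus (amplitude w x y a b i j)
    else 0

/-- The rational lower bound for the quantum value certified by a witness. It is `0` if the state
is zero, by the convention `x / 0 = 0`. -/
def witnessValue (G : RatGame) (w : Witness) : ℚ :=
  ∑ x ∈ Finset.range G.k, ∑ y ∈ Finset.range G.k,
    G.probList.getD (x * G.k + y) 0 * ((winWeight G w x y : ℚ) /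
      (intBound w.opsA w.scale G.n w.dimA x * intBound w.opsB w.scale G.n w.dimB y *
        stateSq w : ℕ))

variable {α : Type*} [Primcodable α]

theorem computable_entry {L : α → List GaussianInt} {x a i j : α → ℕ} (hL : Computable L)
    (hx : Computable x) (ha : Computable a) (hi : Computable i) (hj : Computable j) :
    Computable fun c => entry (L c) (x c) (a c) (i c) (j c) :=
  (Primrec.list_getD (0 : GaussianInt)).to_comp.comp hL
    (Primrec₂.natPair.to_comp.comp (Primrec₂.natPair.to_comp.comp hx ha)
      (Primrec₂.natPair.to_comp.comp hi hj))

theorem computable_gaussSum {f : α → ℕ → GaussianInt} {n : α → ℕ}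
    (hf : Computable fun p : α × ℕ => f p.1 p.2) (hn : Computable n) :
    Computable fun a => ∑ i ∈ Finset.range (n a), f a i :=
  computable_sum (computable_gaussAdd Computable.fst Computable.snd) hf hn

theorem computable_natSum {f : α → ℕ → ℕ} {n : α → ℕ}
    (hf : Computable fun p : α × ℕ => f p.1 p.2) (hn : Computable n) :
    Computable fun a => ∑ i ∈ Finset.range (n a), f a i :=
  computable_sum (computable_natAdd Computable.fst Computable.snd) hf hn

theorem computable_ratSum {f : α → ℕ → ℚ} {n : α → ℕ}
    (hf : Computable fun p : α × ℕ => f p.1 p.2) (hn : Computable n) :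
    Computable fun a => ∑ i ∈ Finset.range (n a), f a i :=
  computable_sum (computable_ratAdd Computable.fst Computable.snd) hf hn

theorem computable_taxicab {z : α → GaussianInt} (hz : Computable z) :
    Computable fun c => taxicab (z c) :=
  computable_natAdd (computable_natAbs (computable_re hz)) (computable_natAbs (computable_im hz))

theorem computable_sqModulus {z : α → GaussianInt} (hz : Computable z) :
    Computable fun c => sqModulus (z c) :=
  have hr := computable_natAbs (computable_re hz)
  have hi := computable_natAbs (computable_im hz)
  computable_natAdd (computable_natMul hr hr) (computable_natMul hi hi)

theorem computable_gramEntry {L : α → List GaussianInt} {n d x i j : α → ℕ} (hL : Computable L)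
    (hn : Computable n) (hd : Computable d) (hx : Computable x) (hi : Computable i)
    (hj : Computable j) :
    Computable fun c => gramEntry (L c) (n c) (d c) (x c) (i c) (j c) := by
  refine computable_gaussSum (computable_gaussSum ?_ (hd.comp .fst)) hn
  have p : Computable fun c : (α × ℕ) × ℕ => c.1.1 := .comp .fst .fst
  have q : Computable fun c : (α × ℕ) × ℕ => c.1.2 := .comp .snd .fst
  exact computable_gaussMul
    (computable_gaussStar (computable_entry (hL.comp p) (hx.comp p) q .snd (hi.comp p)))
    (computable_entry (hL.comp p) (hx.comp p) q .snd (hj.comp p))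

theorem computable_intBound {L : α → List GaussianInt} {s n d x : α → ℕ} (hL : Computable L)
    (hs : Computable s) (hn : Computable n) (hd : Computable d) (hx : Computable x) :
    Computable fun c => intBound (L c) (s c) (n c) (d c) (x c) := by
  refine computable_natAdd (computable_natMul hs hs)
    (computable_natSum (computable_natSum ?_ (hd.comp .fst)) hd)
  have p : Computable fun c : (α × ℕ) × ℕ => c.1.1 := .comp .fst .fst
  have q : Computable fun c : (α × ℕ) × ℕ => c.1.2 := .comp .snd .fst
  refine computable_taxicab (computable_gaussAdd
    (computable_gramEntry (hL.comp p) (hn.comp p) (hd.comp p) (hx.comp p) q .snd)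
    (Computable.cond (computable_decide_eq q .snd) ?_ (Computable.const 0)))
  exact computable_gaussMk
    (computable_intNeg (computable_natCastInt (computable_natMul (hs.comp p) (hs.comp p))))
    (Computable.const 0)

section
variable {w : α → Witness}

theorem computable_scale (hw : Computable w) : Computable fun c => (w c).scale :=
  Computable.succ.comp (Computable.fst.comp hw)

theorem computable_dimA (hw : Computable w) : Computable fun c => (w c).dimA :=
  Computable.fst.comp (Computable.snd.comp hw)

theorem computable_dimB (hw : Computable w) : Computable fun c => (w c).dimB :=
  Computable.fst.comp (Computable.snd.comp (Computable.snd.comp hw))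

theorem computable_opsA (hw : Computable w) : Computable fun c => (w c).opsA :=
  Computable.fst.comp (Computable.snd.comp (Computable.snd.comp (Computable.snd.comp hw)))

theorem computable_opsB (hw : Computable w) : Computable fun c => (w c).opsB :=
  Computable.fst.comp (Computable.snd.comp (Computable.snd.comp (Computable.snd.comp
    (Computable.snd.comp hw))))

theorem computable_state (hw : Computable w) : Computable fun c => (w c).state :=
  Computable.snd.comp (Computable.snd.comp (Computable.snd.comp (Computable.snd.comp
    (Computable.snd.comp hw))))

theorem computable_amplitude {x y a b i j : α → ℕ} (hw : Computable w) (hx : Computable x)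
    (hy : Computable y) (ha : Computable a) (hb : Computable b) (hi : Computable i)
    (hj : Computable j) :
    Computable fun c => amplitude (w c) (x c) (y c) (a c) (b c) (i c) (j c) := by
  refine computable_gaussSum (computable_gaussSum ?_ (computable_dimB (hw.comp .fst)))
    (computable_dimA hw)
  have p : Computable fun c : (α × ℕ) × ℕ => c.1.1 := .comp .fst .fst
  have q : Computable fun c : (α × ℕ) × ℕ => c.1.2 := .comp .snd .fst
  have hw' := hw.comp p
  exact computable_gaussMul (computable_gaussMul
    (computable_entry (computable_opsA hw') (hx.comp p) (ha.comp p) (hi.comp p) q)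
    (computable_entry (computable_opsB hw') (hy.comp p) (hb.comp p) (hj.comp p) .snd))
    (computable_entry (computable_state hw') (Computable.const 0) (Computable.const 0) q .snd)

theorem computable_stateSq (hw : Computable w) : Computable fun c => stateSq (w c) := by
  refine computable_natSum (computable_natSum ?_ (computable_dimB (hw.comp .fst)))
    (computable_dimA hw)
  have p : Computable fun c : (α × ℕ) × ℕ => c.1.1 := .comp .fst .fst
  have q : Computable fun c : (α × ℕ) × ℕ => c.1.2 := .comp .snd .fst
  exact computable_sqModulus
    (computable_entry (computable_state (hw.comp p)) (Computable.const 0) (Computable.const 0)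
      q .snd)

variable {G : α → RatGame}

theorem computable_k (hG : Computable G) : Computable fun c => (G c).k := Computable.fst.comp hG

theorem computable_n (hG : Computable G) : Computable fun c => (G c).n :=
  Computable.fst.comp (Computable.snd.comp hG)

theorem computable_probList (hG : Computable G) : Computable fun c => (G c).probList :=
  Computable.fst.comp (Computable.snd.comp (Computable.snd.comp hG))

theorem computable_ruleList (hG : Computable G) : Computable fun c => (G c).ruleList :=
  Computable.snd.comp (Computable.snd.comp (Computable.snd.comp hG))

theorem computable_winWeight {x y : α → ℕ} (hG : Computable G) (hw : Computable w)
    (hx : Computable x) (hy : Computable y) :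
    Computable fun c => winWeight (G c) (w c) (x c) (y c) := by
  refine computable_natSum (computable_natSum ?_ (computable_n (hG.comp .fst))) (computable_n hG)
  have p : Computable fun c : (α × ℕ) × ℕ => c.1.1 := .comp .fst .fst
  have q : Computable fun c : (α × ℕ) × ℕ => c.1.2 := .comp .snd .fst
  have hk := computable_k (hG.comp p)
  have hn := computable_n (hG.comp p)
  refine Computable.cond ?_ ?_ (Computable.const 0)
  · exact (Primrec.list_getD false).to_comp.comp (computable_ruleList (hG.comp p))
      (computable_natAdd (computable_natMul (computable_natAdd (computable_natMul
        (computable_natAdd (computable_natMul (hx.comp p) hk) (hy.comp p)) hn) q) hn) .snd)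
  · refine computable_natSum (computable_natSum ?_
      (computable_dimB ((hw.comp p).comp .fst))) (computable_dimA (hw.comp p))
    have p' : Computable fun c : (((α × ℕ) × ℕ) × ℕ) × ℕ => c.1.1 := .comp .fst .fst
    have q' : Computable fun c : (((α × ℕ) × ℕ) × ℕ) × ℕ => c.1.2 := .comp .snd .fst
    exact computable_sqModulus (computable_amplitude ((hw.comp p).comp p') ((hx.comp p).comp p')
      ((hy.comp p).comp p') (q.comp p') (Computable.snd.comp p') q' .snd)

theorem computable_witnessValue (hG : Computable G) (hw : Computable w) :
    Computable fun c => witnessValue (G c) (w c) := by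
  refine computable_ratSum (computable_ratSum ?_ (computable_k (hG.comp .fst))) (computable_k hG)
  have p : Computable fun c : (α × ℕ) × ℕ => c.1.1 := .comp .fst .fst
  have q : Computable fun c : (α × ℕ) × ℕ => c.1.2 := .comp .snd .fst
  have hG' := hG.comp p
  have hw' := hw.comp p
  refine computable_ratMulDiv ?_ (computable_winWeight hG' hw' q .snd)
    (computable_natMul (computable_natMul ?_ ?_) (computable_stateSq hw'))
  · exact (Primrec.list_getD (0 : ℚ)).to_comp.comp (computable_probList hG')
      (computable_natAdd (computable_natMul q (computable_k hG')) .snd)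
  · exact computable_intBound (computable_opsA hw') (computable_scale hw') (computable_n hG')
      (computable_dimA hw') q
  · exact computable_intBound (computable_opsB hw') (computable_scale hw') (computable_n hG')
      (computable_dimB hw') .snd

end

/-- The best lower bound among `0` and the values of the witnesses with code below `m`. -/
def qvalApprox (G : RatGame) (m : ℕ) : ℚ :=
  Nat.rec 0 (fun c r => max r (((decode (α := Witness) c).map (witnessValue G)).getD 0)) m

theorem computable_qvalApprox : Computable₂ qvalApprox := by
  refine Computable.nat_rec (f := fun p : RatGame × ℕ => p.2) (g := fun _ => (0 : ℚ))
    (h := fun p r => max r.2 (((decode (α := Witness) r.1).map (witnessValue p.1)).getD 0))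
    .snd (Computable.const 0) ?_
  refine computable_ratMax (Computable.snd.comp .snd) ?_
  refine Computable.option_getD (Computable.option_map
    (Computable.decode.comp (Computable.fst.comp .snd)) ?_) (Computable.const 0)
  exact computable_witnessValue
    (Computable.fst.comp (Computable.fst.comp .fst)) .snd

theorem qvalApprox_mono (G : RatGame) : Monotone (qvalApprox G) :=
  monotone_nat_of_le_succ fun _ => le_max_left _ _

theorem witnessValue_le_qvalApprox (G : RatGame) (w : Witness) :
    witnessValue G w ≤ qvalApprox G (encode w + 1) := by
  refine le_trans (le_of_eq ?_) (le_max_right _ _)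
  simp

end Witness

/-! ### Soundness: normalised operators and the quantum value -/

section Analysis

variable {d dA dB n : ℕ}

/-- The sum `∑ a, (X a)ᴴ * X a`, which is `1` exactly if the operators `(X a)ᴴ * X a` form a
POVM. -/
def opGram (X : Fin n → Matrix (Fin d) (Fin d) ℂ) : Matrix (Fin d) (Fin d) ℂ :=
  ∑ a, (X a)ᴴ * X a

/-- An upper bound for the largest eigenvalue of `opGram X`, which equals `1` if `s = 1` and
`opGram X = 1`. -/
def opBound (X : Fin n → Matrix (Fin d) (Fin d) ℂ) (s : ℝ) : ℝ :=
  s * s + ∑ i, ∑ j, (|((opGram X - ((s * s : ℝ) : ℂ) • 1) i j).re| +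
    |((opGram X - ((s * s : ℝ) : ℂ) • 1) i j).im|)

/-- The value attained in the game by the operators `(X x a)ᴴ * X x a` and `(Y y b)ᴴ * Y y b`
divided by their bounds `opBound`, and the vector `ξ` divided by its norm. -/
def normalizedValue (G : RatGame) (X : Fin G.k → Fin G.n → Matrix (Fin dA) (Fin dA) ℂ)
    (Y : Fin G.k → Fin G.n → Matrix (Fin dB) (Fin dB) ℂ) (ξ : Fin dA × Fin dB → ℂ) (s : ℝ) : ℝ :=
  ∑ x, ∑ y, (G.prob x y : ℝ) *
    ((∑ a, ∑ b, if G.rule x y a b then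
        ∑ p, Complex.normSq (((X x a ⊗ₖ Y y b) *ᵥ ξ) p) else 0) /
      (opBound (X x) s * opBound (Y y) s * ∑ p, Complex.normSq (ξ p)))

/-- The real part of the quadratic form of a matrix. -/
def quadForm {ι : Type*} [Fintype ι] (M : Matrix ι ι ℂ) (v : ι → ℂ) : ℝ := (star v ⬝ᵥ (M *ᵥ v)).re

section QuadForm
variable {ι : Type*} [Fintype ι]

theorem star_dotProduct_self (v : ι → ℂ) : star v ⬝ᵥ v = ((∑ i, Complex.normSq (v i) : ℝ) : ℂ) := by
  simp [dotProduct, Complex.normSq_eq_conj_mul_self]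

theorem quadForm_nonneg {M : Matrix ι ι ℂ} (hM : M.PosSemidef) (v : ι → ℂ) : 0 ≤ quadForm M v :=
  (Complex.nonneg_iff.1 (hM.dotProduct_mulVec_nonneg v)).1

theorem quadForm_ofReal {M : Matrix ι ι ℂ} (hM : M.PosSemidef) (v : ι → ℂ) :
    (quadForm M v : ℂ) = star v ⬝ᵥ (M *ᵥ v) := by
  have h := (Complex.nonneg_iff.1 (hM.dotProduct_mulVec_nonneg v)).2
  apply Complex.ext
  · simp [quadForm]
  · simpa using h

theorem quadForm_sub (M N : Matrix ι ι ℂ) (v : ι → ℂ) :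
    quadForm (M - N) v = quadForm M v - quadForm N v := by
  simp [quadForm, sub_mulVec, dotProduct_sub]

theorem quadForm_mono {M N : Matrix ι ι ℂ} (h : (N - M).PosSemidef) (v : ι → ℂ) :
    quadForm M v ≤ quadForm N v := by
  have := quadForm_nonneg h v
  rw [quadForm_sub] at this
  linarith

theorem quadForm_one [DecidableEq ι] (v : ι → ℂ) :
    quadForm (1 : Matrix ι ι ℂ) v = ∑ i, Complex.normSq (v i) := by
  rw [quadForm, one_mulVec, star_dotProduct_self, Complex.ofReal_re]

theorem quadForm_conjTranspose_mul_self {κ : Type*} [Fintype κ] (M : Matrix κ ι ℂ) (v : ι → ℂ) :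
    quadForm (Mᴴ * M) v = ∑ i, Complex.normSq ((M *ᵥ v) i) := by
  rw [quadForm, ← mulVec_mulVec, dotProduct_mulVec, ← star_mulVec, star_dotProduct_self,
    Complex.ofReal_re]

theorem quadForm_smul (r : ℝ) (M : Matrix ι ι ℂ) (v : ι → ℂ) :
    quadForm ((r : ℂ) • M) v = r * quadForm M v := by
  simp [quadForm, smul_mulVec, dotProduct_smul]

theorem quadForm_smul_vec (r : ℝ) (M : Matrix ι ι ℂ) (v : ι → ℂ) :
    quadForm M ((r : ℂ) • v) = r * r * quadForm M v := by
  simp [quadForm, mulVec_smul, dotProduct_smul, smul_dotProduct, mul_assoc]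

/-- A Hermitian matrix is bounded by the sum of the sizes of its entries. -/
theorem posSemidef_smul_one_sub [DecidableEq ι] {E : Matrix ι ι ℂ} (hE : E.IsHermitian) :
    ((((∑ i, ∑ j, (|(E i j).re| + |(E i j).im|) : ℝ) : ℂ)) • (1 : Matrix ι ι ℂ) - E).PosSemidef := by
  set c : ℝ := ∑ i, ∑ j, (|(E i j).re| + |(E i j).im|) with hc
  have hM : ((c : ℂ) • (1 : Matrix ι ι ℂ) - E).IsHermitian := by
    refine IsHermitian.sub ?_ hE
    simp [IsHermitian, conjTranspose_smul]
  refine .of_dotProduct_mulVec_nonneg hM fun v => ?_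
  rw [Complex.nonneg_iff]
  refine ⟨?_, (hM.im_star_dotProduct_mulVec_self v).symm⟩
  change 0 ≤ quadForm _ _
  rw [quadForm_sub, quadForm_smul, quadForm_one, sub_nonneg]
  have hv : ∀ i, ‖v i‖ ^ 2 ≤ ∑ i, Complex.normSq (v i) := fun i => by
    rw [← Complex.normSq_eq_norm_sq]
    exact Finset.single_le_sum (f := fun i => Complex.normSq (v i))
      (fun j _ => Complex.normSq_nonneg _) (Finset.mem_univ i)
  have : quadForm E v = ∑ i, ∑ j, (star (v i) * (E i j * v j)).re := by
    simp [quadForm, dotProduct, mulVec, Finset.mul_sum]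
  rw [this, hc, Finset.sum_mul]
  refine Finset.sum_le_sum fun i _ => ?_
  rw [Finset.sum_mul]
  refine Finset.sum_le_sum fun j _ => ?_
  calc (star (v i) * (E i j * v j)).re ≤ ‖star (v i) * (E i j * v j)‖ := Complex.re_le_norm _
    _ = ‖E i j‖ * (‖v i‖ * ‖v j‖) := by rw [norm_mul, norm_mul, norm_star]; ring
    _ ≤ (|(E i j).re| + |(E i j).im|) * ∑ i, Complex.normSq (v i) := by
      gcongr
      · exact Complex.norm_le_abs_re_add_abs_im _
      · nlinarith [hv i, hv j, sq_nonneg (‖v i‖ - ‖v j‖)]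

end QuadForm

/-- Kronecker products of positive semidefinite matrices are monotone in both factors, as
`A ⊗ B - A' ⊗ B' = (A - A') ⊗ B + A' ⊗ (B - B')`. -/
theorem quadForm_kronecker_mono {A A' : Matrix (Fin dA) (Fin dA) ℂ}
    {B B' : Matrix (Fin dB) (Fin dB) ℂ} (hA : (A - A').PosSemidef) (hB : (B - B').PosSemidef)
    (hA' : A'.PosSemidef) (hB0 : B.PosSemidef) (v : Fin dA × Fin dB → ℂ) :
    quadForm (A' ⊗ₖ B') v ≤ quadForm (A ⊗ₖ B) v := by
  refine quadForm_mono ?_ v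
  have h := (hA.kronecker hB0).add (hA'.kronecker hB)
  have e : A ⊗ₖ B - A' ⊗ₖ B' = (A - A') ⊗ₖ B + A' ⊗ₖ (B - B') := by
    ext ⟨i, j⟩ ⟨i', j'⟩
    simp only [Matrix.sub_apply, Matrix.add_apply, kroneckerMap_apply]
    ring
  rw [e]
  exact h

/-- Positive operators with sum at most `1` lie below a POVM: add the defect to the first one. -/
theorem exists_povm_ge (hn : 0 < n) {A' : Fin n → Matrix (Fin d) (Fin d) ℂ}
    (hA' : ∀ a, (A' a).PosSemidef) (hS : (1 - ∑ a, A' a).PosSemidef) :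
    ∃ A : Fin n → Matrix (Fin d) (Fin d) ℂ, IsMatPOVM A ∧ ∀ a, (A a - A' a).PosSemidef := by
  have hite : ∀ a : Fin n, (if a = ⟨0, hn⟩ then 1 - ∑ a, A' a else 0 :
      Matrix (Fin d) (Fin d) ℂ).PosSemidef := fun a => by
    split_ifs
    exacts [hS, .zero]
  refine ⟨fun a => A' a + if a = ⟨0, hn⟩ then 1 - ∑ a, A' a else 0,
    ⟨fun a => (hA' a).add (hite a), ?_⟩, fun a => by simpa using hite a⟩
  simp [Finset.sum_add_distrib]

theorem opBound_pos (X : Fin n → Matrix (Fin d) (Fin d) ℂ) {s : ℝ} (hs : 0 < s) :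
    0 < opBound X s := by
  have : 0 ≤ ∑ i, ∑ j, (|((opGram X - ((s * s : ℝ) : ℂ) • 1) i j).re| +
    |((opGram X - ((s * s : ℝ) : ℂ) • 1) i j).im|) := by positivity
  rw [opBound]
  positivity

theorem posSemidef_opGram (X : Fin n → Matrix (Fin d) (Fin d) ℂ) : (opGram X).PosSemidef :=
  posSemidef_sum _ fun a _ => posSemidef_conjTranspose_mul_self (X a)

theorem posSemidef_opBound_sub_opGram (X : Fin n → Matrix (Fin d) (Fin d) ℂ) (s : ℝ) :
    ((opBound X s : ℂ) • (1 : Matrix (Fin d) (Fin d) ℂ) - opGram X).PosSemidef := by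
  have hE : (opGram X - ((s * s : ℝ) : ℂ) • (1 : Matrix (Fin d) (Fin d) ℂ)).IsHermitian := by
    refine (posSemidef_opGram X).isHermitian.sub ?_
    simp [IsHermitian, conjTranspose_smul]
  have := posSemidef_smul_one_sub hE
  convert this using 1
  rw [opBound, Complex.ofReal_add, add_smul]
  abel

/-- The normalised operators `(X a)ᴴ * X a` lie below a POVM. -/
theorem exists_povm_ge_normalized (hn : 0 < n) (X : Fin n → Matrix (Fin d) (Fin d) ℂ) {s : ℝ}
    (hs : 0 < s) : ∃ A : Fin n → Matrix (Fin d) (Fin d) ℂ, IsMatPOVM A ∧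
      ∀ a, (A a - (((opBound X s)⁻¹ : ℝ) : ℂ) • ((X a)ᴴ * X a)).PosSemidef := by
  have hc := opBound_pos X hs
  have hc' : (0 : ℂ) ≤ (((opBound X s)⁻¹ : ℝ) : ℂ) := by
    rw [Complex.zero_le_real]; positivity
  refine exists_povm_ge hn (fun a => (posSemidef_conjTranspose_mul_self (X a)).smul hc') ?_
  have := (posSemidef_opBound_sub_opGram X s).smul hc'
  rw [← Finset.smul_sum]
  rw [smul_sub, smul_smul, ← Complex.ofReal_mul, inv_mul_cancel₀ hc.ne'] at this
  simpa [opGram] using this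

theorem IsMatPOVM.le_one {A : Fin n → Matrix (Fin d) (Fin d) ℂ} (hA : IsMatPOVM A) (a : Fin n) :
    (1 - A a).PosSemidef := by
  rw [← hA.2, ← Finset.add_sum_erase _ _ (Finset.mem_univ a), add_sub_cancel_left]
  exact posSemidef_sum _ fun b _ => hA.1 b

theorem mem_QCorr_bounds {k n : ℕ} {p : Fin k → Fin k → Fin n → Fin n → ℝ} (hp : p ∈ QCorr k n)
    (x y : Fin k) (a b : Fin n) : 0 ≤ p x y a b ∧ p x y a b ≤ 1 := by
  obtain ⟨dA, dB, A, B, ξ, hA, hB, hξ, h⟩ := hp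
  have hq : p x y a b = quadForm (A x a ⊗ₖ B y b) ξ := by
    rw [quadForm, ← h, Complex.ofReal_re]
  have hone : quadForm ((1 : Matrix (Fin dA) (Fin dA) ℂ) ⊗ₖ (1 : Matrix (Fin dB) (Fin dB) ℂ)) ξ
      = 1 := by
    rw [one_kronecker_one, quadForm, one_mulVec, hξ, Complex.one_re]
  rw [hq]
  refine ⟨quadForm_nonneg (((hA x).1 a).kronecker ((hB y).1 b)) ξ, ?_⟩
  exact (quadForm_kronecker_mono ((hA x).le_one a) ((hB y).le_one b) ((hA x).1 a) .one ξ).trans_eq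
    hone

namespace RatGame

variable {G : RatGame}

theorem prob_nonneg (hG : G.WellFormed) (x y : Fin G.k) : (0 : ℝ) ≤ G.prob x y := by
  have h := hG.2.2.2.1
  rw [prob, Rat.cast_nonneg, List.getD_eq_getElem?_getD]
  cases hi : G.probList[(x : ℕ) * G.k + y]? with
  | none => simp
  | some q => exact h q (List.mem_of_getElem? hi)

theorem val_mono (hG : G.WellFormed) {p q : Fin G.k → Fin G.k → Fin G.n → Fin G.n → ℝ}
    (h : ∀ x y a b, p x y a b ≤ q x y a b) : G.val p ≤ G.val q := by
  unfold val
  gcongr with x _ y _ a _ b _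
  · exact prob_nonneg hG x y
  · split_ifs
    exacts [h x y a b, le_rfl]

theorem bddAbove_val (hG : G.WellFormed) : BddAbove (G.val '' QCorr G.k G.n) := by
  refine ⟨G.val fun _ _ _ _ => 1, ?_⟩
  rintro _ ⟨p, hp, rfl⟩
  exact val_mono hG fun x y a b => (mem_QCorr_bounds hp x y a b).2

theorem val_nonneg (hG : G.WellFormed) {p : Fin G.k → Fin G.k → Fin G.n → Fin G.n → ℝ}
    (hp : p ∈ QCorr G.k G.n) : 0 ≤ G.val p := by
  have := val_mono hG (p := 0) fun x y a b => (mem_QCorr_bounds hp x y a b).1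
  simpa [val] using this

theorem qval_nonneg (hG : G.WellFormed) : 0 ≤ G.qval := by
  refine Real.sSup_nonneg ?_
  rintro _ ⟨p, hp, rfl⟩
  exact val_nonneg hG hp

/-- Soundness: the normalised operators can be enlarged to POVMs, which does not decrease the
value since `π` and `D` are nonnegative. -/
theorem normalizedValue_le_qval (hG : G.WellFormed)
    (X : Fin G.k → Fin G.n → Matrix (Fin dA) (Fin dA) ℂ)
    (Y : Fin G.k → Fin G.n → Matrix (Fin dB) (Fin dB) ℂ) (ξ : Fin dA × Fin dB → ℂ) {s : ℝ}
    (hs : 0 < s) : normalizedValue G X Y ξ s ≤ G.qval := by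
  set N : ℝ := ∑ p, Complex.normSq (ξ p) with hN
  have hN0 : 0 ≤ N := Finset.sum_nonneg fun p _ => Complex.normSq_nonneg _
  rcases hN0.eq_or_lt with h0 | hpos
    -- for `ξ = 0` all quotients are divisions by zero, hence `0`
  · have : normalizedValue G X Y ξ s = 0 := by simp [normalizedValue, ← hN, ← h0]
    rw [this]
    exact qval_nonneg hG
  have hn : 0 < G.n := by have := hG.2.1; omega
  choose A hA hAX using fun x => exists_povm_ge_normalized hn (X x) hs
  choose B hB hBY using fun y => exists_povm_ge_normalized hn (Y y) hs
  set η : Fin dA × Fin dB → ℂ := (((√N)⁻¹ : ℝ) : ℂ) • ξ with hη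
  have hr : (√N)⁻¹ * (√N)⁻¹ = N⁻¹ := by
    rw [← mul_inv, Real.mul_self_sqrt hN0]
  have hmem : (fun x y a b => quadForm (A x a ⊗ₖ B y b) η) ∈ QCorr G.k G.n := by
    refine ⟨dA, dB, A, B, η, hA, hB, ?_, fun x y a b =>
      quadForm_ofReal (((hA x).1 a).kronecker ((hB y).1 b)) η⟩
    have h1 : quadForm 1 η = 1 := by
      rw [hη, quadForm_smul_vec, quadForm_one, hr, ← hN, inv_mul_cancel₀ hpos.ne']
    have := quadForm_ofReal (.one : (1 : Matrix (Fin dA × Fin dB) (Fin dA × Fin dB) ℂ).PosSemidef) η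
    rw [h1, one_mulVec] at this
    simpa using this.symm
  refine le_trans ?_ (le_csSup (bddAbove_val hG) ⟨_, hmem, rfl⟩)
  refine le_trans (le_of_eq ?_) (val_mono hG fun x y a b =>
    quadForm_kronecker_mono (hAX x a) (hBY y b) ?_ ((hB y).1 b) η)
  · unfold normalizedValue val
    refine Finset.sum_congr rfl fun x _ => Finset.sum_congr rfl fun y _ => ?_
    rw [Finset.sum_div]
    congr 1
    refine Finset.sum_congr rfl fun a _ => ?_
    rw [Finset.sum_div]
    refine Finset.sum_congr rfl fun b _ => ?_
    beta_reduce
    split_ifs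
    · rw [smul_kronecker, kronecker_smul, smul_smul, ← Complex.ofReal_mul, quadForm_smul,
        mul_kronecker_mul, ← conjTranspose_kronecker, hη, quadForm_smul_vec,
        quadForm_conjTranspose_mul_self, hr, ← hN]
      field_simp
    · simp
  · refine (posSemidef_conjTranspose_mul_self (X x a)).smul ?_
    have := opBound_pos (X x) hs
    rw [Complex.zero_le_real]
    positivity

end RatGame
end Analysis

/-! ### Completeness: exact and rounded operators -/

section Transfer
open Witness

/-- The complex matrix with the entries listed in `L` for the indices `(x,a)`. -/
def opsMat (L : List GaussianInt) (d x a : ℕ) : Matrix (Fin d) (Fin d) ℂ :=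
  Matrix.of fun i j => (entry L x a i j).toComplex

theorem cast_taxicab (z : GaussianInt) :
    (taxicab z : ℝ) = |z.toComplex.re| + |z.toComplex.im| := by
  simp [taxicab, Nat.cast_natAbs, ← GaussianInt.intCast_re, ← GaussianInt.intCast_im]

theorem cast_sqModulus (z : GaussianInt) : (sqModulus z : ℝ) = Complex.normSq z.toComplex := by
  simp [sqModulus, Nat.cast_natAbs, Complex.normSq_apply]

theorem toComplex_gramEntry (L : List GaussianInt) (n d x : ℕ) (i j : Fin d) :
    (gramEntry L n d x i j).toComplex = opGram (fun a : Fin n => opsMat L d x a) i j := by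
  simp [gramEntry, opGram, Matrix.sum_apply, Matrix.mul_apply, Finset.sum_range, opsMat]

theorem cast_intBound (L : List GaussianInt) (s n d x : ℕ) :
    (intBound L s n d x : ℝ) = opBound (fun a : Fin n => opsMat L d x a) s := by
  unfold intBound opBound
  simp only [Nat.cast_add, Nat.cast_mul, Nat.cast_sum, Finset.sum_range]
  congr 1
  refine Finset.sum_congr rfl fun i _ => Finset.sum_congr rfl fun j _ => ?_
  rw [cast_taxicab]
  have : (gramEntry L n d x i j + bif decide ((i : ℕ) = j) then ⟨-(s * s : ℤ), 0⟩ else 0 :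
      GaussianInt).toComplex =
      (opGram (fun a : Fin n => opsMat L d x a) - (((s : ℝ) * s : ℝ) : ℂ) • 1) i j := by
    rw [map_add, toComplex_gramEntry, Matrix.sub_apply, Matrix.smul_apply, Matrix.one_apply]
    by_cases h : i = j
    · simp [h, GaussianInt.toComplex_def, sub_eq_add_neg]
    · simp [h, Fin.val_inj]
  rw [this]

theorem toComplex_amplitude (w : Witness) (x y a b : ℕ) (i : Fin w.dimA) (j : Fin w.dimB) :
    (amplitude w x y a b i j).toComplex =
      ((opsMat w.opsA w.dimA x a ⊗ₖ opsMat w.opsB w.dimB y b) *ᵥ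
        fun p => (entry w.state 0 0 p.1 p.2).toComplex) (i, j) := by
  simp [amplitude, Finset.sum_range, mulVec, dotProduct, Fintype.sum_prod_type, opsMat]

theorem cast_witnessValue (G : RatGame) (w : Witness) :
    (witnessValue G w : ℝ) = normalizedValue G (fun x a => opsMat w.opsA w.dimA x a)
      (fun y b => opsMat w.opsB w.dimB y b) (fun p => (entry w.state 0 0 p.1 p.2).toComplex)
      w.scale := by
  unfold witnessValue normalizedValue
  simp only [Finset.sum_range, Rat.cast_sum, Rat.cast_mul, Rat.cast_div, Rat.cast_natCast,
    Nat.cast_mul, cast_intBound]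
  refine Finset.sum_congr rfl fun x _ => Finset.sum_congr rfl fun y _ => ?_
  congr 2
  · simp only [winWeight, Finset.sum_range, Nat.cast_sum]
    refine Finset.sum_congr rfl fun a _ => Finset.sum_congr rfl fun b _ => ?_
    simp only [← toComplex_amplitude, Fintype.sum_prod_type, RatGame.rule]
    cases G.ruleList.getD (((x * G.k + y) * G.n + a) * G.n + b : ℕ) false
    · simp
    · simp [cast_sqModulus]
  · simp [stateSq, Finset.sum_range, cast_sqModulus, Fintype.sum_prod_type]

variable {d dA dB n : ℕ}

/-- Homogeneity: integer operators with scale `s` stand for their quotients by `s`. -/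
theorem opBound_smul (X : Fin n → Matrix (Fin d) (Fin d) ℂ) {s : ℝ} :
    opBound (fun a => (s : ℂ) • X a) s = s * s * opBound X 1 := by
  have h : opGram (fun a => (s : ℂ) • X a) - ((s * s : ℝ) : ℂ) • 1 =
      ((s * s : ℝ) : ℂ) • (opGram X - ((1 * 1 : ℝ) : ℂ) • 1) := by
    simp only [opGram, conjTranspose_smul, smul_mul_smul_comm, ← Finset.smul_sum, smul_sub]
    simp
  rw [opBound, h, opBound, mul_add, Finset.mul_sum]
  simp only [Finset.mul_sum, Matrix.smul_apply, smul_eq_mul, Complex.re_ofReal_mul,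
    Complex.im_ofReal_mul, abs_mul, mul_add]
  simp

theorem normalizedValue_smul (G : RatGame) (X : Fin G.k → Fin G.n → Matrix (Fin dA) (Fin dA) ℂ)
    (Y : Fin G.k → Fin G.n → Matrix (Fin dB) (Fin dB) ℂ) (ξ : Fin dA × Fin dB → ℂ) {s : ℝ}
    (hs : 0 < s) :
    normalizedValue G (fun x a => (s : ℂ) • X x a) (fun y b => (s : ℂ) • Y y b) ((s : ℂ) • ξ) s =
      normalizedValue G X Y ξ 1 := by
  unfold normalizedValue
  refine Finset.sum_congr rfl fun x _ => Finset.sum_congr rfl fun y _ => ?_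
  congr 1
  have h1 : ∀ a b, ∑ p, Complex.normSq (((((s : ℂ) • X x a) ⊗ₖ ((s : ℂ) • Y y b)) *ᵥ
      ((s : ℂ) • ξ)) p) = s ^ 6 * ∑ p, Complex.normSq (((X x a ⊗ₖ Y y b) *ᵥ ξ) p) := by
    intro a b
    rw [Finset.mul_sum]
    refine Finset.sum_congr rfl fun p _ => ?_
    rw [smul_kronecker, kronecker_smul, mulVec_smul, smul_mulVec, smul_mulVec]
    simp only [Pi.smul_apply, smul_eq_mul, Complex.normSq_mul, Complex.normSq_ofReal]
    ring
  have h2 : ∑ p, Complex.normSq (((s : ℂ) • ξ) p) = s ^ 2 * ∑ p, Complex.normSq (ξ p) := by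
    rw [Finset.mul_sum]
    refine Finset.sum_congr rfl fun p _ => ?_
    simp only [Pi.smul_apply, smul_eq_mul, Complex.normSq_mul, Complex.normSq_ofReal]
    ring
  have h3 : ∀ (q : Prop) [Decidable q] (r : ℝ), (if q then s ^ 6 * r else 0) =
      s ^ 6 * if q then r else 0 := by
    intro q _ r
    split_ifs <;> simp
  simp only [h1, h2, h3, opBound_smul, ← Finset.mul_sum]
  rw [show s * s * opBound (X x) 1 * (s * s * opBound (Y y) 1) *
    (s ^ 2 * ∑ p, Complex.normSq (ξ p)) = s ^ 6 * (opBound (X x) 1 * opBound (Y y) 1 *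
      ∑ p, Complex.normSq (ξ p)) by ring]
  exact mul_div_mul_left _ _ (by positivity)

/-- The Gaussian integer obtained from `N * z` by rounding both coordinates down. -/
def floorMul (N : ℝ) (z : ℂ) : GaussianInt := ⟨⌊N * z.re⌋, ⌊N * z.im⌋⟩

/-- The approximation `floorMul N z / N` of `z`. -/
def gridApprox (N : ℝ) (z : ℂ) : ℂ := ((N⁻¹ : ℝ) : ℂ) * (floorMul N z).toComplex

theorem tendsto_floor_mul_inv (r : ℝ) :
    Filter.Tendsto (fun m : ℕ => ((m : ℝ) + 1)⁻¹ * (⌊((m : ℝ) + 1) * r⌋ : ℝ)) Filter.atTop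
      (nhds r) := by
  have h0 : Filter.Tendsto (fun m : ℕ => r - ((m : ℝ) + 1)⁻¹) Filter.atTop (nhds r) := by
    simpa using tendsto_const_nhds.sub (tendsto_one_div_add_atTop_nhds_zero_nat (𝕜 := ℝ))
  refine tendsto_of_tendsto_of_tendsto_of_le_of_le h0 tendsto_const_nhds (fun m => ?_) fun m => ?_
  · have hm : (0 : ℝ) < (m : ℝ) + 1 := by positivity
    have := Int.lt_floor_add_one (((m : ℝ) + 1) * r)
    have h2 : ((m : ℝ) + 1)⁻¹ * (((m : ℝ) + 1) * r - 1) = r - ((m : ℝ) + 1)⁻¹ := by field_simp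
    change r - ((m : ℝ) + 1)⁻¹ ≤ _
    rw [← h2]
    gcongr
    linarith
  · have hm : (0 : ℝ) < (m : ℝ) + 1 := by positivity
    have := Int.floor_le (((m : ℝ) + 1) * r)
    change _ ≤ r
    rw [inv_mul_le_iff₀ hm]
    exact this

theorem tendsto_gridApprox (z : ℂ) :
    Filter.Tendsto (fun m : ℕ => gridApprox ((m : ℝ) + 1) z) Filter.atTop (nhds z) := by
  have h : ∀ m : ℕ, gridApprox ((m : ℝ) + 1) z =
      ((((m : ℝ) + 1)⁻¹ * (⌊((m : ℝ) + 1) * z.re⌋ : ℝ) : ℝ) : ℂ) +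
      ((((m : ℝ) + 1)⁻¹ * (⌊((m : ℝ) + 1) * z.im⌋ : ℝ) : ℝ) : ℂ) * Complex.I := by
    intro m
    simp only [gridApprox, floorMul, GaussianInt.toComplex_def]
    push_cast
    ring
  simp only [h]
  have hre := (Complex.continuous_ofReal.tendsto _).comp (tendsto_floor_mul_inv z.re)
  have him := (Complex.continuous_ofReal.tendsto _).comp (tendsto_floor_mul_inv z.im)
  have := hre.add (him.mul_const Complex.I)
  rwa [Complex.re_add_im] at this

theorem continuous_opBound (s : ℝ) :
    Continuous fun X : Fin n → Matrix (Fin d) (Fin d) ℂ => opBound X s := by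
  unfold opBound opGram
  fun_prop

/-- The normalised value depends continuously on the data wherever the state is nonzero. -/
theorem continuousAt_normalizedValue (G : RatGame)
    (q : (Fin G.k → Fin G.n → Matrix (Fin dA) (Fin dA) ℂ) ×
      (Fin G.k → Fin G.n → Matrix (Fin dB) (Fin dB) ℂ) × (Fin dA × Fin dB → ℂ))
    (hq : ∑ p, Complex.normSq (q.2.2 p) ≠ 0) :
    ContinuousAt (fun q : (Fin G.k → Fin G.n → Matrix (Fin dA) (Fin dA) ℂ) ×
      (Fin G.k → Fin G.n → Matrix (Fin dB) (Fin dB) ℂ) × (Fin dA × Fin dB → ℂ) =>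
      normalizedValue G q.1 q.2.1 q.2.2 1) q := by
  unfold normalizedValue
  refine tendsto_finsetSum _ fun x _ => tendsto_finsetSum _ fun y _ => ?_
  refine tendsto_const_nhds.mul (Filter.Tendsto.div ?_ ?_ ?_)
  · refine tendsto_finsetSum _ fun a _ => tendsto_finsetSum _ fun b _ => ?_
    split_ifs
    · refine tendsto_finsetSum _ fun p _ => ?_
      refine Continuous.tendsto ?_ q
      simp only [mulVec, dotProduct, kroneckerMap_apply]
      refine Complex.continuous_normSq.comp ?_
      fun_prop
    · exact tendsto_const_nhds
  · refine Continuous.tendsto ?_ q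
    have hX := (continuous_opBound (d := dA) (n := G.n) 1).comp
      (f := fun q : (Fin G.k → Fin G.n → Matrix (Fin dA) (Fin dA) ℂ) ×
      (Fin G.k → Fin G.n → Matrix (Fin dB) (Fin dB) ℂ) × (Fin dA × Fin dB → ℂ) => q.1 x)
      (by fun_prop)
    have hY := (continuous_opBound (d := dB) (n := G.n) 1).comp
      (f := fun q : (Fin G.k → Fin G.n → Matrix (Fin dA) (Fin dA) ℂ) ×
      (Fin G.k → Fin G.n → Matrix (Fin dB) (Fin dB) ℂ) × (Fin dA × Fin dB → ℂ) => q.2.1 y)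
      (by fun_prop)
    refine (hX.mul hY).mul (continuous_finsetSum _ fun p _ => Complex.continuous_normSq.comp ?_)
    fun_prop
  · exact mul_ne_zero (mul_ne_zero (opBound_pos _ one_pos).ne' (opBound_pos _ one_pos).ne') hq

/-- Every correlation in `QCorr` comes from operators with `opBound` equal to `1`: take `X x a`
with `(X x a)ᴴ * X x a` equal to the given POVM element. -/
theorem exists_normalizedValue_eq_val (G : RatGame)
    {p : Fin G.k → Fin G.k → Fin G.n → Fin G.n → ℝ} (hp : p ∈ QCorr G.k G.n) :
    ∃ (dA dB : ℕ) (X : Fin G.k → Fin G.n → Matrix (Fin dA) (Fin dA) ℂ)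
      (Y : Fin G.k → Fin G.n → Matrix (Fin dB) (Fin dB) ℂ) (ξ : Fin dA × Fin dB → ℂ),
      ∑ q, Complex.normSq (ξ q) = 1 ∧ normalizedValue G X Y ξ 1 = G.val p := by
  obtain ⟨dA, dB, A, B, ξ, hA, hB, hξ, h⟩ := hp
  have hsqrt : ∀ {d : ℕ} {M : Matrix (Fin d) (Fin d) ℂ}, M.PosSemidef →
      ∃ X : Matrix (Fin d) (Fin d) ℂ, M = Xᴴ * X := fun hM => by
    open scoped MatrixOrder in
    exact CStarAlgebra.nonneg_iff_eq_star_mul_self.mp hM.nonneg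
  choose X hX using fun x a => hsqrt ((hA x).1 a)
  choose Y hY using fun y b => hsqrt ((hB y).1 b)
  have hbound : ∀ {d : ℕ} {A X : Fin G.n → Matrix (Fin d) (Fin d) ℂ}, IsMatPOVM A →
      (∀ a, A a = (X a)ᴴ * X a) → opBound X 1 = 1 := fun {d A X} hA hX => by
    have : opGram X = 1 := by
      rw [← hA.2, opGram]
      exact Finset.sum_congr rfl fun a _ => (hX a).symm
    simp [opBound, this]
  have hN : ∑ q, Complex.normSq (ξ q) = 1 := by
    rw [star_dotProduct_self] at hξ
    exact_mod_cast hξ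
  refine ⟨dA, dB, X, Y, ξ, hN, ?_⟩
  unfold normalizedValue RatGame.val
  refine Finset.sum_congr rfl fun x _ => Finset.sum_congr rfl fun y _ => ?_
  rw [hbound (hA x) (hX x), hbound (hB y) (hY y), hN, one_mul, one_mul, div_one]
  congr 1
  refine Finset.sum_congr rfl fun a _ => Finset.sum_congr rfl fun b _ => ?_
  have : p x y a b = ∑ q, Complex.normSq (((X x a ⊗ₖ Y y b) *ᵥ ξ) q) := by
    rw [← quadForm_conjTranspose_mul_self, conjTranspose_kronecker, ← mul_kronecker_mul, ← hX,
      ← hY, quadForm, ← h, Complex.ofReal_re]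
  rw [this]

/-- Finitely many values at distinct positions can be prescribed in a list. -/
theorem exists_list_getD {ι α : Type*} [Finite ι] {e : ι → ℕ} (he : Function.Injective e)
    (f : ι → α) (z : α) : ∃ L : List α, ∀ i, L.getD (e i) z = f i := by
  obtain ⟨M, hM⟩ := (Set.finite_range e).bddAbove
  refine ⟨(List.range (M + 1)).map (Function.extend e f fun _ => z), fun i => ?_⟩
  have hi : e i < M + 1 := Nat.lt_succ_of_le (hM ⟨i, rfl⟩)
  rw [List.getD_eq_getElem _ _ (by simpa using hi)]
  simp [he.extend_apply]

theorem exists_entry_eq {k n d : ℕ} (f : Fin k → Fin n → Fin d → Fin d → GaussianInt) :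
    ∃ L, ∀ x a i j, entry L (x : Fin k) (a : Fin n) (i : Fin d) (j : Fin d) = f x a i j := by
  obtain ⟨L, hL⟩ := exists_list_getD
    (e := fun q : Fin k × Fin n × Fin d × Fin d =>
      Nat.pair (Nat.pair q.1 q.2.1) (Nat.pair q.2.2.1 q.2.2.2))
    (by
      rintro ⟨x, a, i, j⟩ ⟨x', a', i', j'⟩ h
      simp only [Nat.pair_eq_pair, Fin.val_inj] at h
      simp [h]) (fun q => f q.1 q.2.1 q.2.2.1 q.2.2.2) 0
  exact ⟨L, fun x a i j => hL (x, a, i, j)⟩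

theorem exists_state_eq {dA dB : ℕ} (f : Fin dA × Fin dB → GaussianInt) :
    ∃ L, ∀ q : Fin dA × Fin dB, entry L 0 0 q.1 q.2 = f q :=
  exists_list_getD (e := fun q : Fin dA × Fin dB => Nat.pair (Nat.pair 0 0) (Nat.pair q.1 q.2))
    (by
      rintro ⟨i, j⟩ ⟨i', j'⟩ h
      simp only [Nat.pair_eq_pair, Fin.val_inj] at h
      simp [h]) f 0

theorem smul_gridApprox {N : ℝ} (hN : 0 < N) (z : ℂ) :
    (N : ℂ) * gridApprox N z = (floorMul N z).toComplex := by
  rw [gridApprox, ← mul_assoc, ← Complex.ofReal_mul, mul_inv_cancel₀ hN.ne', Complex.ofReal_one,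
    one_mul]

/-- Rounding all entries to the grid of mesh `1 / (m + 1)` gives a witness. -/
theorem exists_witness_gridApprox (G : RatGame)
    (X : Fin G.k → Fin G.n → Matrix (Fin dA) (Fin dA) ℂ)
    (Y : Fin G.k → Fin G.n → Matrix (Fin dB) (Fin dB) ℂ) (ξ : Fin dA × Fin dB → ℂ) (m : ℕ) :
    ∃ w : Witness, (witnessValue G w : ℝ) = normalizedValue G
      (fun x a => (X x a).map (gridApprox ((m : ℝ) + 1)))
      (fun y b => (Y y b).map (gridApprox ((m : ℝ) + 1)))
      (fun q => gridApprox ((m : ℝ) + 1) (ξ q)) 1 := by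
  have hm : (0 : ℝ) < (m : ℝ) + 1 := by positivity
  obtain ⟨LX, hX⟩ := exists_entry_eq fun x a i j => floorMul ((m : ℝ) + 1) (X x a i j)
  obtain ⟨LY, hY⟩ := exists_entry_eq fun y b i j => floorMul ((m : ℝ) + 1) (Y y b i j)
  obtain ⟨Lξ, hξ⟩ := exists_state_eq fun q => floorMul ((m : ℝ) + 1) (ξ q)
  refine ⟨(m, dA, dB, LX, LY, Lξ), ?_⟩
  rw [← normalizedValue_smul _ _ _ _ hm, cast_witnessValue]
  have hs : ((Witness.scale (m, dA, dB, LX, LY, Lξ) : ℕ) : ℝ) = (m : ℝ) + 1 := by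
    simp [Witness.scale]
  rw [hs]
  congr 1
  · funext x a
    ext i j
    exact (congrArg _ (hX x a i j)).trans (smul_gridApprox hm _).symm
  · funext y b
    ext i j
    exact (congrArg _ (hY y b i j)).trans (smul_gridApprox hm _).symm
  · funext q
    exact (congrArg _ (hξ q)).trans (smul_gridApprox hm _).symm

/-- Completeness: the values of witnesses come arbitrarily close to, or exceed, the value of every
quantum correlation. -/
theorem exists_witnessValue_gt (G : RatGame) {p : Fin G.k → Fin G.k → Fin G.n → Fin G.n → ℝ}
    (hp : p ∈ QCorr G.k G.n) {r : ℝ} (hr : r < G.val p) :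
    ∃ w : Witness, r < (witnessValue G w : ℝ) := by
  obtain ⟨dA, dB, X, Y, ξ, hξ, hval⟩ := exists_normalizedValue_eq_val G hp
  have hc := continuousAt_normalizedValue G (X, Y, ξ) (by rw [hξ]; exact one_ne_zero)
  have ht : Filter.Tendsto (fun m : ℕ =>
      ((fun x a => (X x a).map (gridApprox ((m : ℝ) + 1)) :
          Fin G.k → Fin G.n → Matrix (Fin dA) (Fin dA) ℂ),
        (fun y b => (Y y b).map (gridApprox ((m : ℝ) + 1)) :
          Fin G.k → Fin G.n → Matrix (Fin dB) (Fin dB) ℂ),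
        (fun q => gridApprox ((m : ℝ) + 1) (ξ q) : Fin dA × Fin dB → ℂ)))
      Filter.atTop (nhds (X, Y, ξ)) := by
    refine Filter.Tendsto.prodMk_nhds ?_ (Filter.Tendsto.prodMk_nhds ?_ ?_)
    · exact tendsto_pi_nhds.2 fun x => tendsto_pi_nhds.2 fun a => tendsto_pi_nhds.2 fun i =>
        tendsto_pi_nhds.2 fun j => tendsto_gridApprox _
    · exact tendsto_pi_nhds.2 fun y => tendsto_pi_nhds.2 fun b => tendsto_pi_nhds.2 fun i =>
        tendsto_pi_nhds.2 fun j => tendsto_gridApprox _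
    · exact tendsto_pi_nhds.2 fun q => tendsto_gridApprox _
  obtain ⟨m, hm⟩ := ((hc.tendsto.comp ht).eventually (lt_mem_nhds (hr.trans_eq hval.symm))).exists
  obtain ⟨w, hw⟩ := exists_witness_gridApprox G X Y ξ m
  exact ⟨w, hw.symm ▸ hm⟩

theorem witnessValue_le_qval {G : RatGame} (hG : G.WellFormed) (w : Witness) :
    (witnessValue G w : ℝ) ≤ G.qval := by
  rw [cast_witnessValue]
  exact RatGame.normalizedValue_le_qval hG _ _ _ (by simp [Witness.scale]; positivity)

theorem qvalApprox_le_qval {G : RatGame} (hG : G.WellFormed) (m : ℕ) :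
    (qvalApprox G m : ℝ) ≤ G.qval := by
  induction m with
  | zero =>
    have := RatGame.qval_nonneg hG
    simpa [qvalApprox] using this
  | succ m ih =>
    change ((max (qvalApprox G m)
      (((Encodable.decode (α := Witness) m).map (witnessValue G)).getD 0) : ℚ) : ℝ) ≤ _
    rw [Rat.cast_max]
    refine max_le ih ?_
    cases Encodable.decode (α := Witness) m with
    | none => simpa using RatGame.qval_nonneg hG
    | some w => simpa using witnessValue_le_qval hG w

theorem iSup_qvalApprox {G : RatGame} (hG : G.WellFormed) :
    (⨆ m : ℕ, (qvalApprox G m : ℝ)) = G.qval := by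
  have hbdd : BddAbove (Set.range fun m : ℕ => (qvalApprox G m : ℝ)) := by
    refine ⟨G.qval, ?_⟩
    rintro _ ⟨m, rfl⟩
    exact qvalApprox_le_qval hG m
  refine le_antisymm (ciSup_le (qvalApprox_le_qval hG)) ?_
  refine Real.sSup_le ?_ ?_
  · rintro _ ⟨p, hp, rfl⟩
    refine le_of_forall_lt fun r hr => ?_
    obtain ⟨w, hw⟩ := exists_witnessValue_gt G hp hr
    have h1 : (witnessValue G w : ℝ) ≤ qvalApprox G (Encodable.encode w + 1) := by
      exact_mod_cast witnessValue_le_qvalApprox G w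
    exact hw.trans_le (h1.trans (le_ciSup hbdd _))
  · have := le_ciSup hbdd 0
    simpa [qvalApprox] using this

end Transfer

/-- The quantum value is left computably enumerable uniformly in the game: there is a
computable function `F` from (codes of) nonlocal games with rational data and naturals to
rationals such that, for every nonlocal game `𝔊`, the sequence `m ↦ F(𝔊,m)` is
nondecreasing with supremum `val*(𝔊)`. -/
theorem qval_left_ce :
    ∃ F : RatGame → ℕ → ℚ, Computable₂ F ∧
      ∀ G : RatGame, G.WellFormed →
        Monotone (F G) ∧ (⨆ m : ℕ, ((F G m : ℝ))) = G.qval := by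
  exact ⟨qvalApprox, computable_qvalApprox, fun G hG => ⟨qvalApprox_mono G, iSup_qvalApprox hG⟩⟩

end
end

section
/- For every integer n ≥ 1 and every ε > 0 there exists δ > 0 such that: for every d ≥ 1 and every n-tuple (a_1, …, a_n) of positive semidefinite contractions in M_d(ℂ) satisfying ‖a_i² − a_i‖₂ < δ for every i ∈ [n] and ‖(Σ_{i=1}^n a_i) − I_d‖₂ < δ, there exists an n-tuple (b_1, …, b_n) of projections in M_d(ℂ) with Σ_{i=1}^n b_i = I_d and ‖a_i − b_i‖₂ < ε for all i ∈ [n]. Crucially, δ depends only on n and ε and not on d. -/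
/-!
Put `A = ∑ j, j • a j`. If `a` were a projection-valued measure, then `a i` would be the spectral
projection of `A` at the eigenvalue `i`. So in general `b i` is taken to be the spectral projection
of `A` onto the eigenvectors whose eigenvalue is nearest to `i` among `0, …, n - 1` (ties broken
arbitrarily); these are orthogonal projections with sum `1` by construction.

To compare `b i` with `a i`, write `E j i = a j * a i - δ_{ji} a j`. If `A v = x v`, then
`(x - j) a j v = ∑ i, i • E j i v`, so `‖a j v‖ ≤ 2 n ∑ i, ‖E j i v‖` unless `j` is the index nearest
to `x`; for that index `a j v - v = (∑ i, a i - 1) v - ∑_{i ≠ j} a i v` is small too. In an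
eigenbasis of `A` this is an inequality between matrix entries, and summing squares gives
(`exists_pvm_of_diagonal`, `exists_pvm`)
`‖a i - b i‖² ≤ 2 ‖∑ a i - 1‖² + 8 n⁴ ∑ j, ∑ i, ‖E j i‖²`,
with constants that do not involve `d`.

The `E j i` are small because of positivity (`frobSq_defect_le`): for `i ≠ j`,
`‖a j * a i‖² ≤ tr (a j * a i) ≤ ∑_{l ≠ j} tr (a j * a l)
  = tr (a j * (∑ l, a l - 1)) - tr (a j ^ 2 - a j)`,
and Cauchy–Schwarz bounds the right-hand side.
-/

open Matrix
open scoped Kronecker ComplexOrder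

noncomputable section

/-- The normalized Hilbert–Schmidt norm `‖M‖₂ = √(tr(M*M)/d)` on `M_d(ℂ)` (the 2-norm
associated to the normalized trace). -/
def hsNorm {d : ℕ} (M : Matrix (Fin d) (Fin d) ℂ) : ℝ :=
  Real.sqrt ((Mᴴ * M).trace.re / d)

/-! ### The Hilbert–Schmidt norm -/

/-- The unnormalized squared Hilbert–Schmidt norm `‖M‖² = ∑ |M r k|²`. -/
def frobSq {d : ℕ} (M : Matrix (Fin d) (Fin d) ℂ) : ℝ := ∑ r, ∑ k, ‖M r k‖ ^ 2

lemma frobSq_eq_trace {d : ℕ} (M : Matrix (Fin d) (Fin d) ℂ) :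
    frobSq M = (Mᴴ * M).trace.re := by
  simp only [frobSq, trace, diag, mul_apply, conjTranspose_apply, Complex.re_sum]
  rw [Finset.sum_comm]
  refine Finset.sum_congr rfl fun k _ => Finset.sum_congr rfl fun r _ => ?_
  rw [← Complex.normSq_eq_norm_sq, Complex.normSq_apply]
  simp

lemma hsNorm_lt_iff {d : ℕ} (hd : 1 ≤ d) (M : Matrix (Fin d) (Fin d) ℂ) {t : ℝ} (ht : 0 < t) :
    hsNorm M < t ↔ frobSq M < t ^ 2 * d := by
  have : (0 : ℝ) < d := by exact_mod_cast hd
  rw [hsNorm, Real.sqrt_lt' ht, div_lt_iff₀ this, frobSq_eq_trace]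

/-- A form of Cauchy–Schwarz for the trace inner product, obtained by summing
`Re (x̄ y) ≤ (t |x|² + |y|² / t) / 2` over the entries. -/
lemma trace_re_le {d : ℕ} {X Y : Matrix (Fin d) (Fin d) ℂ} {t : ℝ} (ht : 0 < t)
    (hX : frobSq X ≤ d) (hY : frobSq Y ≤ t ^ 2 * d) : |(Xᴴ * Y).trace.re| ≤ t * d := by
  have key : |(Xᴴ * Y).trace.re| ≤ ∑ k, ∑ r, (t / 2 * ‖X r k‖ ^ 2 + 1 / (2 * t) * ‖Y r k‖ ^ 2) := by
    simp only [trace, diag, mul_apply, conjTranspose_apply, Complex.re_sum]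
    refine (Finset.abs_sum_le_sum_abs _ _).trans (Finset.sum_le_sum fun k _ =>
      (Finset.abs_sum_le_sum_abs _ _).trans (Finset.sum_le_sum fun r _ => ?_))
    refine (Complex.abs_re_le_norm _).trans ?_
    rw [norm_mul, norm_star]
    have : t / 2 * ‖X r k‖ ^ 2 + 1 / (2 * t) * ‖Y r k‖ ^ 2 - ‖X r k‖ * ‖Y r k‖
        = (t * ‖X r k‖ - ‖Y r k‖) ^ 2 / (2 * t) := by
      field_simp
      ring
    have h2 : 0 ≤ (t * ‖X r k‖ - ‖Y r k‖) ^ 2 / (2 * t) := by positivity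
    linarith
  refine key.trans ?_
  rw [Finset.sum_comm]
  simp only [Finset.sum_add_distrib, ← Finset.mul_sum]
  change t / 2 * frobSq X + 1 / (2 * t) * frobSq Y ≤ t * d
  have h1 : t / 2 * frobSq X ≤ t / 2 * d := by gcongr
  have h2 : 1 / (2 * t) * frobSq Y ≤ 1 / (2 * t) * (t ^ 2 * d) := by gcongr
  have h3 : 1 / (2 * t) * (t ^ 2 * d) = t / 2 * d := by field_simp
  linarith

/-! ### Positivity and approximate orthogonality -/

open scoped MatrixOrder Matrix.Norms.L2Operator in
/-- The trace of a product of two positive semidefinite matrices is nonnegative. -/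
lemma trace_mul_re_nonneg {d : ℕ} {P Q : Matrix (Fin d) (Fin d) ℂ}
    (hP : P.PosSemidef) (hQ : Q.PosSemidef) : 0 ≤ (P * Q).trace.re := by
  obtain ⟨B, rfl⟩ := CStarAlgebra.nonneg_iff_eq_star_mul_self.mp hQ.nonneg
  rw [star_eq_conjTranspose]
  have h : (P * (Bᴴ * B)).trace = (B * P * Bᴴ).trace := by
    rw [← Matrix.mul_assoc, Matrix.trace_mul_comm, Matrix.mul_assoc]
  rw [h]
  exact (Complex.le_def.1 (hP.mul_mul_conjTranspose_same B).trace_nonneg).1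

lemma posSemidef_sub_sq {d : ℕ} {P : Matrix (Fin d) (Fin d) ℂ}
    (hP : P.PosSemidef) (hP' : (1 - P).PosSemidef) : (P - P * P).PosSemidef := by
  have h : P - P * P = P * (1 - P) * Pᴴ + (1 - P) * P * (1 - P)ᴴ := by
    rw [hP.1.eq, hP'.1.eq]
    noncomm_ring
  rw [h]
  exact (hP'.mul_mul_conjTranspose_same P).add (hP.mul_mul_conjTranspose_same (1 - P))

lemma frobSq_le_of_contraction {d : ℕ} {P : Matrix (Fin d) (Fin d) ℂ}
    (hP : P.PosSemidef) (hP' : (1 - P).PosSemidef) : frobSq P ≤ d := by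
  have h1 := (Complex.le_def.1 (posSemidef_sub_sq hP hP').trace_nonneg).1
  have h2 := (Complex.le_def.1 hP'.trace_nonneg).1
  rw [frobSq_eq_trace, hP.1.eq]
  simp [trace_sub, trace_one] at h1 h2
  linarith

/-- `‖PQ‖² = tr (P²Q²) ≤ tr (PQ)` for positive semidefinite contractions, since `P² ≤ P`
and `Q² ≤ Q`. -/
lemma frobSq_mul_le {d : ℕ} {P Q : Matrix (Fin d) (Fin d) ℂ}
    (hP : P.PosSemidef) (hP' : (1 - P).PosSemidef)
    (hQ : Q.PosSemidef) (hQ' : (1 - Q).PosSemidef) : frobSq (P * Q) ≤ (P * Q).trace.re := by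
  have h1 := trace_mul_re_nonneg (posSemidef_sub_sq hP hP') hQ
  have hPP : (P * P).PosSemidef := by
    simpa [hP.1.eq] using posSemidef_conjTranspose_mul_self P
  have h2 := trace_mul_re_nonneg hPP (posSemidef_sub_sq hQ hQ')
  have h3 : ((P * Q)ᴴ * (P * Q)).trace = (P * P * (Q * Q)).trace := by
    rw [conjTranspose_mul, hP.1.eq, hQ.1.eq, Matrix.mul_assoc, Matrix.trace_mul_comm]
    simp only [Matrix.mul_assoc]
  rw [frobSq_eq_trace, h3]
  simp only [Matrix.sub_mul, Matrix.mul_sub, trace_sub, Complex.sub_re] at h1 h2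
  linarith

/-- The defect of the relation `a j * a i = δ_{ji} a j` satisfied by a projection-valued
measure. -/
def defect {n d : ℕ} (a : Fin n → Matrix (Fin d) (Fin d) ℂ) (j i : Fin n) :
    Matrix (Fin d) (Fin d) ℂ := a j * a i - if i = j then a j else 0

/-- For `j ≠ i` this rests on
`∑_{l ≠ j} tr (a_j a_l) = tr (a_j (∑ a_l - 1)) - tr (a_j² - a_j)`, whose terms on the left are
nonnegative. -/
lemma frobSq_defect_le {n d : ℕ} {a : Fin n → Matrix (Fin d) (Fin d) ℂ} {t : ℝ}
    (ht : 0 < t) (ht1 : t ≤ 1)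
    (ha : ∀ i, (a i).PosSemidef ∧ (1 - a i).PosSemidef)
    (hsq : ∀ i, frobSq (a i * a i - a i) ≤ t ^ 2 * d)
    (hsum : frobSq ((∑ i, a i) - 1) ≤ t ^ 2 * d) (j i : Fin n) :
    frobSq (defect a j i) ≤ 2 * t * d := by
  by_cases hij : i = j
  · subst hij
    have : t ^ 2 * d ≤ 2 * t * d := by gcongr; nlinarith
    simpa [defect] using (hsq i).trans this
  · simp only [defect, if_neg hij, sub_zero]
    refine (frobSq_mul_le (ha j).1 (ha j).2 (ha i).1 (ha i).2).trans ?_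
    have h1 : (a j * a i).trace.re ≤ ∑ l ∈ Finset.univ.erase j, (a j * a l).trace.re :=
      Finset.single_le_sum (f := fun l => (a j * a l).trace.re)
        (fun l _ => trace_mul_re_nonneg (ha j).1 (ha l).1)
        (Finset.mem_erase.2 ⟨hij, Finset.mem_univ i⟩)
    have h2 := Finset.add_sum_erase Finset.univ (fun l => (a j * a l).trace.re)
      (Finset.mem_univ j)
    have h3 := trace_re_le ht (frobSq_le_of_contraction (ha j).1 (ha j).2) hsum
    have hone : frobSq (1 : Matrix (Fin d) (Fin d) ℂ) ≤ d := by
      simp [frobSq_eq_trace, trace_one]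
    have h4 := trace_re_le ht hone (hsq j)
    rw [(ha j).1.1.eq, Matrix.mul_sub, Matrix.mul_sum, trace_sub, trace_sum, Complex.sub_re,
      Complex.re_sum, Matrix.mul_one] at h3
    rw [conjTranspose_one, Matrix.one_mul, trace_sub, Complex.sub_re] at h4
    have h3' := (abs_le.1 h3).2
    have h4' := (abs_le.1 h4).1
    linarith

/-! ### Rounding the spectrum -/

/-- Each real number is at distance at least `1/2` from all but one of `0, …, n - 1`. -/
lemma exists_nearest {n : ℕ} (hn : 1 ≤ n) (x : ℝ) :
    ∃ i : Fin n, ∀ j : Fin n, j ≠ i → 1 / 2 ≤ |x - (j : ℕ)| := by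
  have : Nonempty (Fin n) := ⟨⟨0, hn⟩⟩
  obtain ⟨i, hi⟩ := Finite.exists_min fun i : Fin n => |x - ((i : ℕ) : ℝ)|
  refine ⟨i, fun j hj => ?_⟩
  have h1 : (1 : ℝ) ≤ |((i : ℕ) : ℝ) - (j : ℕ)| := by
    have : (1 : ℤ) ≤ |((i : ℕ) : ℤ) - (j : ℕ)| := by
      apply Int.one_le_abs
      intro h
      exact hj (Fin.ext (by omega))
    exact_mod_cast this
  have h2 := abs_sub_le ((i : ℕ) : ℝ) x (j : ℕ)
  rw [abs_sub_comm _ x] at h2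
  linarith [hi j]

/-- Rounding when `∑ j, j • a j` is diagonal with real entries `x k`: the projection `b i` is
diagonal and picks out those `k` whose `x k` is nearest to `i`. The bound is entrywise: column
`k` of `∑ i, i • defect a j i` is `x k - j` times column `k` of `a j`, so `a j` is small there
unless `j` is nearest to `x k`. -/
lemma exists_pvm_of_diagonal {n d : ℕ} (hn : 1 ≤ n) (a : Fin n → Matrix (Fin d) (Fin d) ℂ)
    (x : Fin d → ℝ) (hx : ∑ j : Fin n, ((j : ℕ) : ℂ) • a j = diagonal fun k => (x k : ℂ)) :
    ∃ b : Fin n → Matrix (Fin d) (Fin d) ℂ,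
      (∀ i, (b i)ᴴ = b i ∧ b i * b i = b i) ∧ (∑ i, b i = 1) ∧
      ∀ i, frobSq (a i - b i) ≤ 2 * frobSq ((∑ i, a i) - 1) +
        8 * (n : ℝ) ^ 4 * ∑ j, ∑ i, frobSq (defect a j i) := by
  choose κ hκ using fun k => exists_nearest hn (x k)
  -- `R j r k` bounds the entry of `a j` at `(r, k)` when `j ≠ κ k`.
  set R : Fin n → Fin d → Fin d → ℝ := fun j r k => 2 * n * ∑ i, ‖defect a j i r k‖ with hR
  have hR0 : ∀ j r k, 0 ≤ R j r k := fun j r k => by positivity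
  have hcol : ∀ (j : Fin n) r k, ((x k : ℂ) - (j : ℕ)) * a j r k =
      ∑ i : Fin n, ((i : ℕ) : ℂ) * defect a j i r k := by
    intro j r k
    have h1 : (a j * ∑ i : Fin n, ((i : ℕ) : ℂ) • a i) r k = a j r k * x k := by
      rw [hx, mul_diagonal]
    rw [Matrix.mul_sum, Matrix.sum_apply] at h1
    simp only [Matrix.mul_smul, Matrix.smul_apply, smul_eq_mul] at h1
    simp only [defect, Matrix.sub_apply, mul_sub, Finset.sum_sub_distrib, h1]
    have h2 : ∑ i : Fin n, ((i : ℕ) : ℂ) * (if i = j then a j else 0) r k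
        = ((j : ℕ) : ℂ) * a j r k := by
      rw [Finset.sum_eq_single j]
      · simp
      · intro i _ hij
        simp [hij]
      · simp
    rw [h2]
    ring
  have hsmall : ∀ j r k, j ≠ κ k → ‖a j r k‖ ≤ R j r k := by
    intro j r k hj
    have h1 : ‖((x k : ℂ) - (j : ℕ)) * a j r k‖ ≤ n * ∑ i, ‖defect a j i r k‖ := by
      rw [hcol, Finset.mul_sum]
      refine norm_sum_le_of_le _ fun i _ => ?_
      rw [norm_mul, Complex.norm_natCast]
      gcongr
      exact i.2.le
    have h2 : ‖(x k : ℂ) - (j : ℕ)‖ = |x k - (j : ℕ)| := by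
      rw [← Real.norm_eq_abs, ← Complex.norm_real]
      simp
    rw [norm_mul, h2] at h1
    have h3 := mul_le_mul_of_nonneg_right (hκ k j hj) (norm_nonneg (a j r k))
    simp only [hR]
    linarith
  refine ⟨fun i => diagonal fun k => if κ k = i then 1 else 0, fun i => ⟨?_, ?_⟩, ?_, fun i => ?_⟩
  · rw [diagonal_conjTranspose]
    congr 1
    ext k
    by_cases h : κ k = i <;> simp [h]
  · rw [diagonal_mul_diagonal]
    congr 1
    ext k
    by_cases h : κ k = i <;> simp [h]
  · ext r k
    rw [Matrix.sum_apply]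
    by_cases h : r = k
    · subst h
      simp
    · simp [h]
  · have hent : ∀ r k, ‖(a i - diagonal fun k => if κ k = i then (1 : ℂ) else 0 : Matrix _ _ ℂ) r k‖ ≤
        ‖((∑ i, a i) - 1) r k‖ + ∑ j, R j r k := by
      intro r k
      by_cases h : κ k = i
      · have e : (a i - diagonal fun k => if κ k = i then (1 : ℂ) else 0 : Matrix _ _ ℂ) r k =
            ((∑ i, a i) - 1) r k - ∑ j ∈ Finset.univ.erase i, a j r k := by
          rw [Matrix.sub_apply, Matrix.sub_apply, Matrix.sum_apply,
            ← Finset.add_sum_erase Finset.univ (fun j => a j r k) (Finset.mem_univ i)]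
          have : (diagonal fun k => if κ k = i then (1 : ℂ) else 0 : Matrix _ _ ℂ) r k =
              (1 : Matrix (Fin d) (Fin d) ℂ) r k := by
            by_cases hrk : r = k
            · subst hrk
              simp [h]
            · simp [hrk]
          rw [this]
          ring
        rw [e]
        refine (norm_sub_le _ _).trans ?_
        gcongr
        refine (norm_sum_le_of_le _ fun j hj => hsmall j r k ?_).trans
          (Finset.sum_le_sum_of_subset_of_nonneg (Finset.erase_subset _ _) fun j _ _ => hR0 j r k)
        rw [h]
        exact (Finset.mem_erase.1 hj).1
      · have e : (a i - diagonal fun k => if κ k = i then (1 : ℂ) else 0 : Matrix _ _ ℂ) r k = a i r k := by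
          rw [Matrix.sub_apply]
          by_cases hrk : r = k
          · subst hrk
            simp [h]
          · simp [hrk]
        rw [e]
        have h1 := hsmall i r k (Ne.symm h)
        have h2 := Finset.single_le_sum (f := fun j => R j r k) (fun j _ => hR0 j r k)
          (Finset.mem_univ i)
        have h3 := norm_nonneg (((∑ i, a i) - 1) r k)
        linarith
    have hentsq : ∀ r k, ‖(a i - diagonal fun k => if κ k = i then (1 : ℂ) else 0 : Matrix _ _ ℂ) r k‖ ^ 2 ≤
        2 * ‖((∑ i, a i) - 1) r k‖ ^ 2 +
          8 * (n : ℝ) ^ 4 * ∑ j, ∑ i, ‖defect a j i r k‖ ^ 2 := by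
      intro r k
      have h1 := pow_le_pow_left₀ (norm_nonneg _) (hent r k) 2
      have h2 := add_sq_le (a := ‖((∑ i, a i) - 1) r k‖) (b := ∑ j, R j r k)
      have h3 : ∑ j, R j r k = 2 * n * ∑ p : Fin n × Fin n, ‖defect a p.1 p.2 r k‖ := by
        rw [Fintype.sum_prod_type, Finset.mul_sum]
      have h4 := sq_sum_le_card_mul_sum_sq (s := (Finset.univ : Finset (Fin n × Fin n)))
        (f := fun p => ‖defect a p.1 p.2 r k‖)
      have h5 : ∑ p : Fin n × Fin n, ‖defect a p.1 p.2 r k‖ ^ 2 =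
          ∑ j, ∑ i, ‖defect a j i r k‖ ^ 2 := Fintype.sum_prod_type _
      rw [h5, Finset.card_univ, Fintype.card_prod, Fintype.card_fin] at h4
      have h6 : (∑ j, R j r k) ^ 2 ≤
          4 * (n : ℝ) ^ 4 * ∑ j, ∑ i, ‖defect a j i r k‖ ^ 2 := by
        rw [h3, mul_pow]
        refine (mul_le_mul_of_nonneg_left h4 (by positivity)).trans (le_of_eq ?_)
        push_cast
        ring
      linarith
    refine (Finset.sum_le_sum fun r _ => Finset.sum_le_sum fun k _ => hentsq r k).trans
      (le_of_eq ?_)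
    simp only [Finset.sum_add_distrib, ← Finset.mul_sum]
    have hswap : ∑ j, ∑ i, frobSq (defect a j i) =
        ∑ r, ∑ k, ∑ j, ∑ i, ‖defect a j i r k‖ ^ 2 :=
      ((Finset.sum_congr rfl fun j _ => Finset.sum_comm).trans Finset.sum_comm).trans
        (Finset.sum_congr rfl fun r _ =>
          (Finset.sum_congr rfl fun j _ => Finset.sum_comm).trans Finset.sum_comm)
    rw [hswap]
    rfl

/-- Unitary invariance of the Hilbert–Schmidt norm. -/
lemma frobSq_conj {d : ℕ} (u : unitaryGroup (Fin d) ℂ) (M : Matrix (Fin d) (Fin d) ℂ) :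
    frobSq (Unitary.conjStarAlgAut ℂ _ u M) = frobSq M := by
  rw [frobSq_eq_trace, frobSq_eq_trace, ← star_eq_conjTranspose, ← map_star, ← map_mul,
    Unitary.conjStarAlgAut_apply, Matrix.trace_mul_comm, ← Matrix.mul_assoc,
    Unitary.coe_star_mul_self, Matrix.one_mul, star_eq_conjTranspose]

/-- Rounding of an arbitrary Hermitian tuple, reduced to the diagonal case by conjugating with
a unitary that diagonalizes `∑ j, j • a j`. -/
lemma exists_pvm {n d : ℕ} (hn : 1 ≤ n) (a : Fin n → Matrix (Fin d) (Fin d) ℂ)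
    (ha : ∀ i, (a i).IsHermitian) :
    ∃ b : Fin n → Matrix (Fin d) (Fin d) ℂ,
      (∀ i, (b i)ᴴ = b i ∧ b i * b i = b i) ∧ (∑ i, b i = 1) ∧
      ∀ i, frobSq (a i - b i) ≤ 2 * frobSq ((∑ i, a i) - 1) +
        8 * (n : ℝ) ^ 4 * ∑ j, ∑ i, frobSq (defect a j i) := by
  have hA : (∑ j : Fin n, ((j : ℕ) : ℂ) • a j).IsHermitian := by
    rw [IsHermitian, conjTranspose_sum]
    refine Finset.sum_congr rfl fun j _ => ?_
    rw [conjTranspose_smul, (ha j).eq]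
    simp
  set u := hA.eigenvectorUnitary with hu
  set φ := Unitary.conjStarAlgAut ℂ (Matrix (Fin d) (Fin d) ℂ) (star u) with hφ
  have hinv : ∀ M, frobSq (φ M) = frobSq M := frobSq_conj (star u)
  have hdiag : ∑ j : Fin n, ((j : ℕ) : ℂ) • φ (a j) =
      diagonal fun k => (hA.eigenvalues k : ℂ) := by
    have h := hA.conjStarAlgAut_star_eigenvectorUnitary
    rw [map_sum] at h
    simp only [map_smul] at h
    exact h
  obtain ⟨b, hb, hbsum, hbound⟩ :=
    exists_pvm_of_diagonal hn (fun j => φ (a j)) hA.eigenvalues hdiag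
  refine ⟨fun i => φ.symm (b i), fun i => ⟨?_, ?_⟩, ?_, fun i => ?_⟩
  · rw [← star_eq_conjTranspose, ← map_star, star_eq_conjTranspose, (hb i).1]
  · rw [← map_mul, (hb i).2]
  · rw [← map_sum, hbsum, map_one]
  · have hdef : ∀ j i, defect (fun j => φ (a j)) j i = φ (defect a j i) := by
      intro j i
      by_cases h : i = j <;> simp [defect, h]
    have hs : (∑ i, φ (a i)) - 1 = φ ((∑ i, a i) - 1) := by
      rw [map_sub, map_sum, map_one]
    have hd : φ (a i) - b i = φ (a i - φ.symm (b i)) := by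
      rw [map_sub, StarAlgEquiv.apply_symm_apply]
    have h := hbound i
    simp only [hdef, hs, hd, hinv] at h
    exact h

/-! ### The stability theorem -/

/-- Lemma of Kim–Paulsen–Schafhauser: for every `n ≥ 1` and `ε > 0` there is `δ > 0`,
depending only on `n` and `ε` and not on `d`, such that any `n`-tuple of positive
semidefinite contractions in `M_d(ℂ)` (positive semidefinite matrices `a` with `1 - a`
positive semidefinite, i.e. of operator norm at most `1`) which is `δ`-close in the
normalized Hilbert–Schmidt norm to being a PVM (each `‖a_i² - a_i‖₂ < δ` and
`‖∑ a_i - 1‖₂ < δ`) is `ε`-close to an actual PVM: a tuple of projections `b_i` in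
`M_d(ℂ)` with `∑ b_i = 1` and `‖a_i - b_i‖₂ < ε` for all `i`. -/
theorem kps_pvm_stability (n : ℕ) (hn : 1 ≤ n) (ε : ℝ) (hε : 0 < ε) :
    ∃ δ : ℝ, 0 < δ ∧ ∀ d : ℕ, 1 ≤ d →
      ∀ a : Fin n → Matrix (Fin d) (Fin d) ℂ,
        (∀ i, (a i).PosSemidef ∧ (1 - a i).PosSemidef) →
        (∀ i, hsNorm (a i * a i - a i) < δ) →
        hsNorm ((∑ i, a i) - 1) < δ →
        ∃ b : Fin n → Matrix (Fin d) (Fin d) ℂ,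
          (∀ i, (b i)ᴴ = b i ∧ b i * b i = b i) ∧ (∑ i, b i = 1) ∧
          ∀ i, hsNorm (a i - b i) < ε := by
  -- The total squared error comes out at most `(2 + 16 n ^ 6) δ`, to be less than `ε ^ 2`.
  refine ⟨min 1 (ε ^ 2 / (3 + 16 * (n : ℝ) ^ 6)), by positivity, fun d hd a ha hsq hsum => ?_⟩
  set t := min 1 (ε ^ 2 / (3 + 16 * (n : ℝ) ^ 6)) with ht
  have ht0 : 0 < t := by positivity
  have ht1 : t ≤ 1 := min_le_left _ _
  have hd0 : (0 : ℝ) < d := by exact_mod_cast hd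
  have hsq' : ∀ i, frobSq (a i * a i - a i) ≤ t ^ 2 * d := fun i =>
    ((hsNorm_lt_iff hd _ ht0).1 (hsq i)).le
  have hsum' := ((hsNorm_lt_iff hd _ ht0).1 hsum).le
  obtain ⟨b, hb, hbsum, hbound⟩ := exists_pvm hn a fun i => (ha i).1.1
  refine ⟨b, hb, hbsum, fun i => (hsNorm_lt_iff hd _ hε).2 ((hbound i).trans_lt ?_)⟩
  have h1 : ∑ j, ∑ i, frobSq (defect a j i) ≤ (n : ℝ) ^ 2 * (2 * t * d) := by
    refine (Finset.sum_le_sum fun j _ => Finset.sum_le_sum fun i _ =>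
      frobSq_defect_le ht0 ht1 ha hsq' hsum' j i).trans (le_of_eq ?_)
    simp
    ring
  have h2 : t * (3 + 16 * (n : ℝ) ^ 6) ≤ ε ^ 2 :=
    (le_div_iff₀ (by positivity)).1 (min_le_right _ _)
  calc 2 * frobSq ((∑ i, a i) - 1) + 8 * (n : ℝ) ^ 4 * ∑ j, ∑ i, frobSq (defect a j i)
      ≤ 2 * (t ^ 2 * d) + 8 * (n : ℝ) ^ 4 * ((n : ℝ) ^ 2 * (2 * t * d)) := by gcongr
    _ ≤ 2 * (t * d) + 8 * (n : ℝ) ^ 4 * ((n : ℝ) ^ 2 * (2 * t * d)) := by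
        gcongr
        nlinarith
    _ < t * (3 + 16 * (n : ℝ) ^ 6) * d := by nlinarith [mul_pos ht0 hd0]
    _ ≤ ε ^ 2 * d := by gcongr

end
end

section
/- For all integers k, n ≥ 2, C^s_qa(k,n) equals the closure of C^s_q(k,n): the set of synchronous correlations lying in the closure of C_q(k,n) coincides with the closure in ℝ^{k²n²} of the set of synchronous correlations in C_q(k,n). -/
/-!
The closure of the synchronous elements of `C_q` consists of synchronous correlations in the closure
of `C_q`, because being synchronous is a closed condition. For the converse it suffices to show that
a correlation `q ∈ C_q` whose total weight on unequal answers to equal questions is at most `δ` lies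
within `modulus n δ` of a synchronous element of `C_q`, where `modulus n δ → 0` as `δ → 0`
(`exists_sync_approx`). The approximant is tracial: it has the form `tr (P^x_a P^y_b)` with
projective measurements `P^x` and `tr` the normalised trace of a matrix algebra, and every
correlation of this form is a synchronous element of `C_q` (`tracial_mem`, by means of the maximally
entangled state and `B^y_b = (P^y_b)ᵀ`).

* *From a state to a weight.* Write the unit vector `ξ` as a matrix `K` with `‖K‖_HS = 1`. After `B`
  has been replaced by its transpose, `q(a,b|x,y) = Tr (A^x_a K B^y_b Kᴴ)`. Expanding the square
  shows `∑ a, ‖A^x_a K - K B^x_a‖²_HS ≤ 2δ`. Hence `A ⊕ B` nearly commutes with the self-adjoint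
  matrix `H = [[0, K], [Kᴴ, 0]]`, while `Tr (H² ·)/2` is a state on the direct sum, with respect to
  which the POVMs `A^x ⊕ B^x` are nearly projective and nearly reproduce `q`. In an eigenbasis of
  `H` this state becomes a diagonal weight `w i = (h i)² / 2` (`exists_weighted`).
* *From a weight to a trace.* Near-commutation with `H` and the Cauchy–Schwarz inequality give, as in
  an argument of Connes, that `∑ i j, |X i j|² |w i - w j|` is small (`connes_bound`), so
  `∑ i j, w i X i j Y j i` changes little when `w i` is replaced by `min (w i) (w j)`
  (`min_bound`). With `m i = ⌈N w i⌉`, the sum weighted by `min (m i) (m j)` is exactly the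
  unnormalised trace of a product of two compressions of `X ⊗ 1_N` and `Y ⊗ 1_N`, namely to the
  basis vectors `e_i ⊗ e_t` with `t < m i`: both factors of the product are block diagonal in `t`,
  with block `t` the principal submatrix on `{i | t < m i}`. Letting `N → ∞` yields POVMs `Y^x` whose
  normalised trace correlations approximate the weighted ones (`exists_tracial`).
* *From POVMs to PVMs.* The POVMs so obtained are nearly projective in normalised trace. The spectral
  projections of `∑ a, a • Y_a`, with each eigenvalue assigned to a nearest integer in
  `{0, …, n - 1}`, form a PVM close to `Y` in Hilbert–Schmidt norm, with a constant depending only on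
  `n` (`rounding`). Traces of products are continuous in this norm (`rtr_mul_close`).
-/

set_option linter.unusedSectionVars false

open Matrix
open scoped Kronecker ComplexOrder

noncomputable section

/-- A correlation is synchronous if equal questions never receive distinct answers:
`p(a,b|x,x) = 0` for all `x` and all `a ≠ b`. -/
def Synchronous {k n : ℕ} (p : Fin k → Fin k → Fin n → Fin n → ℝ) : Prop :=
  ∀ x a b, a ≠ b → p x x a b = 0

/-! ### Traces, Hilbert–Schmidt norms and POVMs -/

variable {ι κ : Type} [Fintype ι] [Fintype κ] {n k : ℕ}

/-- A POVM with `n` outcomes on `ℂ^ι`, for an arbitrary finite index type `ι`; when `ι = Fin d`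
this is `IsMatPOVM`. -/
def POVM [DecidableEq ι] (X : Fin n → Matrix ι ι ℂ) : Prop :=
  (∀ a, (X a).PosSemidef) ∧ ∑ a, X a = 1

/-- The real part of the (unnormalised) trace. It is used only where the trace is real, or where
just its real part matters. -/
def rtr (X : Matrix ι ι ℂ) : ℝ := X.trace.re

/-- The squared (unnormalised) Hilbert–Schmidt norm of a rectangular matrix. -/
def hsq (X : Matrix ι κ ℂ) : ℝ := ∑ i, ∑ j, ‖X i j‖ ^ 2

lemma rtr_add (X Y : Matrix ι ι ℂ) : rtr (X + Y) = rtr X + rtr Y := by simp [rtr]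

lemma rtr_sub (X Y : Matrix ι ι ℂ) : rtr (X - Y) = rtr X - rtr Y := by simp [rtr]

lemma rtr_sum {σ : Type} (s : Finset σ) (X : σ → Matrix ι ι ℂ) :
    rtr (∑ a ∈ s, X a) = ∑ a ∈ s, rtr (X a) := by
  simp [rtr, trace_sum]

lemma rtr_smul (c : ℝ) (X : Matrix ι ι ℂ) : rtr ((c : ℂ) • X) = c * rtr X := by simp [rtr]

lemma rtr_mul_comm (X : Matrix ι κ ℂ) (Y : Matrix κ ι ℂ) : rtr (X * Y) = rtr (Y * X) := by
  rw [rtr, rtr, trace_mul_comm]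

lemma rtr_conjTranspose (X : Matrix ι ι ℂ) : rtr Xᴴ = rtr X := by
  simp [rtr, trace_conjTranspose]

lemma rtr_mul_eq_sum (X : Matrix ι κ ℂ) (Y : Matrix κ ι ℂ) :
    rtr (X * Y) = ∑ i, ∑ j, (X i j * Y j i).re := by
  simp only [rtr, trace, diag_apply, mul_apply, Complex.re_sum]

lemma hsq_nonneg (X : Matrix ι κ ℂ) : 0 ≤ hsq X := by unfold hsq; positivity

lemma hsq_eq_rtr (X : Matrix ι κ ℂ) : hsq X = rtr (Xᴴ * X) := by
  rw [rtr_mul_comm, rtr_mul_eq_sum]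
  refine Finset.sum_congr rfl fun i _ => Finset.sum_congr rfl fun j _ => ?_
  rw [conjTranspose_apply, Complex.star_def, Complex.mul_conj, Complex.ofReal_re,
    Complex.normSq_eq_norm_sq]

lemma hsq_conjTranspose (X : Matrix ι κ ℂ) : hsq Xᴴ = hsq X := by
  rw [hsq_eq_rtr, hsq_eq_rtr, conjTranspose_conjTranspose, rtr_mul_comm]

/-- The Cauchy–Schwarz inequality for the Hilbert–Schmidt norm. -/
lemma abs_rtr_mul_le (X : Matrix ι κ ℂ) (Y : Matrix κ ι ℂ) :
    |rtr (X * Y)| ≤ √(hsq X) * √(hsq Y) := by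
  have h1 : |rtr (X * Y)| ≤ ∑ p : ι × κ, ‖X p.1 p.2‖ * ‖Y p.2 p.1‖ := by
    rw [rtr_mul_eq_sum, ← Fintype.sum_prod_type' (f := fun i j => (X i j * Y j i).re)]
    refine (Finset.abs_sum_le_sum_abs _ _).trans (Finset.sum_le_sum fun p _ => ?_)
    rw [← norm_mul]
    exact Complex.abs_re_le_norm _
  refine h1.trans ((Real.sum_mul_le_sqrt_mul_sqrt _ _ _).trans_eq ?_)
  rw [hsq, ← hsq_conjTranspose Y, hsq, Fintype.sum_prod_type, Fintype.sum_prod_type]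
  simp

lemma posSemidef_exists [DecidableEq ι] {A : Matrix ι ι ℂ} (hA : A.PosSemidef) :
    ∃ D : Matrix ι ι ℂ, A = Dᴴ * D := by
  open scoped MatrixOrder in
  exact CStarAlgebra.nonneg_iff_eq_star_mul_self.mp hA.nonneg

lemma rtr_mul_nonneg [DecidableEq ι] {A B : Matrix ι ι ℂ} (hA : A.PosSemidef)
    (hB : B.PosSemidef) : 0 ≤ rtr (A * B) := by
  obtain ⟨D, rfl⟩ := posSemidef_exists hA
  rw [Matrix.mul_assoc, rtr_mul_comm]
  exact (Complex.nonneg_iff.mp (hB.mul_mul_conjTranspose_same D).trace_nonneg).1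

lemma POVM.one_sub [DecidableEq ι] {X : Fin n → Matrix ι ι ℂ} (h : POVM X) (a : Fin n) :
    (1 - X a).PosSemidef := by
  have : 1 - X a = ∑ b ∈ Finset.univ.erase a, X b := by
    rw [← h.2, ← Finset.add_sum_erase _ _ (Finset.mem_univ a), add_sub_cancel_left]
  rw [this]
  exact posSemidef_sum _ fun b _ => h.1 b

/-- A POVM element satisfies `X² ≤ X`, because
`X - X² = X (1 - X) X + (1 - X) X (1 - X)`. -/
lemma POVM.sub_sq [DecidableEq ι] {X : Fin n → Matrix ι ι ℂ} (h : POVM X) (a : Fin n) :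
    (X a - X a * X a).PosSemidef := by
  have h1 := (h.one_sub a).conjTranspose_mul_mul_same (X a)
  have h2 := (h.1 a).conjTranspose_mul_mul_same (1 - X a)
  rw [(h.1 a).isHermitian.eq] at h1
  rw [(h.one_sub a).isHermitian.eq] at h2
  convert h1.add h2 using 1
  noncomm_ring

lemma hsq_of_isHermitian {X : Matrix ι ι ℂ} (h : X.IsHermitian) : hsq X = rtr (X * X) := by
  rw [hsq_eq_rtr, h.eq]

lemma POVM.hsq_le [DecidableEq ι] {X : Fin n → Matrix ι ι ℂ} (h : POVM X) (a : Fin n) :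
    hsq (X a) ≤ rtr (X a) := by
  rw [hsq_of_isHermitian (h.1 a).isHermitian]
  have := (Complex.nonneg_iff.mp (h.sub_sq a).trace_nonneg).1
  change 0 ≤ rtr _ at this
  rw [rtr_sub] at this
  linarith

lemma rtr_one [DecidableEq ι] : rtr (1 : Matrix ι ι ℂ) = Fintype.card ι := by
  simp [rtr]

lemma exists_diag [DecidableEq ι] {Z : Matrix ι ι ℂ} (hZ : Z.IsHermitian) :
    ∃ (U : Matrix ι ι ℂ) (z : ι → ℝ), Uᴴ * U = 1 ∧ U * Uᴴ = 1 ∧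
      Uᴴ * Z * U = diagonal (fun i => (z i : ℂ)) := by
  refine ⟨hZ.eigenvectorUnitary, hZ.eigenvalues, ?_, ?_, ?_⟩
  · rw [← star_eq_conjTranspose]; exact Unitary.coe_star_mul_self _
  · rw [← star_eq_conjTranspose]; exact Unitary.coe_mul_star_self _
  · have := hZ.conjStarAlgAut_star_eigenvectorUnitary
    rw [Unitary.conjStarAlgAut_apply] at this
    simpa [star_eq_conjTranspose, Function.comp_def] using this

lemma POVM.conj [DecidableEq ι] {X : Fin n → Matrix ι ι ℂ} (h : POVM X) {U : Matrix ι ι ℂ}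
    (hU : Uᴴ * U = 1) : POVM (fun a => Uᴴ * X a * U) := by
  refine ⟨fun a => (h.1 a).conjTranspose_mul_mul_same U, ?_⟩
  rw [← Finset.sum_mul, ← Finset.mul_sum, h.2, Matrix.mul_one, hU]

lemma rtr_conj [DecidableEq ι] {U : Matrix ι ι ℂ} (hU : U * Uᴴ = 1) (X : Matrix ι ι ℂ) :
    rtr (Uᴴ * X * U) = rtr X := by
  rw [rtr_mul_comm, ← Matrix.mul_assoc, hU, Matrix.one_mul]

lemma conj_mul_conj [DecidableEq ι] {U : Matrix ι ι ℂ} (hU : U * Uᴴ = 1)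
    (X Y : Matrix ι ι ℂ) : (Uᴴ * X * U) * (Uᴴ * Y * U) = Uᴴ * (X * Y) * U := by
  calc _ = Uᴴ * X * (U * Uᴴ) * Y * U := by noncomm_ring
    _ = _ := by rw [hU]; noncomm_ring

lemma hsq_conj [DecidableEq ι] {U : Matrix ι ι ℂ} (hU : U * Uᴴ = 1) (X : Matrix ι ι ℂ) :
    hsq (Uᴴ * X * U) = hsq X := by
  have : (Uᴴ * X * U)ᴴ = Uᴴ * Xᴴ * U := by
    simp [conjTranspose_mul, Matrix.mul_assoc]
  rw [hsq_eq_rtr, this, conj_mul_conj hU, rtr_conj hU, hsq_eq_rtr]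

/-! ### Rounding a nearly projective POVM to a PVM -/

/-- A projection-valued measure: pairwise orthogonal self-adjoint projections summing to `1`. -/
def PVM [DecidableEq ι] (P : Fin n → Matrix ι ι ℂ) : Prop :=
  (∀ a, (P a).IsHermitian) ∧ (∀ a b, P a * P b = if a = b then P a else 0) ∧ ∑ a, P a = 1

lemma PVM.povm [DecidableEq ι] {P : Fin n → Matrix ι ι ℂ} (h : PVM P) : POVM P := by
  refine ⟨fun a => ?_, h.2.2⟩
  have : P a = (P a)ᴴ * P a := by rw [(h.1 a).eq, h.2.1]; simp
  rw [this]
  exact posSemidef_conjTranspose_mul_self _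

lemma PVM.conj [DecidableEq ι] {P : Fin n → Matrix ι ι ℂ} (h : PVM P) {U : Matrix ι ι ℂ}
    (hU : Uᴴ * U = 1) (hU' : U * Uᴴ = 1) : PVM (fun a => Uᴴ * P a * U) := by
  refine ⟨fun a => isHermitian_conjTranspose_mul_mul _ (h.1 a), fun a b => ?_,
    (h.povm.conj hU).2⟩
  rw [conj_mul_conj hU', h.2.1]
  split_ifs <;> simp

/-- The case of `rounding` in which `Z = ∑ a, a • X a` is the diagonal matrix with entries `z i`. The
diagonal entries `μ i a = X a i i` form, for each `i`, a probability distribution with mean `z i`.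
Since `∑ i, z i ^ 2 = Tr Z² ≥ ∑ a, a ^ 2 * Tr (X a)²`, the variances of these distributions sum to at
most `n ^ 2` times the projectivity defect. By Chebyshev, `μ i` is therefore mostly concentrated at
an outcome `c i` nearest to `z i`, and the PVM is given by the coordinate projections onto the fibres
of `c`. -/
lemma rounding_diag [DecidableEq ι] (hn : 0 < n) {X : Fin n → Matrix ι ι ℂ} (h : POVM X)
    (z : ι → ℝ) (hz : ∑ a : Fin n, (((a : ℕ) : ℝ) : ℂ) • X a = diagonal (fun i => (z i : ℂ))) :
    ∃ P : Fin n → Matrix ι ι ℂ, PVM P ∧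
      ∑ a, hsq (X a - P a) ≤ 8 * n ^ 2 * ∑ a, (rtr (X a) - hsq (X a)) := by
  have : Nonempty (Fin n) := ⟨⟨0, hn⟩⟩
  have hc : ∀ i, ∃ c : Fin n, ∀ a : Fin n, |((c : ℕ) : ℝ) - z i| ≤ |((a : ℕ) : ℝ) - z i| := by
    intro i
    obtain ⟨c, -, hc⟩ := Finset.exists_min_image Finset.univ
      (fun a : Fin n => |((a : ℕ) : ℝ) - z i|) Finset.univ_nonempty
    exact ⟨c, fun a => hc a (Finset.mem_univ a)⟩
  choose c hc using hc
  -- an index other than the closest one is at distance at least `1/2`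
  have hfar : ∀ i a, a ≠ c i → 1 ≤ 4 * (((a : ℕ) : ℝ) - z i) ^ 2 := by
    intro i a ha
    have h1 : (1 : ℝ) ≤ |((a : ℕ) : ℝ) - ((c i : ℕ) : ℝ)| := by
      have : ((a : ℕ) : ℤ) - ((c i : ℕ) : ℤ) ≠ 0 := by
        intro h0; exact ha (Fin.ext (by omega))
      have := Int.one_le_abs this
      exact_mod_cast this
    have h2 := abs_sub_le ((a : ℕ) : ℝ) (z i) ((c i : ℕ) : ℝ)
    rw [abs_sub_comm (z i)] at h2
    have h3 := hc i a
    have h4 : 1 ≤ 2 * |((a : ℕ) : ℝ) - z i| := by linarith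
    rw [← sq_abs]
    nlinarith
  set μ : ι → Fin n → ℝ := fun i a => (X a i i).re with hμ
  have hμ0 : ∀ i a, 0 ≤ μ i a := fun i a => (Complex.nonneg_iff.mp (h.1 a).diag_nonneg).1
  have hμ1 : ∀ i, ∑ a, μ i a = 1 := by
    intro i
    have := congrFun (congrFun h.2 i) i
    rw [Matrix.sum_apply, one_apply_eq] at this
    simpa [hμ] using congrArg Complex.re this
  have hμz : ∀ i, ∑ a : Fin n, ((a : ℕ) : ℝ) * μ i a = z i := by
    intro i
    have := congrFun (congrFun hz i) i
    rw [Matrix.sum_apply, diagonal_apply_eq] at this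
    simpa [hμ] using congrArg Complex.re this
  have htr : ∀ a, rtr (X a) = ∑ i, μ i a := by
    intro a; simp [rtr, trace, hμ]
  have hz2 : ∑ i, z i ^ 2 = ∑ a : Fin n, ∑ b : Fin n,
      ((a : ℕ) : ℝ) * ((b : ℕ) : ℝ) * rtr (X a * X b) := by
    have h1 : rtr (diagonal (fun i => (z i : ℂ)) * diagonal (fun i => (z i : ℂ))) =
        ∑ i, z i ^ 2 := by
      rw [diagonal_mul_diagonal, rtr, trace_diagonal]
      simp [pow_two]
    rw [← h1, ← hz, Finset.sum_mul, rtr_sum]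
    refine Finset.sum_congr rfl fun a _ => ?_
    rw [Finset.mul_sum, rtr_sum]
    refine Finset.sum_congr rfl fun b _ => ?_
    rw [smul_mul_smul_comm, ← Complex.ofReal_mul, rtr_smul]
  have hz3 : ∑ a : Fin n, ((a : ℕ) : ℝ) ^ 2 * hsq (X a) ≤ ∑ i, z i ^ 2 := by
    rw [hz2]
    refine Finset.sum_le_sum fun a _ => ?_
    rw [hsq_of_isHermitian (h.1 a).isHermitian, pow_two]
    refine Finset.single_le_sum (f := fun b : Fin n =>
      ((a : ℕ) : ℝ) * ((b : ℕ) : ℝ) * rtr (X a * X b)) (fun b _ => ?_) (Finset.mem_univ a)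
    have := rtr_mul_nonneg (h.1 a) (h.1 b)
    positivity
  have hvar : ∑ i, ∑ a : Fin n, (((a : ℕ) : ℝ) - z i) ^ 2 * μ i a ≤
      n ^ 2 * ∑ a, (rtr (X a) - hsq (X a)) := by
    have h1 : ∀ i, ∑ a : Fin n, (((a : ℕ) : ℝ) - z i) ^ 2 * μ i a =
        ∑ a : Fin n, ((a : ℕ) : ℝ) ^ 2 * μ i a - z i ^ 2 := by
      intro i
      have : ∀ a : Fin n, (((a : ℕ) : ℝ) - z i) ^ 2 * μ i a =
        ((a : ℕ) : ℝ) ^ 2 * μ i a - 2 * z i * (((a : ℕ) : ℝ) * μ i a) + z i ^ 2 * μ i a := by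
        intro a; ring
      simp only [this]
      rw [Finset.sum_add_distrib, Finset.sum_sub_distrib, ← Finset.mul_sum, ← Finset.mul_sum,
        hμz, hμ1]
      ring
    simp only [h1]
    rw [Finset.sum_sub_distrib, Finset.sum_comm]
    simp only [← Finset.mul_sum, ← htr]
    have h2 : ∑ a : Fin n, ((a : ℕ) : ℝ) ^ 2 * (rtr (X a) - hsq (X a)) ≤
        n ^ 2 * ∑ a, (rtr (X a) - hsq (X a)) := by
      rw [Finset.mul_sum]
      refine Finset.sum_le_sum fun a _ => ?_
      have h4 := h.hsq_le a
      have h5 : ((a : ℕ) : ℝ) ≤ n := by exact_mod_cast a.2.le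
      refine mul_le_mul_of_nonneg_right ?_ (by linarith)
      gcongr
    simp only [mul_sub, Finset.sum_sub_distrib] at h2 ⊢
    linarith
  have hmass : ∑ i, (1 - μ i (c i)) ≤ 4 * (n ^ 2 * ∑ a, (rtr (X a) - hsq (X a))) := by
    refine le_trans ?_ (mul_le_mul_of_nonneg_left hvar (by norm_num))
    rw [Finset.mul_sum]
    refine Finset.sum_le_sum fun i _ => ?_
    rw [← hμ1 i, ← Finset.add_sum_erase _ _ (Finset.mem_univ (c i)), add_sub_cancel_left,
      Finset.mul_sum, ← Finset.add_sum_erase Finset.univ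
        (fun a : Fin n => 4 * ((((a : ℕ) : ℝ) - z i) ^ 2 * μ i a)) (Finset.mem_univ (c i))]
    have h0 : 0 ≤ 4 * ((((c i : ℕ) : ℝ) - z i) ^ 2 * μ i (c i)) := by
      have := hμ0 i (c i); positivity
    refine le_trans (Finset.sum_le_sum fun a ha => ?_) (le_add_of_nonneg_left h0)
    have := hfar i a (Finset.ne_of_mem_erase ha)
    nlinarith [hμ0 i a]
  refine ⟨fun a => diagonal fun i => if c i = a then 1 else 0, ⟨fun a => ?_, fun a b => ?_, ?_⟩, ?_⟩
  · rw [isHermitian_diagonal_iff]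
    intro i; split_ifs <;> simp [IsSelfAdjoint]
  · rw [diagonal_mul_diagonal]
    split_ifs with hab
    · subst hab; congr 1; ext i; split_ifs <;> simp
    · rw [← diagonal_zero]; congr 1; ext i
      by_cases h1 : c i = a
      · have : c i ≠ b := fun h2 => hab (h1.symm.trans h2)
        simp [this]
      · simp [h1]
  · ext i j
    rw [Matrix.sum_apply]
    by_cases hij : i = j
    · subst hij; simp
    · simp [hij]
  · have hP : ∀ a, hsq (X a - diagonal fun i => if c i = a then (1 : ℂ) else 0) =
        hsq (X a) + ∑ i, (if c i = a then 1 else 0) - 2 * ∑ i, (if c i = a then μ i a else 0) := by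
      intro a
      have hPh : (diagonal fun i => if c i = a then (1 : ℂ) else 0).IsHermitian := by
        rw [isHermitian_diagonal_iff]
        intro i; split_ifs <;> simp [IsSelfAdjoint]
      rw [hsq_of_isHermitian ((h.1 a).isHermitian.sub hPh),
        hsq_of_isHermitian (h.1 a).isHermitian, mul_sub, sub_mul, sub_mul, rtr_sub, rtr_sub,
        rtr_sub, rtr_mul_comm (diagonal _) (X a)]
      have e1 : rtr (X a * diagonal fun i => if c i = a then (1 : ℂ) else 0) =
          ∑ i, (if c i = a then μ i a else 0) := by
        simp only [rtr, trace, diag_apply, mul_diagonal, Complex.re_sum]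
        refine Finset.sum_congr rfl fun i _ => ?_
        split_ifs <;> simp [hμ]
      have e2 : rtr ((diagonal fun i => if c i = a then (1 : ℂ) else 0) *
          diagonal fun i => if c i = a then (1 : ℂ) else 0) =
          ∑ i, (if c i = a then 1 else 0) := by
        simp only [rtr, trace, diag_apply, diagonal_mul_diagonal, diagonal_apply_eq,
          Complex.re_sum]
        refine Finset.sum_congr rfl fun i _ => ?_
        split_ifs <;> simp
      rw [e1, e2]; ring
    simp only [hP]
    rw [Finset.sum_sub_distrib, Finset.sum_add_distrib, ← Finset.mul_sum, Finset.sum_comm,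
      Finset.sum_comm (f := fun a i => if c i = a then μ i a else 0)]
    simp only [Finset.sum_ite_eq, Finset.mem_univ, if_true]
    have h1 : ∑ a, hsq (X a) ≤ ∑ i : ι, (1 : ℝ) := by
      refine (Finset.sum_le_sum fun a _ => h.hsq_le a).trans_eq ?_
      simp only [htr]
      rw [Finset.sum_comm]
      simp only [hμ1]
    rw [Finset.sum_sub_distrib] at hmass
    linarith

/-- A POVM with small projectivity defect `∑ a, Tr (X a - (X a)²)` is close to a PVM in
Hilbert–Schmidt norm, with a constant independent of the dimension. -/
lemma rounding [DecidableEq ι] (hn : 0 < n) {X : Fin n → Matrix ι ι ℂ} (h : POVM X) :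
    ∃ P : Fin n → Matrix ι ι ℂ, PVM P ∧
      ∑ a, hsq (X a - P a) ≤ 8 * n ^ 2 * ∑ a, (rtr (X a) - hsq (X a)) := by
  have hZ : (∑ a : Fin n, (((a : ℕ) : ℝ) : ℂ) • X a).IsHermitian := by
    refine (posSemidef_sum _ fun a _ => (h.1 a).smul ?_).isHermitian
    exact_mod_cast Nat.zero_le _
  obtain ⟨U, z, hU, hU', hd⟩ := exists_diag hZ
  have hd' : ∑ a : Fin n, (((a : ℕ) : ℝ) : ℂ) • (Uᴴ * X a * U) =
      diagonal (fun i => (z i : ℂ)) := by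
    rw [← hd, Finset.mul_sum, Finset.sum_mul]
    simp
  obtain ⟨P, hP, hb⟩ := rounding_diag hn (h.conj hU) z hd'
  have hU2 : Uᴴᴴ * Uᴴ = 1 := by rw [conjTranspose_conjTranspose, hU']
  have hU3 : Uᴴ * Uᴴᴴ = 1 := by rw [conjTranspose_conjTranspose, hU]
  refine ⟨fun a => Uᴴᴴ * P a * Uᴴ, hP.conj hU2 hU3, ?_⟩
  have e : ∀ a, hsq (X a - Uᴴᴴ * P a * Uᴴ) = hsq (Uᴴ * X a * U - P a) := by
    intro a
    rw [← hsq_conj hU' (X a - _)]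
    congr 1
    rw [conjTranspose_conjTranspose, mul_sub, sub_mul]
    congr 1
    calc _ = (Uᴴ * U) * P a * (Uᴴ * U) := by noncomm_ring
      _ = P a := by rw [hU]; simp
  simp only [e]
  refine hb.trans_eq ?_
  simp only [rtr_conj hU', hsq_conj hU', Finset.sum_sub_distrib]

/-! ### Realising a weight by a normalised trace -/

/-- The index set `{(i, t) | t < m i}`: the region below the graph of `m`, in `N` layers. For `m ≤ N`
there are `m i` points above `i`. -/
abbrev Lev (N : ℕ) (m : ι → ℕ) : Type := {p : ι × Fin N // (p.2 : ℕ) < m p.1}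

/-- The compression of the amplification `X ⊗ 1_N` to the basis vectors indexed by `Lev N m`. It is
block diagonal over the layers `t`, the block `t` being the principal submatrix of `X` on
`{i | t < m i}`. -/
def amp [DecidableEq ι] (N : ℕ) (m : ι → ℕ) (X : Matrix ι ι ℂ) :
    Matrix (Lev N m) (Lev N m) ℂ :=
  (X ⊗ₖ (1 : Matrix (Fin N) (Fin N) ℂ)).submatrix Subtype.val Subtype.val

lemma amp_apply [DecidableEq ι] (N : ℕ) (m : ι → ℕ) (X : Matrix ι ι ℂ) (p q : Lev N m) :
    amp N m X p q = X p.1.1 q.1.1 * (1 : Matrix (Fin N) (Fin N) ℂ) p.1.2 q.1.2 := rfl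

lemma POVM.amp [DecidableEq ι] {X : Fin n → Matrix ι ι ℂ} (h : POVM X) (N : ℕ) (m : ι → ℕ) :
    POVM (fun a => amp N m (X a)) := by
  refine ⟨fun a => ((h.1 a).kronecker PosSemidef.one).submatrix _, ?_⟩
  ext p q
  have := congrFun (congrFun h.2 p.1.1) q.1.1
  rw [Matrix.sum_apply] at this ⊢
  simp only [amp_apply]
  rw [← Finset.sum_mul, this]
  simp only [one_apply, Subtype.ext_iff, Prod.ext_iff]
  split_ifs <;> simp_all

lemma sum_lev (N : ℕ) (m : ι → ℕ) (f : ι × Fin N → ℝ) :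
    ∑ p : Lev N m, f p.1 = ∑ i, ∑ t : Fin N, if (t : ℕ) < m i then f (i, t) else 0 := by
  rw [← Fintype.sum_prod_type' (f := fun i (t : Fin N) => if (t : ℕ) < m i then f (i, t) else 0),
    ← Finset.sum_filter]
  exact (Finset.sum_subtype _ (by simp) _).symm

lemma sum_ite_lt {N l : ℕ} (hl : l ≤ N) (c : ℝ) :
    (∑ t : Fin N, if (t : ℕ) < l then c else 0) = l * c := by
  rw [Fin.sum_univ_eq_sum_range (fun t => if t < l then c else 0), ← Finset.sum_filter,
    Finset.sum_const, nsmul_eq_mul]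
  congr 2
  have : (Finset.range N).filter (fun t => t < l) = Finset.range l := by
    ext t; simp; omega
  rw [this, Finset.card_range]

lemma card_lev {N : ℕ} {m : ι → ℕ} (hm : ∀ i, m i ≤ N) :
    (Fintype.card (Lev N m) : ℝ) = ∑ i, (m i : ℝ) := by
  have := sum_lev N m (fun _ => (1 : ℝ))
  simp only [sum_ite_lt (hm _), mul_one] at this
  simpa using this

lemma rtr_amp [DecidableEq ι] {N : ℕ} {m : ι → ℕ} (hm : ∀ i, m i ≤ N) (X : Matrix ι ι ℂ) :
    rtr (amp N m X) = ∑ i, (m i : ℝ) * (X i i).re := by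
  simp only [rtr, trace, diag_apply, amp_apply, one_apply_eq, mul_one,
    Complex.re_sum]
  rw [sum_lev N m (fun p => (X p.1 p.1).re)]
  simp only [sum_ite_lt (hm _)]

/-- The points `i` and `j` lie together in exactly `min (m i) (m j)` layers, which is therefore the
weight of `X i j * Y j i` in the trace of the product of the two compressions. -/
lemma rtr_amp_mul [DecidableEq ι] {N : ℕ} {m : ι → ℕ} (hm : ∀ i, m i ≤ N) (X Y : Matrix ι ι ℂ) :
    rtr (amp N m X * amp N m Y) =
      ∑ i, ∑ j, (min (m i) (m j) : ℕ) * (X i j * Y j i).re := by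
  rw [rtr_mul_eq_sum]
  simp only [amp_apply]
  rw [sum_lev N m (fun p => ∑ q : Lev N m, (X p.1 q.1.1 * (1 : Matrix (Fin N) (Fin N) ℂ) p.2 q.1.2 *
    (Y q.1.1 p.1 * (1 : Matrix (Fin N) (Fin N) ℂ) q.1.2 p.2)).re)]
  refine Finset.sum_congr rfl fun i _ => ?_
  have : ∀ t : Fin N, ∑ q : Lev N m, (X i q.1.1 * (1 : Matrix (Fin N) (Fin N) ℂ) t q.1.2 *
      (Y q.1.1 i * (1 : Matrix (Fin N) (Fin N) ℂ) q.1.2 t)).re =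
      ∑ j, if (t : ℕ) < m j then (X i j * Y j i).re else 0 := by
    intro t
    rw [sum_lev N m (fun q => (X i q.1 * (1 : Matrix (Fin N) (Fin N) ℂ) t q.2 *
      (Y q.1 i * (1 : Matrix (Fin N) (Fin N) ℂ) q.2 t)).re)]
    refine Finset.sum_congr rfl fun j _ => ?_
    rw [Finset.sum_eq_single t]
    · simp
    · intro s _ hs
      simp [one_apply_ne hs, one_apply_ne hs.symm]
    · simp
  simp only [this]
  have h2 : ∀ t : Fin N, (if (t : ℕ) < m i then
      (∑ j, if (t : ℕ) < m j then (X i j * Y j i).re else 0) else 0) =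
      ∑ j, if (t : ℕ) < min (m i) (m j) then (X i j * Y j i).re else 0 := by
    intro t
    by_cases h : (t : ℕ) < m i <;> simp [h]
  simp only [h2]
  rw [Finset.sum_comm]
  exact Finset.sum_congr rfl fun j _ => sum_ite_lt (min_le_of_left_le (hm i)) _

open Filter Topology in
/-- A probability vector is the limit of the rational probability vectors proportional to
`⌈N * w i⌉`. Rounding up makes the denominator positive as soon as `N` is. -/
lemma tendsto_weights {w : ι → ℝ} (hw : ∀ i, 0 ≤ w i) (hw1 : ∑ i, w i = 1) :
    ∀ i, Tendsto (fun N : ℕ => (⌈N * w i⌉₊ : ℝ) / ∑ j, (⌈N * w j⌉₊ : ℝ)) atTop (𝓝 (w i)) := by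
  have h1 : ∀ i, Tendsto (fun N : ℕ => (⌈N * w i⌉₊ : ℝ) / N) atTop (𝓝 (w i)) := by
    intro i
    have := (tendsto_nat_ceil_mul_div_atTop (hw i)).comp (tendsto_natCast_atTop_atTop (R := ℝ))
    refine this.congr fun N => ?_
    simp [mul_comm]
  intro i
  have h2 : Tendsto (fun N : ℕ => ∑ j, (⌈N * w j⌉₊ : ℝ) / N) atTop (𝓝 1) := by
    rw [← hw1]; exact tendsto_finsetSum _ fun j _ => h1 j
  have h3 := (h1 i).div h2 one_ne_zero
  rw [div_one] at h3
  refine h3.congr' ?_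
  filter_upwards [eventually_gt_atTop 0] with N hN
  have : (N : ℝ) ≠ 0 := by positivity
  simp only [Pi.div_apply, ← Finset.sum_div]
  field_simp

open Filter Topology in
/-- POVMs on `ℂ^ι` with a probability weight `w` on `ι` can be replaced by POVMs on another
finite-dimensional space for which the normalised trace of a product is, up to `η`, the sum weighted
by `min (w i) (w j)`. -/
lemma exists_tracial [DecidableEq ι] {X : Fin k → Fin n → Matrix ι ι ℂ} (h : ∀ x, POVM (X x))
    {w : ι → ℝ} (hw : ∀ i, 0 ≤ w i) (hw1 : ∑ i, w i = 1) {η : ℝ} (hη : 0 < η) :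
    ∃ (κ : Type) (_ : Fintype κ) (_ : DecidableEq κ) (_ : Nonempty κ)
      (Y : Fin k → Fin n → Matrix κ κ ℂ), (∀ x, POVM (Y x)) ∧
      (∀ x y a b, |rtr (Y x a * Y y b) / Fintype.card κ -
        ∑ i, ∑ j, min (w i) (w j) * (X x a i j * X y b j i).re| < η) ∧
      (∀ x a, |rtr (Y x a) / Fintype.card κ - ∑ i, w i * (X x a i i).re| < η) := by
  set m : ℕ → ι → ℕ := fun N i => ⌈N * w i⌉₊ with hmdef
  have ht := tendsto_weights hw hw1
  have hwle : ∀ i, w i ≤ 1 := fun i => hw1 ▸ Finset.single_le_sum (fun j _ => hw j)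
    (Finset.mem_univ i)
  have hm : ∀ N i, m N i ≤ N := fun N i => by
    refine Nat.ceil_le.mpr ?_
    exact mul_le_of_le_one_right (Nat.cast_nonneg N) (hwle i)
  have t1 : ∀ x y a b, Tendsto (fun N => rtr (amp N (m N) (X x a) * amp N (m N) (X y b)) /
      Fintype.card (Lev N (m N))) atTop
      (𝓝 (∑ i, ∑ j, min (w i) (w j) * (X x a i j * X y b j i).re)) := by
    intro x y a b
    have := tendsto_finsetSum Finset.univ fun i (_ : i ∈ Finset.univ) =>
      tendsto_finsetSum Finset.univ fun j (_ : j ∈ Finset.univ) =>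
      ((ht i).min (ht j)).mul_const (X x a i j * X y b j i).re
    refine this.congr fun N => ?_
    rw [rtr_amp_mul (hm N), card_lev (hm N), Finset.sum_div]
    refine Finset.sum_congr rfl fun i _ => ?_
    rw [Finset.sum_div]
    refine Finset.sum_congr rfl fun j _ => ?_
    rw [Nat.cast_min, min_div_div_right (by positivity)]
    ring
  have t2 : ∀ x a, Tendsto (fun N => rtr (amp N (m N) (X x a)) /
      Fintype.card (Lev N (m N))) atTop (𝓝 (∑ i, w i * (X x a i i).re)) := by
    intro x a
    have := tendsto_finsetSum Finset.univ fun i (_ : i ∈ Finset.univ) =>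
      (ht i).mul_const (X x a i i).re
    refine this.congr fun N => ?_
    rw [rtr_amp (hm N), card_lev (hm N), Finset.sum_div]
    exact Finset.sum_congr rfl fun i _ => by ring
  have e1 : ∀ᶠ N in atTop, ∀ x y a b,
      |rtr (amp N (m N) (X x a) * amp N (m N) (X y b)) / Fintype.card (Lev N (m N)) -
        ∑ i, ∑ j, min (w i) (w j) * (X x a i j * X y b j i).re| < η := by
    simp only [eventually_all]
    exact fun x y a b => (Metric.tendsto_nhds.mp (t1 x y a b)) η hη
  have e2 : ∀ᶠ N in atTop, ∀ x a, |rtr (amp N (m N) (X x a)) / Fintype.card (Lev N (m N)) -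
        ∑ i, w i * (X x a i i).re| < η := by
    simp only [eventually_all]
    exact fun x a => (Metric.tendsto_nhds.mp (t2 x a)) η hη
  obtain ⟨N, h1, h2, hN⟩ := (e1.and (e2.and (eventually_gt_atTop 0))).exists
  have hne : Nonempty (Lev N (m N)) := by
    rw [← Fintype.card_pos_iff, ← Nat.cast_pos (α := ℝ), card_lev (hm N)]
    have : (0 : ℝ) < ∑ i, N * w i := by
      rw [← Finset.mul_sum, hw1, mul_one]; exact_mod_cast hN
    exact this.trans_le (Finset.sum_le_sum fun i _ => Nat.le_ceil _)
  exact ⟨Lev N (m N), inferInstance, inferInstance, hne, fun x a => amp N (m N) (X x a),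
    fun x => (h x).amp N (m N), h1, h2⟩

/-! ### From a bipartite state to a weight -/

section blocks

variable {α β : Type} [Fintype α] [Fintype β] [DecidableEq α] [DecidableEq β]

lemma POVM.fromBlocks {A : Fin n → Matrix α α ℂ} {B : Fin n → Matrix β β ℂ} (hA : POVM A)
    (hB : POVM B) : POVM (fun a => fromBlocks (A a) 0 0 (B a)) := by
  constructor
  · intro a
    obtain ⟨C, hC⟩ := posSemidef_exists (hA.1 a)
    obtain ⟨D, hD⟩ := posSemidef_exists (hB.1 a)
    have : Matrix.fromBlocks (A a) 0 0 (B a) =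
        (Matrix.fromBlocks C 0 0 D)ᴴ * Matrix.fromBlocks C 0 0 D := by
      rw [fromBlocks_conjTranspose, fromBlocks_multiply, hC, hD]
      simp
    beta_reduce
    rw [this]
    exact posSemidef_conjTranspose_mul_self _
  · rw [← fromBlocks_one, ← hA.2, ← hB.2]
    ext (i | i) (j | j) <;> simp [Matrix.sum_apply]

lemma rtr_fromBlocks (A : Matrix α α ℂ) (B : Matrix α β ℂ) (C : Matrix β α ℂ)
    (D : Matrix β β ℂ) : rtr (fromBlocks A B C D) = rtr A + rtr D := by
  simp [rtr, trace]

/-- Monotonicity of `Tr (· R)` for `R ≥ 0`, applied to `A² ≤ A`. -/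
lemma POVM.rtr_sq_le {A : Fin n → Matrix α α ℂ} (hA : POVM A) (a : Fin n)
    {R : Matrix α α ℂ} (hR : R.PosSemidef) : rtr (A a * A a * R) ≤ rtr (A a * R) := by
  have := rtr_mul_nonneg (hA.sub_sq a) hR
  rw [sub_mul, rtr_sub] at this
  linarith

lemma POVM.rtr_le {A : Fin n → Matrix α α ℂ} (hA : POVM A) (a : Fin n)
    {R : Matrix α α ℂ} (hR : R.PosSemidef) : rtr (A a * R) ≤ rtr R := by
  have := rtr_mul_nonneg (hA.one_sub a) hR
  rw [sub_mul, rtr_sub, Matrix.one_mul] at this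
  linarith

lemma POVM.sum_rtr {A : Fin n → Matrix α α ℂ} (hA : POVM A) (R : Matrix α α ℂ) :
    ∑ a, rtr (A a * R) = rtr R := by
  rw [← rtr_sum, ← Finset.sum_mul, hA.2, Matrix.one_mul]

/-- Expansion of the square that measures how far `K` is from intertwining `A` and `B`. The cross
term `Tr (A K B Kᴴ)` is the quantum correlation of the outcomes `A` and `Bᵀ` in the state with
coefficient matrix `K`. -/
lemma hsq_comm_eq {A : Matrix α α ℂ} {B : Matrix β β ℂ} (hA : A.IsHermitian)
    (hB : B.IsHermitian) (K : Matrix α β ℂ) :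
    hsq (A * K - K * B) = rtr (A * A * (K * Kᴴ)) + rtr (B * B * (Kᴴ * K)) -
      2 * rtr (A * K * B * Kᴴ) := by
  have e1 : rtr (Kᴴ * A * (A * K)) = rtr (A * A * (K * Kᴴ)) := by
    rw [Matrix.mul_assoc, rtr_mul_comm]; simp only [Matrix.mul_assoc]
  have e2 : rtr (Kᴴ * A * (K * B)) = rtr (A * K * B * Kᴴ) := by
    rw [Matrix.mul_assoc, rtr_mul_comm]; simp only [Matrix.mul_assoc]
  have e3 : rtr (B * Kᴴ * (A * K)) = rtr (A * K * B * Kᴴ) := by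
    rw [rtr_mul_comm]; simp only [Matrix.mul_assoc]
  have e4 : rtr (B * Kᴴ * (K * B)) = rtr (B * B * (Kᴴ * K)) := by
    rw [← Matrix.mul_assoc, rtr_mul_comm]; simp only [Matrix.mul_assoc]
  rw [hsq_eq_rtr, conjTranspose_sub, conjTranspose_mul, conjTranspose_mul, hA.eq, hB.eq,
    Matrix.sub_mul, Matrix.mul_sub, Matrix.mul_sub, rtr_sub, rtr_sub, rtr_sub, e1, e2, e3, e4]
  ring

/-- The commutator of `A ⊕ B` with the self-adjoint dilation `[[0, K], [Kᴴ, 0]]` has off-diagonal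
blocks `A K - K B` and minus its adjoint. -/
lemma hsq_block_comm {A : Matrix α α ℂ} {B : Matrix β β ℂ} (hA : A.IsHermitian)
    (hB : B.IsHermitian) (K : Matrix α β ℂ) :
    hsq (fromBlocks A 0 0 B * fromBlocks 0 K Kᴴ 0 - fromBlocks 0 K Kᴴ 0 * fromBlocks A 0 0 B) =
      2 * hsq (A * K - K * B) := by
  have h1 : fromBlocks A 0 0 B * fromBlocks 0 K Kᴴ 0 - fromBlocks 0 K Kᴴ 0 * fromBlocks A 0 0 B
      = fromBlocks 0 (A * K - K * B) (-(A * K - K * B)ᴴ) 0 := by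
    rw [conjTranspose_sub, conjTranspose_mul, conjTranspose_mul, hA.eq, hB.eq]
    simp only [fromBlocks_multiply, sub_eq_add_neg, fromBlocks_neg, fromBlocks_add]
    simp [add_comm]
  rw [h1, hsq_eq_rtr, fromBlocks_conjTranspose, fromBlocks_multiply, rtr_fromBlocks]
  simp only [conjTranspose_neg, conjTranspose_conjTranspose, conjTranspose_zero,
    Matrix.mul_zero, zero_add, add_zero, Matrix.neg_mul, Matrix.mul_neg, neg_neg]
  rw [← hsq_eq_rtr, rtr_mul_comm, ← hsq_eq_rtr]
  ring

lemma rtr_block (A : Matrix α α ℂ) (B : Matrix β β ℂ) (K : Matrix α β ℂ) :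
    rtr (fromBlocks A 0 0 B * (fromBlocks 0 K Kᴴ 0 * fromBlocks 0 K Kᴴ 0)) =
      rtr (A * (K * Kᴴ)) + rtr (B * (Kᴴ * K)) := by
  simp [fromBlocks_multiply, rtr_fromBlocks]

lemma block_mul (A A' : Matrix α α ℂ) (B B' : Matrix β β ℂ) :
    fromBlocks A 0 0 B * fromBlocks A' 0 0 B' = fromBlocks (A * A') 0 0 (B * B') := by
  simp [fromBlocks_multiply]

/-- For a nearly synchronous strategy in matrix form, the POVMs `A x ⊕ B x`, expressed in an
eigenbasis of `[[0, K], [Kᴴ, 0]]` with eigenvalues `h`, give POVMs `Y x` that nearly commute with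
`diagonal h` (third clause), are nearly projective with respect to the weight `h i ^ 2` (fourth
clause), and nearly reproduce the correlation from that weight (fifth clause). The weight has total
mass `2`, one unit from each summand of the direct sum. -/
lemma exists_weighted {A : Fin k → Fin n → Matrix α α ℂ} {B : Fin k → Fin n → Matrix β β ℂ}
    (hA : ∀ x, POVM (A x)) (hB : ∀ x, POVM (B x)) {K : Matrix α β ℂ} (hK : hsq K = 1) {δ : ℝ}
    (hδ : ∀ x, 1 - δ ≤ ∑ a, rtr (A x a * K * B x a * Kᴴ)) :
    ∃ (Y : Fin k → Fin n → Matrix (α ⊕ β) (α ⊕ β) ℂ) (h : α ⊕ β → ℝ),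
      (∀ x, POVM (Y x)) ∧ ∑ i, h i ^ 2 = 2 ∧
      (∀ x a, ∑ i, ∑ j, ‖Y x a i j‖ ^ 2 * (h i - h j) ^ 2 ≤ 4 * δ) ∧
      (∀ x, ∑ a, (∑ i, h i ^ 2 * (Y x a i i).re -
        ∑ i, ∑ j, h i ^ 2 * (Y x a i j * Y x a j i).re) ≤ 2 * δ) ∧
      (∀ x y a b, |2 * rtr (A x a * K * B y b * Kᴴ) -
        ∑ i, ∑ j, h i ^ 2 * (Y x a i j * Y y b j i).re| ≤ 2 * √(2 * δ)) := by
  have hR : (K * Kᴴ).PosSemidef := posSemidef_self_mul_conjTranspose K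
  have hS : (Kᴴ * K).PosSemidef := posSemidef_conjTranspose_mul_self K
  have hR1 : rtr (K * Kᴴ) = 1 := by rw [rtr_mul_comm, ← hsq_eq_rtr, hK]
  have hS1 : rtr (Kᴴ * K) = 1 := by rw [← hsq_eq_rtr, hK]
  have hAh := fun x a => ((hA x).1 a).isHermitian
  have hBh := fun x a => ((hB x).1 a).isHermitian
  -- `A` and `B` nearly intertwine `K`
  have hcs : ∀ x, ∑ a, hsq (A x a * K - K * B x a) ≤ 2 * δ := by
    intro x
    simp only [hsq_comm_eq (hAh x _) (hBh x _)]
    rw [Finset.sum_sub_distrib, Finset.sum_add_distrib, ← Finset.mul_sum]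
    have h1 := Finset.sum_le_sum fun a (_ : a ∈ Finset.univ) => (hA x).rtr_sq_le a hR
    have h2 := Finset.sum_le_sum fun a (_ : a ∈ Finset.univ) => (hB x).rtr_sq_le a hS
    rw [(hA x).sum_rtr, hR1] at h1
    rw [(hB x).sum_rtr, hS1] at h2
    linarith [hδ x]
  have hc : ∀ x a, hsq (A x a * K - K * B x a) ≤ 2 * δ := fun x a =>
    (Finset.single_le_sum (f := fun a => hsq (A x a * K - K * B x a))
      (fun a _ => hsq_nonneg _) (Finset.mem_univ a)).trans (hcs x)
  have hAK : ∀ x a, hsq (Kᴴ * A x a) ≤ 1 := by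
    intro x a
    rw [hsq_eq_rtr, conjTranspose_mul, conjTranspose_conjTranspose, (hAh x a).eq, ← hR1,
      rtr_mul_comm, Matrix.mul_assoc, ← Matrix.mul_assoc (A x a), rtr_mul_comm, Matrix.mul_assoc]
    exact ((hA x).rtr_sq_le a hR).trans ((hA x).rtr_le a hR)
  have hBK : ∀ x a, hsq (B x a * Kᴴ) ≤ 1 := by
    intro x a
    rw [hsq_eq_rtr, conjTranspose_mul, conjTranspose_conjTranspose, (hBh x a).eq, ← hS1,
      rtr_mul_comm, Matrix.mul_assoc, rtr_mul_comm, Matrix.mul_assoc, rtr_mul_comm,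
      Matrix.mul_assoc, Matrix.mul_assoc, rtr_mul_comm, Matrix.mul_assoc, Matrix.mul_assoc,
      ← Matrix.mul_assoc (B x a)]
    exact ((hB x).rtr_sq_le a hS).trans ((hB x).rtr_le a hS)
  set X : Fin k → Fin n → Matrix (α ⊕ β) (α ⊕ β) ℂ := fun x a => fromBlocks (A x a) 0 0 (B x a)
    with hX
  set H : Matrix (α ⊕ β) (α ⊕ β) ℂ := fromBlocks 0 K Kᴴ 0 with hH
  have hHh : H.IsHermitian := by
    rw [Matrix.IsHermitian, hH, fromBlocks_conjTranspose]; simp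
  obtain ⟨U, h, hU, hU', hd⟩ := exists_diag hHh
  set D : Matrix (α ⊕ β) (α ⊕ β) ℂ := diagonal (fun i => (h i : ℂ)) with hD
  have hDD : D * D = Uᴴ * (H * H) * U := by rw [← hd, conj_mul_conj hU']
  have hDD' : D * D = diagonal (fun i => ((h i ^ 2 : ℝ) : ℂ)) := by
    rw [hD, diagonal_mul_diagonal]; congr 1; ext i; push_cast; ring
  -- traces against `H²` in the eigenbasis
  have hT : ∀ Z, rtr (Z * (H * H)) = ∑ i, h i ^ 2 * ((Uᴴ * Z * U) i i).re := by
    intro Z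
    rw [← rtr_conj hU' (Z * (H * H)), ← conj_mul_conj hU', ← hDD, hDD', rtr, trace,
      Complex.re_sum]
    refine Finset.sum_congr rfl fun i _ => ?_
    rw [diag_apply, mul_diagonal, Complex.re_mul_ofReal, mul_comm]
  have hT2 : ∀ x y a b, ∑ i, ∑ j, h i ^ 2 *
      ((Uᴴ * X x a * U) i j * (Uᴴ * X y b * U) j i).re =
      rtr (A x a * A y b * (K * Kᴴ)) + rtr (B x a * B y b * (Kᴴ * K)) := by
    intro x y a b
    rw [← rtr_block, ← block_mul, hT]
    refine Finset.sum_congr rfl fun i _ => ?_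
    rw [← conj_mul_conj hU', mul_apply, Complex.re_sum, Finset.mul_sum]
  have hT1 : ∀ x a, ∑ i, h i ^ 2 * ((Uᴴ * X x a * U) i i).re =
      rtr (A x a * (K * Kᴴ)) + rtr (B x a * (Kᴴ * K)) := by
    intro x a
    rw [← rtr_block, hT]
  refine ⟨fun x a => Uᴴ * X x a * U, h, fun x => ((hA x).fromBlocks (hB x)).conj hU,
    ?_, ?_, ?_, ?_⟩
  · have := hT 1
    rw [← fromBlocks_one, rtr_block, Matrix.one_mul, Matrix.one_mul, hR1, hS1, fromBlocks_one,
      Matrix.mul_one, hU] at this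
    simp only [one_apply_eq, Complex.one_re, mul_one] at this
    linarith
  · intro x a
    have e : hsq (Uᴴ * X x a * U * D - D * (Uᴴ * X x a * U)) = 2 * hsq (A x a * K - K * B x a) := by
      rw [← hsq_block_comm (hAh x a) (hBh x a), ← hd, conj_mul_conj hU', conj_mul_conj hU',
        ← sub_mul, ← mul_sub, hsq_conj hU']
    have e2 : hsq (Uᴴ * X x a * U * D - D * (Uᴴ * X x a * U)) =
        ∑ i, ∑ j, ‖(Uᴴ * X x a * U) i j‖ ^ 2 * (h i - h j) ^ 2 := by
      refine Finset.sum_congr rfl fun i _ => Finset.sum_congr rfl fun j _ => ?_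
      rw [Matrix.sub_apply, hD, mul_diagonal, diagonal_mul, mul_comm (h i : ℂ), ← mul_sub,
        norm_mul, mul_pow, ← Complex.ofReal_sub, Complex.norm_real, Real.norm_eq_abs, sq_abs]
      ring
    rw [← e2, e]
    linarith [hc x a]
  · intro x
    simp only [hT1, hT2]
    have h0 := Finset.sum_nonneg fun a (_ : a ∈ Finset.univ) =>
      hsq_nonneg (A x a * K - K * B x a)
    simp only [hsq_comm_eq (hAh x _) (hBh x _)] at h0
    rw [Finset.sum_sub_distrib, Finset.sum_add_distrib, ← Finset.mul_sum] at h0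
    rw [Finset.sum_sub_distrib, Finset.sum_add_distrib, Finset.sum_add_distrib, (hA x).sum_rtr,
      (hB x).sum_rtr, hR1, hS1]
    linarith [hδ x]
  · intro x y a b
    simp only [hT2]
    -- both expressions are compared with the mixed term `Tr (A x a * K * B y b * Kᴴ)`
    have e1 : rtr (A x a * A y b * (K * Kᴴ)) - rtr (A x a * K * B y b * Kᴴ) =
        rtr ((A y b * K - K * B y b) * (Kᴴ * A x a)) := by
      rw [← rtr_sub, ← Matrix.mul_assoc _ Kᴴ, rtr_mul_comm _ (A x a)]
      congr 1
      simp only [Matrix.sub_mul, Matrix.mul_sub, Matrix.mul_assoc]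
    have e2 : rtr (A x a * K * B y b * Kᴴ) - rtr (B x a * B y b * (Kᴴ * K)) =
        rtr ((A x a * K - K * B x a) * (B y b * Kᴴ)) := by
      rw [← Matrix.mul_assoc _ Kᴴ, rtr_mul_comm _ K, ← rtr_sub]
      congr 1
      simp only [Matrix.sub_mul, Matrix.mul_assoc]
    have b1 : |rtr ((A y b * K - K * B y b) * (Kᴴ * A x a))| ≤ √(2 * δ) := by
      refine (abs_rtr_mul_le _ _).trans ?_
      have := Real.sqrt_le_one.mpr (hAK x a)
      exact (mul_le_of_le_one_right (Real.sqrt_nonneg _) this).trans (Real.sqrt_le_sqrt (hc y b))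
    have b2 : |rtr ((A x a * K - K * B x a) * (B y b * Kᴴ))| ≤ √(2 * δ) := by
      refine (abs_rtr_mul_le _ _).trans ?_
      have := Real.sqrt_le_one.mpr (hBK y b)
      exact (mul_le_of_le_one_right (Real.sqrt_nonneg _) this).trans (Real.sqrt_le_sqrt (hc x a))
    rw [← e1] at b1
    rw [← e2] at b2
    rw [abs_le] at b1 b2 ⊢
    constructor <;> linarith [b1.1, b1.2, b2.1, b2.2]

end blocks

/-! ### From the weight to the minimum of two weights -/

/-- Diagonal entries of `X² ≤ 1`. -/
lemma POVM.row_le [DecidableEq ι] {X : Fin n → Matrix ι ι ℂ} (h : POVM X) (a : Fin n) (i : ι) :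
    ∑ j, ‖X a i j‖ ^ 2 ≤ 1 := by
  have h1 := (Complex.nonneg_iff.mp ((h.sub_sq a).diag_nonneg (i := i))).1
  have h2 := (Complex.nonneg_iff.mp ((h.one_sub a).diag_nonneg (i := i))).1
  have h3 : ((X a * X a) i i).re = ∑ j, ‖X a i j‖ ^ 2 := by
    rw [mul_apply, Complex.re_sum]
    refine Finset.sum_congr rfl fun j _ => ?_
    rw [← (h.1 a).isHermitian.apply j i, Complex.star_def, Complex.mul_conj, Complex.ofReal_re,
      Complex.normSq_eq_norm_sq]
  simp only [Matrix.sub_apply, Complex.sub_re, one_apply_eq, Complex.one_re, h3] at h1 h2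
  linarith

lemma norm_symm_of_isHermitian {X : Matrix ι ι ℂ} (h : X.IsHermitian) (i j : ι) :
    ‖X j i‖ = ‖X i j‖ := by
  rw [← h.apply i j, norm_star]

/-- If `X a` nearly commutes with the diagonal matrix `g`, then it nearly commutes, in an `L¹` sense,
with `g² / 2`: factor `g i ^ 2 - g j ^ 2 = (g i - g j) * (g i + g j)` and use the Cauchy–Schwarz
inequality for the sum weighted by `‖X a i j‖ ^ 2`. The second factor is bounded by
`(g i + g j) ^ 2 ≤ 2 * g i ^ 2 + 2 * g j ^ 2` and the bound `1` on the rows and columns of `X a`. -/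
lemma connes_bound [DecidableEq ι] {X : Fin n → Matrix ι ι ℂ} (h : POVM X) (a : Fin n)
    {g : ι → ℝ} (hg : ∑ i, g i ^ 2 = 2) {δ : ℝ}
    (hδ : ∑ i, ∑ j, ‖X a i j‖ ^ 2 * (g i - g j) ^ 2 ≤ 4 * δ) :
    ∑ i, ∑ j, ‖X a i j‖ ^ 2 * |g i ^ 2 / 2 - g j ^ 2 / 2| ≤ √(4 * δ) * √8 / 2 := by
  have hrow : ∑ i, ∑ j, ‖X a i j‖ ^ 2 * g i ^ 2 ≤ 2 := by
    rw [← hg]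
    refine Finset.sum_le_sum fun i _ => ?_
    rw [← Finset.sum_mul]
    exact mul_le_of_le_one_left (sq_nonneg _) (h.row_le a i)
  have hcol : ∑ i, ∑ j, ‖X a i j‖ ^ 2 * g j ^ 2 ≤ 2 := by
    rw [Finset.sum_comm]
    simpa only [norm_symm_of_isHermitian (h.1 a).isHermitian] using hrow
  have hplus : ∑ i, ∑ j, ‖X a i j‖ ^ 2 * (g i + g j) ^ 2 ≤ 8 := by
    have : ∑ i, ∑ j, ‖X a i j‖ ^ 2 * (g i + g j) ^ 2 ≤
        ∑ i, ∑ j, (2 * (‖X a i j‖ ^ 2 * g i ^ 2) + 2 * (‖X a i j‖ ^ 2 * g j ^ 2)) := by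
      refine Finset.sum_le_sum fun i _ => Finset.sum_le_sum fun j _ => ?_
      nlinarith [mul_nonneg (sq_nonneg ‖X a i j‖) (sq_nonneg (g i - g j))]
    simp only [Finset.sum_add_distrib, ← Finset.mul_sum] at this
    linarith
  have hCS := Real.sum_mul_le_sqrt_mul_sqrt (Finset.univ : Finset (ι × ι))
    (fun p => ‖X a p.1 p.2‖ * |g p.1 - g p.2|) (fun p => ‖X a p.1 p.2‖ * |g p.1 + g p.2|)
  simp only [mul_pow, sq_abs, Fintype.sum_prod_type] at hCS
  have e : ∀ i j, ‖X a i j‖ ^ 2 * |g i ^ 2 / 2 - g j ^ 2 / 2| =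
      (‖X a i j‖ * |g i - g j| * (‖X a i j‖ * |g i + g j|)) / 2 := by
    intro i j
    have : g i ^ 2 / 2 - g j ^ 2 / 2 = (g i - g j) * (g i + g j) / 2 := by ring
    rw [this, abs_div, abs_mul, abs_two]
    ring
  simp only [e, ← Finset.sum_div]
  refine div_le_div_of_nonneg_right (hCS.trans ?_) (by norm_num)
  gcongr

/-- The sums weighted by `w i` and by `min (w i) (w j)` are close when `X` and `Y` both have little
mass on entries whose row and column weights differ. -/
lemma min_bound {X Y : Matrix ι ι ℂ} (hY : Y.IsHermitian) {w : ι → ℝ} {θ : ℝ}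
    (h1 : ∑ i, ∑ j, ‖X i j‖ ^ 2 * |w i - w j| ≤ θ)
    (h2 : ∑ i, ∑ j, ‖Y i j‖ ^ 2 * |w i - w j| ≤ θ) :
    |∑ i, ∑ j, w i * (X i j * Y j i).re - ∑ i, ∑ j, min (w i) (w j) * (X i j * Y j i).re| ≤ θ := by
  simp only [← Finset.sum_sub_distrib, ← sub_mul]
  have h3 : |∑ i, ∑ j, (w i - min (w i) (w j)) * (X i j * Y j i).re| ≤
      ∑ i, ∑ j, (‖X i j‖ ^ 2 * |w i - w j| + ‖Y i j‖ ^ 2 * |w i - w j|) / 2 := by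
    refine (Finset.abs_sum_le_sum_abs _ _).trans (Finset.sum_le_sum fun i _ => ?_)
    refine (Finset.abs_sum_le_sum_abs _ _).trans (Finset.sum_le_sum fun j _ => ?_)
    rw [abs_mul]
    have a1 : |w i - min (w i) (w j)| ≤ |w i - w j| := by
      rcases le_total (w i) (w j) with h | h
      · simp [min_eq_left h]
      · simp [min_eq_right h]
    have a2 : |(X i j * Y j i).re| ≤ (‖X i j‖ ^ 2 + ‖Y i j‖ ^ 2) / 2 := by
      refine (Complex.abs_re_le_norm _).trans ?_
      rw [norm_mul, norm_symm_of_isHermitian hY]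
      nlinarith [sq_nonneg (‖X i j‖ - ‖Y i j‖)]
    calc _ ≤ |w i - w j| * ((‖X i j‖ ^ 2 + ‖Y i j‖ ^ 2) / 2) := by gcongr
      _ = _ := by ring
  refine h3.trans ?_
  simp only [← Finset.sum_div, Finset.sum_add_distrib]
  linarith

/-! ### Tracial correlations and the approximation -/

lemma POVM.hsq_le_card [DecidableEq ι] {X : Fin n → Matrix ι ι ℂ} (h : POVM X) (a : Fin n) :
    hsq (X a) ≤ Fintype.card ι := by
  have := h.rtr_le a (PosSemidef.one (n := ι) (R := ℂ))
  rw [Matrix.mul_one, rtr_one] at this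
  exact (h.hsq_le a).trans this

/-- Continuity of traces of products in Hilbert–Schmidt norm. In the application `c` is the
dimension, so that `rtr (·) / c` is the normalised trace and `hsq (·) / c` its squared `2`-norm. -/
lemma rtr_mul_close [DecidableEq ι] {X Y X' Y' : Matrix ι ι ℂ} {c E : ℝ} (hc : 0 < c)
    (hY : hsq Y ≤ c) (hX' : hsq X' ≤ c) (hX : hsq (X - X') ≤ c * E)
    (hY' : hsq (Y - Y') ≤ c * E) :
    |rtr (X * Y) / c - rtr (X' * Y') / c| ≤ 2 * √E := by
  have e : rtr (X * Y) / c - rtr (X' * Y') / c =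
      (rtr ((X - X') * Y) + rtr (X' * (Y - Y'))) / c := by
    rw [sub_mul, mul_sub, rtr_sub, rtr_sub]; ring
  have hs : √(c * E) * √c = c * √E := by
    rw [Real.sqrt_mul hc.le, mul_right_comm, Real.mul_self_sqrt hc.le]
  have h1 : |rtr ((X - X') * Y)| ≤ c * √E := by
    rw [← hs]
    refine (abs_rtr_mul_le _ _).trans ?_
    gcongr
  have h2 : |rtr (X' * (Y - Y'))| ≤ c * √E := by
    rw [← hs, mul_comm (√_)]
    refine (abs_rtr_mul_le _ _).trans ?_
    gcongr
  rw [e, abs_div, abs_of_pos hc, div_le_iff₀ hc]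
  refine (abs_add_le _ _).trans ?_
  linarith

/-- The quadratic form of `A ⊗ B` at the vector with coefficient matrix `K`. Since `Matrix.vec` stacks
columns while the index of `A ⊗ B` has its `A`-component first, that vector is `vec Kᵀ`. -/
lemma star_vec_kronecker {dA dB : ℕ} (A : Matrix (Fin dA) (Fin dA) ℂ)
    (B : Matrix (Fin dB) (Fin dB) ℂ) (K : Matrix (Fin dA) (Fin dB) ℂ) :
    star (vec Kᵀ) ⬝ᵥ ((A ⊗ₖ B) *ᵥ vec Kᵀ) = (A * K * Bᵀ * Kᴴ).trace := by
  rw [kronecker_mulVec_vec, star_vec_dotProduct_vec, ← trace_transpose]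
  simp only [transpose_mul, transpose_transpose]
  congr 2
  rw [Matrix.mul_assoc]

/-- A PVM strategy evaluated in the normalised trace is a synchronous quantum correlation: take the
maximally entangled state and let the second party use the transposed projections. -/
lemma tracial_mem [DecidableEq ι] [Nonempty ι] {P : Fin k → Fin n → Matrix ι ι ℂ}
    (hP : ∀ x, PVM (P x)) :
    (fun x y a b => rtr (P x a * P y b) / Fintype.card ι) ∈
      {p ∈ QCorr k n | Synchronous p} := by
  constructor
  · set d := Fintype.card ι with hd
    have hdpos : (0 : ℝ) < d := by exact_mod_cast Fintype.card_pos
    let e := Fintype.equivFin ι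
    set A : Fin k → Fin n → Matrix (Fin d) (Fin d) ℂ := fun x a => (P x a).submatrix e.symm e.symm
      with hA
    set K : Matrix (Fin d) (Fin d) ℂ := (((√d)⁻¹ : ℝ) : ℂ) • 1 with hK
    have hApovm : ∀ x, IsMatPOVM (A x) := by
      refine fun x => ⟨fun a => ((hP x).povm.1 a).submatrix _, ?_⟩
      have : ∑ a, A x a = (∑ a, P x a).submatrix e.symm e.symm := by
        ext i j; simp [hA, Matrix.sum_apply]
      rw [this, (hP x).2.2, submatrix_one_equiv]
    have hsqd : (((√d)⁻¹ : ℝ) : ℂ) * (((√d)⁻¹ : ℝ) : ℂ) = (d : ℂ)⁻¹ := by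
      rw [← Complex.ofReal_mul, ← mul_inv, Real.mul_self_sqrt hdpos.le]
      push_cast; rfl
    have htr : ∀ M : Matrix (Fin d) (Fin d) ℂ, ∀ N : Matrix (Fin d) (Fin d) ℂ,
        (M * K * N * Kᴴ).trace = (d : ℂ)⁻¹ * (M * N).trace := by
      intro M N
      rw [hK, conjTranspose_smul, conjTranspose_one, Complex.star_def, Complex.conj_ofReal]
      simp only [Matrix.mul_smul, Matrix.smul_mul, Matrix.mul_one, trace_smul, smul_eq_mul]
      rw [← mul_assoc, hsqd]
    refine ⟨d, d, A, fun y b => (A y b)ᵀ, vec Kᵀ, hApovm, fun y => ⟨fun b => ?_, ?_⟩, ?_, ?_⟩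
    · exact ((hApovm y).1 b).transpose
    · rw [← transpose_sum, (hApovm y).2, transpose_one]
    · have := star_vec_kronecker (1 : Matrix (Fin d) (Fin d) ℂ) (1 : Matrix (Fin d) (Fin d) ℂ) K
      rw [one_kronecker_one, one_mulVec, transpose_one, htr, Matrix.mul_one, trace_one,
        Fintype.card_fin, inv_mul_cancel₀ (by exact_mod_cast hdpos.ne')] at this
      exact this
    · intro x y a b
      rw [star_vec_kronecker, transpose_transpose, htr]
      have h1 : (A x a * A y b).trace = (P x a * P y b).trace := by
        rw [hA, submatrix_mul_equiv]
        exact Fintype.sum_equiv e.symm _ _ fun i => rfl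
      have h2 : ((rtr (P x a * P y b) : ℝ) : ℂ) = (P x a * P y b).trace := by
        rw [rtr, ← Complex.conj_eq_iff_re, ← Complex.star_def, ← trace_conjTranspose,
          conjTranspose_mul, ((hP x).1 a).eq, ((hP y).1 b).eq, trace_mul_comm]
      rw [h1, ← h2]
      push_cast
      rw [div_eq_inv_mul]
  · intro x a b hab
    simp [(hP x).2.1, hab, rtr]

/-- The distance within which a correlation with weight at most `δ` on unequal answers to each pair
of equal questions can be approximated by a synchronous one. With `θ = √(4δ) √8 / 2` the bound of
`connes_bound`, the summands are the errors made in passing to the weight, to the minimum of two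
weights, to the normalised trace, and to a PVM. -/
def modulus (n : ℕ) (δ : ℝ) : ℝ :=
  √(2 * δ) + √(4 * δ) * √8 / 2 + δ +
    2 * √(8 * n ^ 2 * (δ + n * (2 * δ + √(4 * δ) * √8 / 2)))

/-- A nearly synchronous element of `C_q` is close to a synchronous element of `C_q`, with a bound
independent of the dimensions of the strategy. -/
lemma exists_sync_approx (hn : 0 < n) {q : Fin k → Fin k → Fin n → Fin n → ℝ}
    (hq : q ∈ QCorr k n) {δ : ℝ} (hδ : 0 < δ)
    (hsync : ∀ x, ∑ a, ∑ b, (if a = b then 0 else q x x a b) ≤ δ) :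
    ∃ p ∈ {p ∈ QCorr k n | Synchronous p}, ∀ x y a b, |q x y a b - p x y a b| ≤ modulus n δ := by
  obtain ⟨dA, dB, A, B, ξ, hA, hB, hξ, hq⟩ := hq
  set K : Matrix (Fin dA) (Fin dB) ℂ := of fun i j => ξ (i, j) with hKdef
  have hξK : ξ = vec Kᵀ := by ext ⟨i, j⟩; rfl
  have hBt : ∀ y, POVM (fun b => (B y b)ᵀ) := fun y =>
    ⟨fun b => ((hB y).1 b).transpose, by rw [← transpose_sum, (hB y).2, transpose_one]⟩
  have hq' : ∀ x y a b, q x y a b = rtr (A x a * K * (B y b)ᵀ * Kᴴ) := by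
    intro x y a b
    have := hq x y a b
    rw [hξK, star_vec_kronecker] at this
    rw [rtr, ← this, Complex.ofReal_re]
  have hK : hsq K = 1 := by
    rw [hξK] at hξ
    have := star_vec_kronecker (1 : Matrix (Fin dA) (Fin dA) ℂ) (1 : Matrix (Fin dB) (Fin dB) ℂ) K
    rw [one_kronecker_one, one_mulVec, transpose_one, hξ, Matrix.one_mul, Matrix.mul_one] at this
    rw [hsq_eq_rtr, rtr_mul_comm, rtr, ← this, Complex.one_re]
  have hdiag : ∀ x, 1 - δ ≤ ∑ a, rtr (A x a * K * (B x a)ᵀ * Kᴴ) := by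
    intro x
    have h1 : ∑ a, ∑ b, q x x a b = 1 := by
      simp only [hq', ← rtr_sum, ← Matrix.mul_sum,
        ← Matrix.sum_mul]
      rw [(hA x).2, (hBt x).2, Matrix.one_mul, Matrix.mul_one, rtr_mul_comm, ← hsq_eq_rtr, hK]
    have h2 : ∑ a, ∑ b, q x x a b =
        ∑ a, ∑ b, (if a = b then 0 else q x x a b) + ∑ a, q x x a a := by
      rw [← Finset.sum_add_distrib]
      refine Finset.sum_congr rfl fun a _ => ?_
      rw [← Finset.sum_erase_add _ _ (Finset.mem_univ a),
        ← Finset.sum_erase_add (Finset.univ : Finset (Fin n)) _ (Finset.mem_univ a)]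
      simp only [if_true, add_zero]
      congr 1
      refine Finset.sum_congr rfl fun b hb => ?_
      rw [if_neg (Finset.ne_of_mem_erase hb).symm]
    simp only [← hq']
    linarith [hsync x]
  obtain ⟨X, g, hX, hg, hi, hii, hiii⟩ := exists_weighted (fun x => hA x) hBt hK hdiag
  set w : Fin dA ⊕ Fin dB → ℝ := fun i => g i ^ 2 / 2 with hw
  set θ : ℝ := √(4 * δ) * √8 / 2 with hθ
  have hC : ∀ x a, ∑ i, ∑ j, ‖X x a i j‖ ^ 2 * |w i - w j| ≤ θ := fun x a =>
    connes_bound (hX x) a hg (hi x a)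
  have hM : ∀ x y a b, |∑ i, ∑ j, w i * (X x a i j * X y b j i).re -
      ∑ i, ∑ j, min (w i) (w j) * (X x a i j * X y b j i).re| ≤ θ := fun x y a b =>
    min_bound ((hX y).1 b).isHermitian (hC x a) (hC y b)
  have hw1 : ∑ i, w i = 1 := by rw [hw, ← Finset.sum_div, hg]; norm_num
  obtain ⟨κ, _, _, _, Y, hY, hYY, hY1⟩ := exists_tracial hX (w := w)
    (fun i => by positivity) hw1 hδ
  have hcard : (0 : ℝ) < Fintype.card κ := by exact_mod_cast Fintype.card_pos
  set c : ℝ := (Fintype.card κ : ℝ) with hcdef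
  have hwg : ∀ (f : Fin dA ⊕ Fin dB → ℝ), ∑ i, g i ^ 2 * f i = 2 * ∑ i, w i * f i := by
    intro f
    rw [Finset.mul_sum]
    exact Finset.sum_congr rfl fun i _ => by simp only [hw]; ring
  have hwg2 : ∀ (f : Fin dA ⊕ Fin dB → Fin dA ⊕ Fin dB → ℝ),
      ∑ i, ∑ j, g i ^ 2 * f i j = 2 * ∑ i, ∑ j, w i * f i j := by
    intro f
    simp only [← Finset.mul_sum, hwg]
  -- the tracial POVMs are nearly projective
  have hproj : ∀ x, ∑ a, (rtr (Y x a) - hsq (Y x a)) ≤ c * (δ + n * (2 * δ + θ)) := by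
    intro x
    have h1 : ∀ a, (rtr (Y x a) - hsq (Y x a)) / c ≤
        (∑ i, g i ^ 2 * (X x a i i).re -
          ∑ i, ∑ j, g i ^ 2 * (X x a i j * X x a j i).re) / 2 + (2 * δ + θ) := by
      intro a
      rw [hwg (fun i => (X x a i i).re), hwg2 (fun i j => (X x a i j * X x a j i).re),
        hsq_of_isHermitian ((hY x).1 a).isHermitian, sub_div]
      have a1 := (abs_lt.mp (hY1 x a)).2
      have a2 := (abs_lt.mp (hYY x x a a)).1
      have a3 := (abs_le.mp (hM x x a a)).2
      linarith
    have h2 := Finset.sum_le_sum fun a (_ : a ∈ Finset.univ) => h1 a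
    rw [← Finset.sum_div, Finset.sum_add_distrib, ← Finset.sum_div, Finset.sum_const,
      Finset.card_univ, Fintype.card_fin, nsmul_eq_mul, div_le_iff₀ hcard] at h2
    refine h2.trans ?_
    rw [mul_comm]
    refine mul_le_mul_of_nonneg_left ?_ hcard.le
    linarith [hii x]
  choose P hP hPb using fun x => rounding hn (hY x)
  set E : ℝ := 8 * n ^ 2 * (δ + n * (2 * δ + θ)) with hE
  have hYP : ∀ x a, hsq (Y x a - P x a) ≤ c * E := by
    intro x a
    refine (Finset.single_le_sum (f := fun a => hsq (Y x a - P x a))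
      (fun a _ => hsq_nonneg _) (Finset.mem_univ a)).trans ((hPb x).trans ?_)
    calc _ ≤ 8 * (n : ℝ) ^ 2 * (c * (δ + n * (2 * δ + θ))) := by
          gcongr; exact hproj x
      _ = c * E := by rw [hE]; ring
  refine ⟨_, tracial_mem hP, fun x y a b => ?_⟩
  have b1 := hiii x y a b
  rw [← hq', hwg2 (fun i j => (X x a i j * X y b j i).re)] at b1
  have b2 := hM x y a b
  have b3 := hYY x y a b
  have b4 := rtr_mul_close hcard ((hY y).hsq_le_card b) ((hP x).povm.hsq_le_card a)
    (hYP x a) (hYP y b)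
  rw [modulus, ← hθ, ← hE]
  rw [abs_le] at b1 b2 b4 ⊢
  rw [abs_lt] at b3
  constructor <;> linarith [b1.1, b1.2, b2.1, b2.2, b3.1, b3.2, b4.1, b4.2]

open Filter Topology in
lemma exists_modulus_lt (n : ℕ) {ε : ℝ} (hε : 0 < ε) : ∃ δ, 0 < δ ∧ modulus n δ < ε := by
  have hc : Continuous (modulus n) := by unfold modulus; fun_prop
  have h0 : modulus n 0 = 0 := by simp [modulus]
  have h1 : ∀ᶠ δ in 𝓝[>] (0 : ℝ), modulus n δ < ε :=
    (hc.tendsto 0).mono_left nhdsWithin_le_nhds |>.eventually_lt_const (by rw [h0]; exact hε)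
  obtain ⟨δ, h1, h2⟩ := (h1.and self_mem_nhdsWithin).exists
  exact ⟨δ, h2, h1⟩

/-- For all `k, n ≥ 2`, `C^s_qa(k,n)` equals the closure of `C^s_q(k,n)`: the set of
synchronous correlations lying in the closure of `C_q(k,n)` coincides with the closure in
`ℝ^{k²n²}` of the set of synchronous correlations in `C_q(k,n)`. -/
theorem sync_qa_eq_closure_sync_q (k n : ℕ) (hk : 2 ≤ k) (hn : 2 ≤ n) :
    { p ∈ closure (QCorr k n) | Synchronous p } =
      closure { p ∈ QCorr k n | Synchronous p } := by
  have hn0 : 0 < n := by omega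
  have hnR : (0 : ℝ) < n := by exact_mod_cast hn0
  apply Set.Subset.antisymm
  · rintro p ⟨hp, hsync⟩
    rw [Metric.mem_closure_iff] at hp ⊢
    intro ε hε
    obtain ⟨δ, hδ, hm⟩ := exists_modulus_lt n (half_pos hε)
    -- `q` has weight at most `δ` on unequal answers: there are fewer than `n ^ 2` such pairs
    obtain ⟨q, hq, hpq⟩ := hp (min (ε / 2) (δ / n ^ 2)) (by positivity)
    have hclose : ∀ x y a b, |p x y a b - q x y a b| < min (ε / 2) (δ / n ^ 2) := by
      intro x y a b
      rw [← Real.dist_eq]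
      exact (((dist_le_pi_dist _ _ b).trans (dist_le_pi_dist (p x y) (q x y) a)).trans
        ((dist_le_pi_dist (p x) (q x) y).trans (dist_le_pi_dist p q x))).trans_lt hpq
    have hqs : ∀ x, ∑ a, ∑ b, (if a = b then 0 else q x x a b) ≤ δ := by
      intro x
      have : ∀ a b, (if a = b then 0 else q x x a b) ≤ δ / n ^ 2 := by
        intro a b
        split_ifs with hab
        · positivity
        · have h1 := hclose x x a b
          rw [hsync x a b hab, zero_sub, abs_neg] at h1
          exact (le_abs_self _).trans (h1.le.trans (min_le_right _ _))
      refine (Finset.sum_le_sum fun a _ => Finset.sum_le_sum fun b _ => this a b).trans_eq ?_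
      simp only [Finset.sum_const, Finset.card_univ, Fintype.card_fin, nsmul_eq_mul]
      field_simp
    obtain ⟨r, hr, hqr⟩ := exists_sync_approx hn0 hq hδ hqs
    refine ⟨r, hr, ?_⟩
    simp only [dist_pi_lt_iff hε, Real.dist_eq]
    intro x y a b
    have h1 := (hclose x y a b).trans_le (min_le_left _ _)
    have h2 := hqr x y a b
    have h3 := abs_sub_le (p x y a b) (q x y a b) (r x y a b)
    linarith
  · refine fun p hp => ⟨closure_mono (fun q hq => hq.1) hp, ?_⟩
    have hcl : IsClosed {p : Fin k → Fin k → Fin n → Fin n → ℝ | Synchronous p} := by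
      simp only [Synchronous, Set.ofPred_forall]
      refine isClosed_iInter fun x => isClosed_iInter fun a => isClosed_iInter fun b =>
        isClosed_iInter fun _ => isClosed_eq (by fun_prop) continuous_const
    exact closure_minimal (fun q hq => hq.2) hcl hp

end
end
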